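/- Let P1 and P2 be n×n skew-symmetric matrix pencils such that orbᶜ(P1) covers orbᶜ(P2). Then there exist an integer p, p×(n−p) matrix pencils W1 and W2, and permutation matrices Q1 and Q2 such that Q_iᵀ P_i' Q_i = [[0, W_i], [−W_iᵀ, 0]] for skew-symmetric pencils P_i' congruent to P_i (i = 1, 2), and orbᵉ(W1) covers orbᵉ(W2). -/

import Mathlib

/-!
Basic framework: a complex `m × n` matrix pencil `A - λ B` is formalized as the
pair `(A, B)` of matrices.  We define strict equivalence, congruence,
skew-symmetry, orbits, direct sums, and the cover relations for the orbit
closure hierarchies (in the Euclidean topology).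
-/

open Matrix

noncomputable section

/-- An `m × n` complex matrix pencil `A - λ B`, formalized as the pair `(A, B)`. -/
abbrev Pencil (m n : ℕ) : Type :=
  Matrix (Fin m) (Fin n) ℂ × Matrix (Fin m) (Fin n) ℂ

namespace Pencil

/-- Strict equivalence of matrix pencils: `Q⁻¹ * A * R = C` and `Q⁻¹ * B * R = D`
for some invertible `Q`, `R`. -/
def StrictEquiv {m n : ℕ} (P Q : Pencil m n) : Prop :=
  ∃ (S : Matrix (Fin m) (Fin m) ℂ) (R : Matrix (Fin n) (Fin n) ℂ),
    IsUnit S ∧ IsUnit R ∧ S⁻¹ * P.1 * R = Q.1 ∧ S⁻¹ * P.2 * R = Q.2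

/-- The strict-equivalence orbit of a pencil. -/
def orbE {m n : ℕ} (P : Pencil m n) : Set (Pencil m n) :=
  {Q | StrictEquiv P Q}

/-- A pencil `A - λ B` is skew-symmetric if `Aᵀ = -A` and `Bᵀ = -B`. -/
def IsSkew {n : ℕ} (P : Pencil n n) : Prop :=
  P.1ᵀ = -P.1 ∧ P.2ᵀ = -P.2

/-- Congruence of (square) matrix pencils: `Sᵀ * A * S = C` and `Sᵀ * B * S = D`
for some invertible `S`. -/
def Congruent {n : ℕ} (P Q : Pencil n n) : Prop :=
  ∃ S : Matrix (Fin n) (Fin n) ℂ,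
    IsUnit S ∧ Sᵀ * P.1 * S = Q.1 ∧ Sᵀ * P.2 * S = Q.2

/-- The congruence orbit of a pencil. -/
def orbC {n : ℕ} (P : Pencil n n) : Set (Pencil n n) :=
  {Q | Congruent P Q}

/-- Direct (block-diagonal) sum of two pencils. -/
def dsum {m n p q : ℕ} (P : Pencil m n) (Q : Pencil p q) : Pencil (m + p) (n + q) :=
  ((fromBlocks P.1 0 0 Q.1).submatrix finSumFinEquiv.symm finSumFinEquiv.symm,
   (fromBlocks P.2 0 0 Q.2).submatrix finSumFinEquiv.symm finSumFinEquiv.symm)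

/-- Transport a pencil along equalities of its dimensions. -/
def cast {m n m' n' : ℕ} (hm : m = m') (hn : n = n') (P : Pencil m n) : Pencil m' n' :=
  (P.1.submatrix (finCongr hm.symm) (finCongr hn.symm),
   P.2.submatrix (finCongr hm.symm) (finCongr hn.symm))

/-- `orbE P1` covers `orbE P2` in the closure hierarchy of strict-equivalence
orbits: `P1` is not strictly equivalent to `P2`, `orbE P2 ⊆ closure (orbE P1)`,
and there is no intermediate orbit strictly between them. -/
def CoversE {m n : ℕ} (P1 P2 : Pencil m n) : Prop :=
  ¬ StrictEquiv P1 P2 ∧ orbE P2 ⊆ closure (orbE P1) ∧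
    ¬ ∃ P : Pencil m n, ¬ StrictEquiv P P1 ∧ ¬ StrictEquiv P P2 ∧
        orbE P ⊆ closure (orbE P1) ∧ orbE P2 ⊆ closure (orbE P)

/-- `orbC P1` covers `orbC P2` in the closure hierarchy of congruence orbits of
skew-symmetric pencils: `P1` is not congruent to `P2`,
`orbC P2 ⊆ closure (orbC P1)`, and there is no congruence orbit of a
skew-symmetric pencil strictly between them. -/
def CoversC {n : ℕ} (P1 P2 : Pencil n n) : Prop :=
  ¬ Congruent P1 P2 ∧ orbC P2 ⊆ closure (orbC P1) ∧
    ¬ ∃ P : Pencil n n, IsSkew P ∧ ¬ Congruent P P1 ∧ ¬ Congruent P P2 ∧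
        orbC P ⊆ closure (orbC P1) ∧ orbC P2 ⊆ closure (orbC P)

end Pencil

/-! Canonical building blocks. -/

/-- The `k × k` Jordan block `J_k(μ)`. -/
def Jmat (k : ℕ) (μ : ℂ) : Matrix (Fin k) (Fin k) ℂ :=
  Matrix.of fun i j => if (j : ℕ) = (i : ℕ) then μ else if (j : ℕ) = (i : ℕ) + 1 then 1 else 0

/-- The `k × (k+1)` matrix `F_k` with ones on the superdiagonal. -/
def Fmat (k : ℕ) : Matrix (Fin k) (Fin (k + 1)) ℂ :=
  Matrix.of fun i j => if (j : ℕ) = (i : ℕ) + 1 then 1 else 0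

/-- The `k × (k+1)` matrix `G_k` with ones on the diagonal. -/
def Gmat (k : ℕ) : Matrix (Fin k) (Fin (k + 1)) ℂ :=
  Matrix.of fun i j => if (j : ℕ) = (i : ℕ) then 1 else 0

/-- The Kronecker block `E_k(μ) = J_k(μ) - λ I_k`. -/
def Eblk (k : ℕ) (μ : ℂ) : Pencil k k := (Jmat k μ, 1)

/-- The Kronecker block `E_k(∞) = I_k - λ J_k(0)`. -/
def EInfblk (k : ℕ) : Pencil k k := (1, Jmat k 0)

/-- The Kronecker block `L_k = F_k - λ G_k`. -/
def Lblk (k : ℕ) : Pencil k (k + 1) := (Fmat k, Gmat k)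

/-- The Kronecker block `L_kᵀ = F_kᵀ - λ G_kᵀ`. -/
def LTblk (k : ℕ) : Pencil (k + 1) k := ((Fmat k)ᵀ, (Gmat k)ᵀ)

/-- The skew-symmetric matrix `[[0, X], [-Xᵀ, 0]]`. -/
def skewPair {p q : ℕ} (X : Matrix (Fin p) (Fin q) ℂ) :
    Matrix (Fin (p + q)) (Fin (p + q)) ℂ :=
  (fromBlocks 0 X (-Xᵀ) 0).submatrix finSumFinEquiv.symm finSumFinEquiv.symm

/-- The skew-symmetric canonical block `H_h(μ)` (size `2h × 2h`). -/
def Hblk (h : ℕ) (μ : ℂ) : Pencil (h + h) (h + h) :=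
  (skewPair (Jmat h μ), skewPair (1 : Matrix (Fin h) (Fin h) ℂ))

/-- The skew-symmetric canonical block `K_k = H_k(∞)` (size `2k × 2k`). -/
def Kblk (k : ℕ) : Pencil (k + k) (k + k) :=
  (skewPair (1 : Matrix (Fin k) (Fin k) ℂ), skewPair (Jmat k 0))

/-- The skew-symmetric canonical block `M_m` (size `(2m+1) × (2m+1)`). -/
def Mblk (m : ℕ) : Pencil (m + (m + 1)) (m + (m + 1)) :=
  (skewPair (Fmat m), skewPair (Gmat m))

/-- The permutation matrix of `σ`. -/
def permMatrix {n : ℕ} (σ : Equiv.Perm (Fin n)) : Matrix (Fin n) (Fin n) ℂ :=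
  Matrix.of fun i j => if σ i = j then 1 else 0

/-!
Strictly equivalent skew-symmetric pencils are congruent, and every skew-symmetric pencil is
congruent to one with off-diagonal part `W`, where `W` may be any direct sum of Kronecker blocks
whose union with the transposed blocks is the Kronecker canonical form of the pencil. The dimensions
of the spaces of morphisms between a pencil and the Kronecker blocks are upper semicontinuous. For
skew-symmetric pencils this turns an inclusion of orbit closures into a dominance relation between
lists of blocks, and conversely every dominance relation is a chain of elementary relations, each of
which is realised by a degeneration of the off-diagonal parts. A cover is therefore a single such
degeneration, and any pencil between the off-diagonal parts would give a skew-symmetric pencil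
between the given ones. Infinite eigenvalues are removed beforehand by the change of parameter
`B ↦ B + c A`, which preserves all the relations involved.
-/

namespace Pencil

/-- A pair of linear maps with common source and target: a pencil without chosen bases. -/
abbrev LinPair (K V U : Type*) [CommRing K] [AddCommGroup V] [Module K V] [AddCommGroup U]
    [Module K U] : Type _ :=
  (V →ₗ[K] U) × (V →ₗ[K] U)

namespace LinPair

variable {K V U V' U' V'' U'' W Z : Type*} [CommRing K]
  [AddCommGroup V] [Module K V] [AddCommGroup U] [Module K U]
  [AddCommGroup V'] [Module K V'] [AddCommGroup U'] [Module K U']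
  [AddCommGroup V''] [Module K V''] [AddCommGroup U''] [Module K U'']
  [AddCommGroup W] [Module K W] [AddCommGroup Z] [Module K Z]

/-- Isomorphism of pairs of linear maps; for pencils this is strict equivalence. -/
def Iso (f : LinPair K V U) (g : LinPair K V' U') : Prop :=
  ∃ (e : V ≃ₗ[K] V') (e' : U ≃ₗ[K] U'),
    (∀ x, e' (f.1 x) = g.1 (e x)) ∧ ∀ x, e' (f.2 x) = g.2 (e x)

/-- Direct sum of pairs of linear maps. -/
def sum (f : LinPair K V U) (g : LinPair K V' U') : LinPair K (V × V') (U × U') :=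
  (f.1.prodMap g.1, f.2.prodMap g.2)

namespace Iso

theorem refl (f : LinPair K V U) : Iso f f :=
  ⟨.refl _ _, .refl _ _, fun _ => rfl, fun _ => rfl⟩

theorem symm {f : LinPair K V U} {g : LinPair K V' U'} (h : Iso f g) : Iso g f := by
  obtain ⟨e, e', h1, h2⟩ := h
  exact ⟨e.symm, e'.symm, fun x => by simp [LinearEquiv.symm_apply_eq, h1],
    fun x => by simp [LinearEquiv.symm_apply_eq, h2]⟩

theorem trans {f : LinPair K V U} {g : LinPair K V' U'} {k : LinPair K V'' U''}
    (h : Iso f g) (h' : Iso g k) : Iso f k := by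
  obtain ⟨e, e', h1, h2⟩ := h
  obtain ⟨d, d', k1, k2⟩ := h'
  exact ⟨e.trans d, e'.trans d', fun x => by simp [h1, k1], fun x => by simp [h2, k2]⟩

theorem sum_congr {f : LinPair K V U} {g : LinPair K V' U'} {k : LinPair K V'' U''}
    {l : LinPair K W Z} (h : Iso f g) (h' : Iso k l) : Iso (f.sum k) (g.sum l) := by
  obtain ⟨e, e', h1, h2⟩ := h
  obtain ⟨d, d', k1, k2⟩ := h'
  exact ⟨e.prodCongr d, e'.prodCongr d', fun x => by simp [LinPair.sum, h1, k1],
    fun x => by simp [LinPair.sum, h2, k2]⟩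

theorem sum_comm (f : LinPair K V U) (g : LinPair K V' U') : Iso (f.sum g) (g.sum f) :=
  ⟨.prodComm _ _ _, .prodComm _ _ _, fun _ => rfl, fun _ => rfl⟩

theorem sum_assoc (f : LinPair K V U) (g : LinPair K V' U') (k : LinPair K V'' U'') :
    Iso ((f.sum g).sum k) (f.sum (g.sum k)) :=
  ⟨.prodAssoc _ _ _ _, .prodAssoc _ _ _ _, fun _ => rfl, fun _ => rfl⟩

theorem sum_left_comm (f : LinPair K V U) (g : LinPair K V' U') (k : LinPair K V'' U'') :
    Iso (f.sum (g.sum k)) (g.sum (f.sum k)) :=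
  (sum_assoc f g k).symm.trans (((sum_comm f g).sum_congr (.refl k)).trans (sum_assoc g f k))

theorem sum_zero (f : LinPair K V U) (g : LinPair K V' U') [Subsingleton V'] [Subsingleton U'] :
    Iso (f.sum g) f :=
  have : Unique V' := ⟨⟨0⟩, fun _ => Subsingleton.elim _ _⟩
  have : Unique U' := ⟨⟨0⟩, fun _ => Subsingleton.elim _ _⟩
  ⟨.prodUnique, .prodUnique, fun _ => rfl, fun _ => rfl⟩

theorem of_subsingleton (f : LinPair K V U) (g : LinPair K V' U') [Subsingleton V]
    [Subsingleton U] [Subsingleton V'] [Subsingleton U'] : Iso f g :=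
  ⟨0, 0, fun _ => Subsingleton.elim _ _, fun _ => Subsingleton.elim _ _⟩

end Iso

end LinPair

section Matrices

variable {K m n m' n' : Type*} [CommRing K] [Fintype n] [Fintype n']

/-- The pair of linear maps given by a pair of matrices. -/
def lin (P : Matrix m n K × Matrix m n K) : LinPair K (n → K) (m → K) :=
  (P.1.mulVecLin, P.2.mulVecLin)

@[simp] theorem lin_fst_apply (P : Matrix m n K × Matrix m n K) (x : n → K) :
    (lin P).1 x = P.1 *ᵥ x := rfl

@[simp] theorem lin_snd_apply (P : Matrix m n K × Matrix m n K) (x : n → K) :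
    (lin P).2 x = P.2 *ᵥ x := rfl

/-- The transpose of a pencil, i.e. the dual pair of linear maps. -/
def tr (P : Matrix m n K × Matrix m n K) : Matrix n m K × Matrix n m K := (P.1ᵀ, P.2ᵀ)

variable [Fintype m] [Fintype m'] {P : Matrix m n K × Matrix m n K}
  {Q : Matrix m' n' K × Matrix m' n' K}

theorem lin_iso_iff_exists_matrix [DecidableEq m] [DecidableEq n] [DecidableEq m']
    [DecidableEq n'] :
    LinPair.Iso (lin P) (lin Q) ↔
      ∃ (S : Matrix m' m K) (S' : Matrix m m' K) (R : Matrix n' n K) (R' : Matrix n n' K),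
        S * S' = 1 ∧ S' * S = 1 ∧ R * R' = 1 ∧ R' * R = 1 ∧
        S * P.1 = Q.1 * R ∧ S * P.2 = Q.2 * R := by
  constructor
  · rintro ⟨e, e', h1, h2⟩
    refine ⟨e'.toLinearMap.toMatrix', e'.symm.toLinearMap.toMatrix', e.toLinearMap.toMatrix',
      e.symm.toLinearMap.toMatrix', ?_, ?_, ?_, ?_,
      toLin'.injective <| LinearMap.ext fun x => by simpa [toLin'_mul] using h1 x,
      toLin'.injective <| LinearMap.ext fun x => by simpa [toLin'_mul] using h2 x⟩ <;>
    simp [← LinearMap.toMatrix'_comp]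
  · rintro ⟨S, S', R, R', h1, h2, h3, h4, h5, h6⟩
    refine ⟨toLin'OfInv h4 h3, toLin'OfInv h2 h1, fun x => ?_, fun x => ?_⟩
    · change S *ᵥ (P.1 *ᵥ x) = Q.1 *ᵥ (R *ᵥ x)
      rw [mulVec_mulVec, h5, mulVec_mulVec]
    · change S *ᵥ (P.2 *ᵥ x) = Q.2 *ᵥ (R *ᵥ x)
      rw [mulVec_mulVec, h6, mulVec_mulVec]

theorem LinPair.Iso.tr (h : Iso (lin P) (lin Q)) : Iso (lin (Pencil.tr P)) (lin (Pencil.tr Q)) := by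
  classical
  obtain ⟨S, S', R, R', h1, h2, h3, h4, h5, h6⟩ := lin_iso_iff_exists_matrix.1 h
  refine (lin_iso_iff_exists_matrix.2 ⟨Rᵀ, R'ᵀ, Sᵀ, S'ᵀ, ?_⟩).symm
  simp only [Pencil.tr, ← transpose_mul, h1, h2, h3, h4, h5, h6, transpose_one, and_self]

end Matrices

theorem strictEquiv_iff_lin_iso {m n : ℕ} {P Q : Pencil m n} :
    StrictEquiv P Q ↔ LinPair.Iso (lin P) (lin Q) := by
  rw [lin_iso_iff_exists_matrix]
  constructor
  · rintro ⟨S, R, hS, hR, h1, h2⟩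
    rw [isUnit_iff_isUnit_det] at hS hR
    refine ⟨S⁻¹, S, R⁻¹, R, nonsing_inv_mul S hS, mul_nonsing_inv S hS, nonsing_inv_mul R hR,
      mul_nonsing_inv R hR, ?_, ?_⟩
    · rw [← h1, mul_nonsing_inv_cancel_right _ _ hR]
    · rw [← h2, mul_nonsing_inv_cancel_right _ _ hR]
  · rintro ⟨S, S', R, R', h1, h2, h3, h4, h5, h6⟩
    refine ⟨S', R', ⟨⟨S', S, h2, h1⟩, rfl⟩, ⟨⟨R', R, h4, h3⟩, rfl⟩, ?_, ?_⟩
    · rw [inv_eq_left_inv h1, h5, Matrix.mul_assoc, h3, Matrix.mul_one]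
    · rw [inv_eq_left_inv h1, h6, Matrix.mul_assoc, h3, Matrix.mul_one]

theorem LinPair.exists_iso_lin {V U : Type*} [AddCommGroup V] [Module ℂ V] [AddCommGroup U]
    [Module ℂ U] [FiniteDimensional ℂ V] [FiniteDimensional ℂ U] (f : LinPair ℂ V U) {m n : ℕ}
    (hm : Module.finrank ℂ U = m) (hn : Module.finrank ℂ V = n) :
    ∃ P : Pencil m n, Iso f (lin P) := by
  let b := Module.finBasisOfFinrankEq ℂ V hn
  let c := Module.finBasisOfFinrankEq ℂ U hm
  exact ⟨(LinearMap.toMatrix b c f.1, LinearMap.toMatrix b c f.2), b.equivFun, c.equivFun,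
    fun x => (LinearMap.toMatrix_mulVec_repr b c f.1 x).symm,
    fun x => (LinearMap.toMatrix_mulVec_repr b c f.2 x).symm⟩

/-- The splitting `ℂ ^ (a + b) ≃ ℂ ^ a × ℂ ^ b` underlying the block decompositions `dsum` and
`skewPair`. -/
def finAddEquivProd (a b : ℕ) : (Fin (a + b) → ℂ) ≃ₗ[ℂ] (Fin a → ℂ) × (Fin b → ℂ) :=
  (LinearEquiv.funCongrLeft ℂ ℂ finSumFinEquiv).trans
    (LinearEquiv.sumArrowLequivProdArrow _ _ ℂ ℂ)

theorem lin_dsum_iso {m n p q : ℕ} (P : Pencil m n) (Q : Pencil p q) :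
    LinPair.Iso (lin (dsum P Q)) ((lin P).sum (lin Q)) := by
  refine ⟨finAddEquivProd n q, finAddEquivProd m p, fun x => ?_, fun x => ?_⟩ <;>
  · ext i
    all_goals
      simp [finAddEquivProd, LinPair.sum, dsum, mulVec, dotProduct, LinearEquiv.funCongrLeft,
        LinearMap.funLeft, ← finSumFinEquiv.sum_comp]

/-- The skew-symmetric pencil with off-diagonal part `W`. -/
def offdiag {p q : ℕ} (W : Pencil p q) : Pencil (p + q) (p + q) :=
  (skewPair W.1, skewPair W.2)

theorem lin_offdiag_iso {p q : ℕ} (W : Pencil p q) :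
    LinPair.Iso (lin (offdiag W)) ((lin W).sum (lin (tr W))) := by
  refine ⟨(finAddEquivProd p q).trans ((LinearEquiv.prodComm ℂ _ _).trans
      ((LinearEquiv.refl ℂ _).prodCongr (LinearEquiv.neg ℂ))), finAddEquivProd p q,
      fun x => ?_, fun x => ?_⟩ <;>
  · ext i
    all_goals
      simp [finAddEquivProd, LinPair.sum, offdiag, skewPair, mulVec, dotProduct,
        LinearEquiv.funCongrLeft, LinearMap.funLeft, ← finSumFinEquiv.sum_comp, tr]

/-! ### Strictly equivalent skew-symmetric pencils are congruent -/

section SquareRoot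

open Polynomial

variable {K : Type*} [Field K] [IsAlgClosed K] [NeZero (2 : K)]

theorem exists_prod_X_sub_C_dvd_sq_sub_X (s : Multiset K) (hs : (0 : K) ∉ s) :
    ∃ f : K[X], (s.map fun a => X - C a).prod ∣ f ^ 2 - X := by
  induction s using Multiset.induction with
  | empty => exact ⟨0, by simp⟩
  | cons a s ih =>
    rw [Multiset.mem_cons, not_or] at hs
    obtain ⟨f, h, hf⟩ := ih hs.2
    set m : K[X] := (s.map fun a => X - C a).prod
    -- `f + g m` squares to `X` modulo `(X - a) m` as soon as `g` solves this equation.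
    obtain ⟨g, hg⟩ : ∃ g : K, h.eval a + 2 * f.eval a * g + m.eval a * g ^ 2 = 0 := by
      by_cases hm : m.eval a = 0
      · have h1 : f.eval a ^ 2 = a := by
          have := congrArg (Polynomial.eval a) hf
          simp only [eval_sub, eval_pow, eval_X, eval_mul, hm, zero_mul] at this
          exact sub_eq_zero.1 this
        have h2 : f.eval a ≠ 0 := fun h0 => hs.1 (by simpa [h0] using h1)
        have h3 : (2 : K) ≠ 0 := two_ne_zero
        exact ⟨-h.eval a / (2 * f.eval a), by rw [hm]; field_simp; ring⟩
      · obtain ⟨d, hd⟩ := IsAlgClosed.exists_pow_nat_eq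
          (discrim (m.eval a) (2 * f.eval a) (h.eval a)) (n := 2) two_pos
        obtain ⟨x, hx⟩ := exists_quadratic_eq_zero hm ⟨d, by rw [← hd, sq]⟩
        exact ⟨x, by linear_combination hx⟩
    obtain ⟨k, hk⟩ : X - C a ∣ h + 2 * f * C g + m * C g ^ 2 := by
      rw [dvd_iff_isRoot, IsRoot]
      simpa using hg
    refine ⟨f + m * C g, k, ?_⟩
    rw [Multiset.map_cons, Multiset.prod_cons]
    linear_combination hf + m * hk

variable {n : Type*} [Fintype n] [DecidableEq n]

theorem exists_aeval_sq_eq {T : Matrix n n K} (hT : IsUnit T) : ∃ f : K[X], aeval T f ^ 2 = T := by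
  have h0 : (0 : K) ∉ T.charpoly.roots := by
    rw [mem_roots (charpoly_monic T).ne_zero, IsRoot, eval_charpoly, map_zero, zero_sub,
      ← Ne, ← isUnit_iff_ne_zero, ← isUnit_iff_isUnit_det]
    exact hT.neg
  obtain ⟨f, k, hf⟩ := exists_prod_X_sub_C_dvd_sq_sub_X _ h0
  rw [← (IsAlgClosed.splits T.charpoly).eq_prod_roots_of_monic (charpoly_monic T)] at hf
  have := congrArg (aeval T) hf
  rw [map_mul, aeval_self_charpoly, zero_mul, map_sub, map_pow, aeval_X, sub_eq_zero] at this
  exact ⟨f, this⟩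

end SquareRoot

section Congruence

variable {n : Type*} [Fintype n] [DecidableEq n] {K : Type*} [CommRing K]

theorem aeval_mul_eq_mul_aeval_transpose {T A : Matrix n n K} (h : T * A = A * Tᵀ)
    (f : Polynomial K) : Polynomial.aeval T f * A = A * (Polynomial.aeval T f)ᵀ := by
  induction f using Polynomial.induction_on' with
  | add p q hp hq => rw [map_add, Matrix.add_mul, hp, hq, transpose_add, Matrix.mul_add]
  | monomial k a =>
    have hpow : SemiconjBy A (Tᵀ ^ k) (T ^ k) := SemiconjBy.pow_right h.symm k
    rw [Polynomial.aeval_monomial, ← Algebra.smul_def, transpose_smul, transpose_pow,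
      Matrix.smul_mul, Matrix.mul_smul, hpow.eq]

theorem mul_transpose_comm_of_skew {S R A B : Matrix n n K} (hR : IsUnit R) (hA : Aᵀ = -A)
    (hB : Bᵀ = -B) (h : S * A * R = B) : (Rᵀ)⁻¹ * S * A = A * ((Rᵀ)⁻¹ * S)ᵀ := by
  rw [isUnit_iff_isUnit_det] at hR
  have e : (Rᵀ)⁻¹ * S * A = (Rᵀ)⁻¹ * B * R⁻¹ := by
    rw [← h, Matrix.mul_assoc, Matrix.mul_assoc, mul_nonsing_inv_cancel_right _ _ hR]
  have hskew : ((Rᵀ)⁻¹ * S * A)ᵀ = -((Rᵀ)⁻¹ * S * A) := by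
    rw [e, transpose_mul, transpose_mul, hB, transpose_nonsing_inv, transpose_nonsing_inv,
      transpose_transpose, Matrix.neg_mul, Matrix.mul_neg, Matrix.mul_assoc]
  rw [transpose_mul, hA, Matrix.neg_mul] at hskew
  exact (neg_injective hskew).symm

/-- With `T = R⁻ᵀ S`, the matrix `(√T)ᵀ R` turns the strict equivalence `(S, R)` into a
congruence, simultaneously for all pairs `A`, `B` of skew-symmetric matrices. -/
theorem transpose_sqrt_mul_congr {S R A B : Matrix n n K} (hR : IsUnit R) (hA : Aᵀ = -A)
    (hB : Bᵀ = -B) (h : S * A * R = B) {f : Polynomial K}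
    (hf : Polynomial.aeval ((Rᵀ)⁻¹ * S) f ^ 2 = (Rᵀ)⁻¹ * S) :
    ((Polynomial.aeval ((Rᵀ)⁻¹ * S) f)ᵀ * R)ᵀ * A * ((Polynomial.aeval ((Rᵀ)⁻¹ * S) f)ᵀ * R) =
      B := by
  have hcomm := aeval_mul_eq_mul_aeval_transpose (mul_transpose_comm_of_skew hR hA hB h) f
  have hRt : IsUnit (Rᵀ).det := by rwa [det_transpose, ← isUnit_iff_isUnit_det]
  set F := Polynomial.aeval ((Rᵀ)⁻¹ * S) f
  calc (Fᵀ * R)ᵀ * A * (Fᵀ * R) = Rᵀ * (F * (A * Fᵀ)) * R := by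
        simp only [transpose_mul, transpose_transpose, Matrix.mul_assoc]
    _ = Rᵀ * ((Rᵀ)⁻¹ * S * A) * R := by rw [← hcomm, ← Matrix.mul_assoc F, ← sq, hf]
    _ = B := by rw [Matrix.mul_assoc _ S, mul_nonsing_inv_cancel_left _ _ hRt, h]

end Congruence

theorem Congruent.lin_iso {n : ℕ} {P Q : Pencil n n} (h : Congruent P Q) :
    LinPair.Iso (lin P) (lin Q) := by
  obtain ⟨S, hS, h1, h2⟩ := h
  have hSt : IsUnit (Sᵀ).det := by rwa [det_transpose, ← isUnit_iff_isUnit_det]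
  refine strictEquiv_iff_lin_iso.1 ⟨(Sᵀ)⁻¹, S, ?_, hS, ?_, ?_⟩
  · exact (isUnit_iff_isUnit_det _).2 (isUnit_nonsing_inv_det _ hSt)
  · rwa [nonsing_inv_nonsing_inv _ hSt]
  · rwa [nonsing_inv_nonsing_inv _ hSt]

theorem IsSkew.congruent_of_lin_iso {n : ℕ} {P Q : Pencil n n} (hP : IsSkew P) (hQ : IsSkew Q)
    (h : LinPair.Iso (lin P) (lin Q)) : Congruent P Q := by
  obtain ⟨S, R, hS, hR, h1, h2⟩ := strictEquiv_iff_lin_iso.2 h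
  have hT : IsUnit ((Rᵀ)⁻¹ * S⁻¹) :=
    (isUnit_nonsing_inv_iff.2 ((isUnit_transpose _).2 hR)).mul (isUnit_nonsing_inv_iff.2 hS)
  obtain ⟨f, hf⟩ := exists_aeval_sq_eq hT
  have hF : IsUnit (Polynomial.aeval ((Rᵀ)⁻¹ * S⁻¹) f) :=
    (isUnit_pow_iff two_ne_zero).1 (by rwa [hf])
  exact ⟨_, ((isUnit_transpose _).2 hF).mul hR, transpose_sqrt_mul_congr hR hP.1 hQ.1 h1 hf,
    transpose_sqrt_mul_congr hR hP.2 hQ.2 h2 hf⟩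

/-! ### Coordinate formulas for the Kronecker blocks -/

/-- Extension of a finite sequence by zero to all natural indices. -/
def zext {M : Type*} [Zero M] {a : ℕ} (x : Fin a → M) (i : ℕ) : M :=
  if h : i < a then x ⟨i, h⟩ else 0

section Zext

variable {M : Type*} {a : ℕ}

theorem zext_of_lt [Zero M] (x : Fin a → M) {i : ℕ} (h : i < a) : zext x i = x ⟨i, h⟩ :=
  dif_pos h

theorem zext_of_le [Zero M] (x : Fin a → M) {i : ℕ} (h : a ≤ i) : zext x i = 0 :=
  dif_neg (not_lt.2 h)

@[simp]
theorem zext_fin [Zero M] (x : Fin a → M) (i : Fin a) : zext x i = x i := dif_pos i.2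

theorem sum_ite_val_eq_zext [AddCommMonoid M] (x : Fin a → M) (n : ℕ) :
    ∑ i : Fin a, (if (i : ℕ) = n then x i else 0) = zext x n := by
  by_cases h : n < a
  · rw [zext_of_lt x h, ← Fintype.sum_ite_eq' (⟨n, h⟩ : Fin a) x]
    simp only [Fin.ext_iff]
  · rw [zext_of_le x (not_lt.1 h)]
    exact Finset.sum_eq_zero fun i _ => if_neg (by omega)

theorem map_zext {N F : Type*} [Zero M] [Zero N] [FunLike F M N] [ZeroHomClass F M N] (g : F)
    (x : Fin a → M) (n : ℕ) : g (zext x n) = zext (fun i => g (x i)) n := by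
  unfold zext
  split_ifs
  exacts [rfl, map_zero g]

theorem zext_add [AddZeroClass M] (x y : Fin a → M) (n : ℕ) :
    zext (x + y) n = zext x n + zext y n := by
  simp only [zext, Pi.add_apply]
  split_ifs <;> simp

theorem zext_smul [Zero M] {R : Type*} [SMulZeroClass R M] (c : R) (x : Fin a → M) (n : ℕ) :
    zext (c • x) n = c • zext x n := by
  simp only [zext, Pi.smul_apply]
  split_ifs <;> simp

theorem zext_single [Zero M] (j : Fin a) (v : M) (n : ℕ) :
    zext (Pi.single j v : Fin a → M) n = if n = j then v else 0 := by
  by_cases h : n < a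
  · simp [zext_of_lt _ h, Pi.single_apply, Fin.ext_iff]
  · rw [zext_of_le _ (not_lt.1 h), if_neg (by omega)]

end Zext

/-- The linear map deleting the first `s` coordinates of a vector and then truncating it, or
extending it by zero, to length `a`. -/
def shift (a : ℕ) {b : ℕ} (s : ℕ) : (Fin b → ℂ) →ₗ[ℂ] (Fin a → ℂ) where
  toFun x i := zext x (i + s)
  map_add' x y := funext fun i => zext_add x y (i + s)
  map_smul' c x := funext fun i => zext_smul c x (i + s)

section Shift

variable {a b s : ℕ}

theorem shift_apply (x : Fin b → ℂ) (i : Fin a) : shift a s x i = zext x (i + s) := rfl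

theorem zext_shift (x : Fin b → ℂ) (i : ℕ) :
    zext (shift a s x) i = if i < a then zext x (i + s) else 0 := by
  by_cases h : i < a
  · rw [zext_of_lt _ h, if_pos h, shift_apply]
  · rw [zext_of_le _ (not_lt.1 h), if_neg h]

end Shift

theorem Lblk_fst_mulVec (m : ℕ) (x : Fin (m + 1) → ℂ) : (Lblk m).1 *ᵥ x = shift m 1 x := by
  ext i
  simp [Lblk, Fmat, mulVec, dotProduct, sum_ite_val_eq_zext, shift_apply]

theorem Lblk_snd_mulVec (m : ℕ) (x : Fin (m + 1) → ℂ) : (Lblk m).2 *ᵥ x = shift m 0 x := by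
  ext i
  simp [Lblk, Gmat, mulVec, dotProduct, sum_ite_val_eq_zext, shift_apply]

theorem LTblk_fst_mulVec (m : ℕ) (x : Fin m → ℂ) :
    (LTblk m).1 *ᵥ x = (Fin.cons 0 x : Fin (m + 1) → ℂ) := by
  ext i
  refine Fin.cases ?_ (fun i => ?_) i
  · simp [LTblk, Fmat, mulVec, dotProduct]
  · simp [LTblk, Fmat, mulVec, dotProduct, eq_comm (a := (i : ℕ)), sum_ite_val_eq_zext]

theorem LTblk_snd_mulVec (m : ℕ) (x : Fin m → ℂ) : (LTblk m).2 *ᵥ x = shift (m + 1) 0 x := by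
  ext i
  simp [LTblk, Gmat, mulVec, dotProduct, eq_comm (a := (i : ℕ)), sum_ite_val_eq_zext, shift_apply]

theorem Jmat_apply_eq_add (k : ℕ) (μ : ℂ) (i j : Fin k) :
    Jmat k μ i j = (if j = i then μ else 0) + if (j : ℕ) = i + 1 then 1 else 0 := by
  simp only [Jmat, of_apply, Fin.ext_iff]
  split_ifs <;> simp; omega

theorem Eblk_fst_mulVec (k : ℕ) (μ : ℂ) (x : Fin k → ℂ) :
    (Eblk k μ).1 *ᵥ x = μ • x + shift k 1 x := by
  ext i
  simp [Eblk, mulVec, dotProduct, Jmat_apply_eq_add, add_mul, Finset.sum_add_distrib,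
    sum_ite_val_eq_zext, shift_apply]

theorem Eblk_snd_mulVec (k : ℕ) (μ : ℂ) (x : Fin k → ℂ) : (Eblk k μ).2 *ᵥ x = x := by
  simp [Eblk]

/-! ### Dimensions of morphism spaces -/

section HomDim

variable {V U V' U' : Type*}
  [AddCommGroup V] [Module ℂ V] [AddCommGroup U] [Module ℂ U]
  [AddCommGroup V'] [Module ℂ V'] [AddCommGroup U'] [Module ℂ U']

/-- The linear map `(Fin a → V) → (Fin b → U)` whose kernel is, in coordinates, the space of
morphisms to `f` from the transpose of `X`, with its two components interchanged up to sign. -/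
def homMap {a b : ℕ} (X : Pencil a b) (f : LinPair ℂ V U) : (Fin a → V) →ₗ[ℂ] (Fin b → U) :=
  LinearMap.pi fun j => ∑ i, (X.2 i j • f.1 - X.1 i j • f.2) ∘ₗ LinearMap.proj i

/-- The dimension of the kernel of `homMap X f`. For `X` ranging over the Kronecker blocks these
numbers determine the isomorphism class of `f`, and they can only grow under degeneration. -/
def homDim {a b : ℕ} (X : Pencil a b) (f : LinPair ℂ V U) : ℕ :=
  Module.finrank ℂ (LinearMap.ker (homMap X f))

theorem finrank_submodule_prod [FiniteDimensional ℂ V] [FiniteDimensional ℂ V']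
    (p : Submodule ℂ V) (q : Submodule ℂ V') :
    Module.finrank ℂ (p.prod q) = Module.finrank ℂ p + Module.finrank ℂ q := by
  rw [← Module.finrank_prod]
  exact LinearEquiv.finrank_eq
    { toFun := fun x => (⟨x.1.1, x.2.1⟩, ⟨x.1.2, x.2.2⟩)
      invFun := fun y => ⟨(y.1, y.2), y.1.2, y.2.2⟩
      map_add' := fun _ _ => rfl
      map_smul' := fun _ _ => rfl }

variable {a b : ℕ} {X : Pencil a b} {f : LinPair ℂ V U}

theorem homMap_apply (X : Pencil a b) (f : LinPair ℂ V U) (x : Fin a → V) (j : Fin b) :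
    homMap X f x j = ∑ i, (X.2 i j • f.1 (x i) - X.1 i j • f.2 (x i)) := by
  simp [homMap]

theorem LinPair.Iso.homDim_eq {g : LinPair ℂ V' U'} (h : LinPair.Iso f g) (X : Pencil a b) :
    homDim X f = homDim X g := by
  obtain ⟨e, e', h1, h2⟩ := h
  let E : (Fin a → V) ≃ₗ[ℂ] (Fin a → V') := LinearEquiv.piCongrRight fun _ => e
  have homMap_E (x : Fin a → V) : homMap X g (E x) = fun j => e' (homMap X f x j) := by
    ext j
    simp [E, homMap_apply, map_sum, h1, h2]
  have map_ker : (LinearMap.ker (homMap X f)).map E.toLinearMap = LinearMap.ker (homMap X g) := by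
    ext y
    obtain ⟨x, rfl⟩ := E.surjective y
    rw [Submodule.mem_map_equiv, LinearMap.mem_ker, LinearMap.mem_ker, homMap_E,
      E.symm_apply_apply, funext_iff, funext_iff]
    simp
  exact (E.submoduleMap _).finrank_eq.trans (by rw [map_ker]; rfl)

theorem homDim_sum [FiniteDimensional ℂ V] [FiniteDimensional ℂ V'] (X : Pencil a b)
    (f : LinPair ℂ V U) (g : LinPair ℂ V' U') :
    homDim X (f.sum g) = homDim X f + homDim X g := by
  let E : ((Fin a → V) × (Fin a → V')) ≃ₗ[ℂ] (Fin a → V × V') :=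
    { toFun := fun p i => (p.1 i, p.2 i)
      invFun := fun x => (fun i => (x i).1, fun i => (x i).2)
      map_add' := fun _ _ => rfl
      map_smul' := fun _ _ => rfl }
  have homMap_E (p : (Fin a → V) × (Fin a → V')) (j : Fin b) :
      homMap X (f.sum g) (E p) j = (homMap X f p.1 j, homMap X g p.2 j) := by
    ext <;> simp [E, homMap_apply, LinPair.sum, Prod.fst_sum, Prod.snd_sum]
  have map_ker : ((LinearMap.ker (homMap X f)).prod (LinearMap.ker (homMap X g))).map
      E.toLinearMap = LinearMap.ker (homMap X (f.sum g)) := by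
    ext y
    obtain ⟨x, rfl⟩ := E.surjective y
    simp [Submodule.mem_map_equiv, funext_iff, homMap_E, forall_and]
  rw [homDim, ← map_ker, ← (E.submoduleMap _).finrank_eq, finrank_submodule_prod]
  rfl

theorem homDim_eq_zero_of_subsingleton [Subsingleton V] (X : Pencil a b) (f : LinPair ℂ V U) :
    homDim X f = 0 := Module.finrank_zero_of_subsingleton

theorem finrank_mul_le_homDim_add [FiniteDimensional ℂ V] [FiniteDimensional ℂ U]
    (X : Pencil a b) (f : LinPair ℂ V U) :
    a * Module.finrank ℂ V ≤ homDim X f + b * Module.finrank ℂ U := by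
  have rank_nullity := (homMap X f).finrank_range_add_finrank_ker
  have range_le := Submodule.finrank_le (LinearMap.range (homMap X f))
  simp only [Module.finrank_pi_fintype, Finset.sum_const, Finset.card_univ, Fintype.card_fin,
    smul_eq_mul] at rank_nullity range_le
  unfold homDim
  omega

theorem homDim_le_finrank_of_injOn {E : Type*} [AddCommGroup E] [Module ℂ E]
    [FiniteDimensional ℂ E] (ev : (Fin a → V) →ₗ[ℂ] E)
    (h : ∀ x ∈ LinearMap.ker (homMap X f), ev x = 0 → x = 0) :
    homDim X f ≤ Module.finrank ℂ E := by
  refine LinearMap.finrank_le_finrank_of_injective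
    (f := ev.domRestrict (LinearMap.ker (homMap X f))) ?_
  rw [← LinearMap.ker_eq_bot, LinearMap.ker_eq_bot']
  exact fun x hx => Subtype.ext (h x x.2 hx)

theorem finrank_le_homDim_of_injective [FiniteDimensional ℂ V] {E : Type*} [AddCommGroup E]
    [Module ℂ E] (p : E →ₗ[ℂ] (Fin a → V)) (h : ∀ q, p q ∈ LinearMap.ker (homMap X f))
    (hp : Function.Injective p) : Module.finrank ℂ E ≤ homDim X f :=
  LinearMap.finrank_le_finrank_of_injective (f := p.codRestrict _ h)
    fun _ _ hq => hp (congrArg Subtype.val hq)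

theorem mem_ker_homMap_Lblk {k : ℕ} {x : Fin k → V} :
    x ∈ LinearMap.ker (homMap (Lblk k) f) ↔
      f.1 (zext x 0) = 0 ∧ ∀ j : ℕ, f.1 (zext x (j + 1)) = f.2 (zext x j) := by
  have homMap_zero : homMap (Lblk k) f x 0 = f.1 (zext x 0) := by
    simp [homMap_apply, Lblk, Fmat, Gmat, eq_comm (a := 0), sum_ite_val_eq_zext, map_zext]
  have homMap_succ (j : Fin k) :
      homMap (Lblk k) f x j.succ = f.1 (zext x (j + 1)) - f.2 (zext x j) := by
    simp [homMap_apply, Lblk, Fmat, Gmat, eq_comm (a := (j : ℕ)), eq_comm (a := (j : ℕ) + 1),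
      sum_ite_val_eq_zext, map_zext]
  rw [LinearMap.mem_ker, funext_iff, Fin.forall_fin_succ]
  simp only [homMap_zero, homMap_succ, Pi.zero_apply, sub_eq_zero]
  refine and_congr_right fun _ => ⟨fun h j => ?_, fun h j => h j⟩
  by_cases hj : j < k
  · exact h ⟨j, hj⟩
  · rw [zext_of_le x (by omega), zext_of_le x (by omega), map_zero, map_zero]

theorem mem_ker_homMap_Eblk {k : ℕ} {μ : ℂ} {x : Fin k → V} :
    x ∈ LinearMap.ker (homMap (Eblk k μ) f) ↔
      f.1 (zext x 0) = μ • f.2 (zext x 0) ∧ ∀ j, j + 1 < k →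
        f.1 (zext x (j + 1)) = μ • f.2 (zext x (j + 1)) + f.2 (zext x j) := by
  have homMap_eq (j : Fin k) : homMap (Eblk k μ) f x j = f.1 (x j) - μ • f.2 (x j) -
      ∑ i : Fin k, if (j : ℕ) = i + 1 then f.2 (x i) else 0 := by
    simp [homMap_apply, Eblk, one_apply, Jmat_apply_eq_add, add_smul, Finset.sum_add_distrib,
      sub_sub]
  have homMap_zero (h : 0 < k) : homMap (Eblk k μ) f x ⟨0, h⟩ =
      f.1 (zext x 0) - μ • f.2 (zext x 0) := by
    simp [homMap_eq, zext_of_lt x h]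
  have homMap_succ (j : ℕ) (h : j + 1 < k) : homMap (Eblk k μ) f x ⟨j + 1, h⟩ =
      f.1 (zext x (j + 1)) - μ • f.2 (zext x (j + 1)) - f.2 (zext x j) := by
    simp [homMap_eq, zext_of_lt x h, eq_comm (a := j), sum_ite_val_eq_zext, map_zext]
  rw [LinearMap.mem_ker, funext_iff]
  constructor
  · refine fun hx => ⟨?_, fun j h => ?_⟩
    · rcases k.eq_zero_or_pos with rfl | h
      · simp [zext]
      · simpa [homMap_zero, sub_eq_zero] using hx ⟨0, h⟩
    · simpa [homMap_succ, sub_sub, sub_eq_zero] using hx ⟨j + 1, h⟩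
  · rintro ⟨h0, h1⟩ ⟨_ | j, h⟩
    · simp [homMap_zero, h0]
    · simp [homMap_succ, h1 j h]

theorem homDim_Lblk_eq_zero (hf : Function.Injective f.2) (k : ℕ) : homDim (Lblk k) f = 0 := by
  refine Nat.le_zero.1 ((homDim_le_finrank_of_injOn (0 : _ →ₗ[ℂ] (Fin 0 → ℂ))
    fun x hx _ => ?_).trans_eq Module.finrank_zero_of_subsingleton)
  obtain ⟨-, h⟩ := mem_ker_homMap_Lblk.1 hx
  have vanish (s j : ℕ) (hs : k ≤ j + s) : zext x j = 0 := by
    induction s generalizing j with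
    | zero => exact zext_of_le x hs
    | succ s ih => exact hf (by rw [← h, ih (j + 1) (by omega), map_zero, map_zero])
  ext j : 1
  rw [← zext_fin x j, vanish k j (by omega), Pi.zero_apply]

theorem homDim_Eblk_le {E : Type*} [AddCommGroup E] [Module ℂ E] [FiniteDimensional ℂ E] {μ : ℂ}
    (ev : V →ₗ[ℂ] E) (h : ∀ v, f.1 v = μ • f.2 v → ev v = 0 → v = 0) (k : ℕ) :
    homDim (Eblk k μ) f ≤ k * Module.finrank ℂ E := by
  refine (homDim_le_finrank_of_injOn (LinearMap.pi fun j : Fin k => ev ∘ₗ LinearMap.proj j)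
    fun x hx hev => ?_).trans_eq (by simp [Module.finrank_pi_fintype])
  obtain ⟨h0, h1⟩ := mem_ker_homMap_Eblk.1 hx
  have ev_zext (j : ℕ) (hj : j < k) : ev (zext x j) = 0 := by
    rw [zext_of_lt x hj]
    exact congrFun hev ⟨j, hj⟩
  have vanish (j : ℕ) (hj : j < k) : zext x j = 0 := by
    induction j with
    | zero => exact h _ h0 (ev_zext 0 hj)
    | succ j ih =>
      refine h _ ?_ (ev_zext _ hj)
      rw [h1 j hj, ih (by omega), map_zero, add_zero]
  ext j : 1
  rw [← zext_fin x j, vanish j j.2, Pi.zero_apply]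

theorem homDim_Eblk_eq_zero {μ : ℂ} (h : ∀ v, f.1 v = μ • f.2 v → v = 0) (k : ℕ) :
    homDim (Eblk k μ) f = 0 := by
  simpa using homDim_Eblk_le (0 : V →ₗ[ℂ] (Fin 0 → ℂ)) (fun v hv _ => h v hv) k

theorem homDim_Eblk_le_finrank [FiniteDimensional ℂ V] (hf : Function.Injective f.2) (k : ℕ)
    (μ : ℂ) : homDim (Eblk k μ) f ≤ Module.finrank ℂ V := by
  rcases k.eq_zero_or_pos with rfl | hk
  · exact (Nat.zero_le _).trans' Module.finrank_zero_of_subsingleton.le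
  refine homDim_le_finrank_of_injOn (LinearMap.proj (⟨k - 1, by omega⟩ : Fin k))
    fun x hx hlast => ?_
  obtain ⟨-, h⟩ := mem_ker_homMap_Eblk.1 hx
  have vanish (s j : ℕ) (hs : j + s + 1 = k) : zext x j = 0 := by
    induction s generalizing j with
    | zero =>
      rw [zext_of_lt x (by omega)]
      obtain rfl : j = k - 1 := by omega
      exact hlast
    | succ s ih =>
      have hj := h j (by omega)
      rw [ih (j + 1) (by omega), map_zero, map_zero, smul_zero, zero_add] at hj
      exact hf (hj.symm.trans (map_zero _).symm)
  ext j : 1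
  rw [← zext_fin x j, vanish (k - 1 - j) j (by omega), Pi.zero_apply]

end HomDim

theorem isClosed_le_homDim {a b m n : ℕ} (X : Pencil a b) (c : ℕ) :
    IsClosed {P : Pencil m n | c ≤ homDim X (lin P)} := by
  let F (P : Pencil m n) : (Fin a → Fin n → ℂ) →L[ℂ] (Fin b → Fin m → ℂ) :=
    LinearMap.toContinuousLinearMap (homMap X (lin P))
  have continuous_F : Continuous F := by
    refine continuous_clm_apply.2 fun x => continuous_pi fun j => ?_
    simp only [F, LinearMap.coe_toContinuousLinearMap', homMap_apply, lin_fst_apply, lin_snd_apply]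
    fun_prop
  rw [← isOpen_compl_iff]
  convert (isOpen_setOfPred_nat_le_rank (a * n + 1 - c)).preimage continuous_F using 1
  ext P
  have rank_nullity := (homMap X (lin P)).finrank_range_add_finrank_ker
  simp only [Module.finrank_pi_fintype, Finset.sum_const, Finset.card_univ,
    Fintype.card_fin, smul_eq_mul, Module.finrank_self, mul_one] at rank_nullity
  rw [Set.mem_compl_iff, Set.mem_preimage, Set.mem_ofPred_eq, Set.mem_ofPred_eq, LinearMap.rank,
    ← Module.finrank_eq_rank, Nat.cast_le, homDim]
  change _ ↔ _ ≤ Module.finrank ℂ (LinearMap.range (homMap X (lin P)))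
  omega

/-! ### Morphisms between Kronecker blocks -/

theorem eq_zero_of_eq_smul_shift_one {m : ℕ} {c : ℂ} {y : Fin m → ℂ} (h : y = c • shift m 1 y) :
    y = 0 := by
  have vanish (s i : ℕ) (hs : m ≤ i + s) : zext y i = 0 := by
    induction s generalizing i with
    | zero => exact zext_of_le y hs
    | succ s ih =>
      by_cases hi : i < m
      · rw [zext_of_lt y hi, h, Pi.smul_apply, shift_apply, ih (i + 1) (by omega), smul_zero]
      · exact zext_of_le y (not_lt.1 hi)
  ext i
  rw [← zext_fin y i, vanish m i (by omega), Pi.zero_apply]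

theorem eq_zero_of_shift_one_eq_smul_shift_zero {m : ℕ} {μ : ℂ} {y : Fin (m + 1) → ℂ}
    (h : shift m 1 y = μ • shift m 0 y) (h0 : y 0 = 0) : y = 0 := by
  ext i
  induction i using Fin.induction with
  | zero => exact h0
  | succ i ih =>
    have := congrFun h i
    rw [shift_apply, Pi.smul_apply, shift_apply, zext_of_lt y (by omega),
      zext_of_lt y (by omega)] at this
    exact this.trans (by simp [show y ⟨i, _⟩ = 0 from ih])

theorem LTblk_snd_injective (m : ℕ) : Function.Injective (lin (LTblk m)).2 := by
  refine (injective_iff_map_eq_zero _).2 fun y hy => ?_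
  ext i
  simpa [LTblk_snd_mulVec, shift_apply] using congrFun hy i.castSucc

theorem Eblk_snd_injective (m : ℕ) (ν : ℂ) : Function.Injective (lin (Eblk m ν)).2 :=
  fun x y h => by
  simpa [Eblk_snd_mulVec] using h

theorem homDim_Lblk_LTblk (k m : ℕ) : homDim (Lblk k) (lin (LTblk m)) = 0 :=
  homDim_Lblk_eq_zero (LTblk_snd_injective m) k

theorem homDim_Lblk_Eblk (k m : ℕ) (ν : ℂ) : homDim (Lblk k) (lin (Eblk m ν)) = 0 :=
  homDim_Lblk_eq_zero (Eblk_snd_injective m ν) k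

theorem homDim_Eblk_LTblk (k m : ℕ) (μ : ℂ) : homDim (Eblk k μ) (lin (LTblk m)) = 0 := by
  refine homDim_Eblk_eq_zero (fun y hy => eq_zero_of_eq_smul_shift_one (c := μ) ?_) k
  rw [lin_fst_apply, lin_snd_apply, LTblk_fst_mulVec, LTblk_snd_mulVec] at hy
  ext i
  simpa [shift_apply] using congrFun hy i.succ

theorem homDim_Eblk_Eblk_of_ne (k m : ℕ) {μ ν : ℂ} (h : μ ≠ ν) :
    homDim (Eblk k μ) (lin (Eblk m ν)) = 0 := by
  refine homDim_Eblk_eq_zero (fun y hy => eq_zero_of_eq_smul_shift_one (c := (μ - ν)⁻¹) ?_) k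
  rw [lin_fst_apply, lin_snd_apply, Eblk_fst_mulVec, Eblk_snd_mulVec] at hy
  rw [eq_inv_smul_iff₀ (sub_ne_zero.2 h), sub_smul, ← hy, add_sub_cancel_left]

theorem homDim_Eblk_Lblk (k m : ℕ) (μ : ℂ) : homDim (Eblk k μ) (lin (Lblk m)) = k := by
  apply le_antisymm
  · have := homDim_Eblk_le (f := lin (Lblk m)) (μ := μ) (LinearMap.proj 0) (fun y hy h0 => ?_) k
    · simpa using this
    rw [lin_fst_apply, lin_snd_apply, Lblk_fst_mulVec, Lblk_snd_mulVec] at hy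
    exact eq_zero_of_shift_one_eq_smul_shift_zero hy h0
  · have := finrank_mul_le_homDim_add (Eblk k μ) (lin (Lblk m))
    simp only [Module.finrank_fin_fun] at this
    nlinarith

theorem homDim_Eblk_Eblk_self (k m : ℕ) (μ : ℂ) :
    homDim (Eblk k μ) (lin (Eblk m μ)) = min m k := by
  have mem_ker (x : Fin k → Fin m → ℂ) :
      x ∈ LinearMap.ker (homMap (Eblk k μ) (lin (Eblk m μ))) ↔
        shift m 1 (zext x 0) = 0 ∧ ∀ j, j + 1 < k → shift m 1 (zext x (j + 1)) = zext x j := by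
    simp [-LinearMap.mem_ker, mem_ker_homMap_Eblk, Eblk_fst_mulVec, Eblk_snd_mulVec]
  apply le_antisymm
  · refine le_min ?_ ?_
    · simpa using homDim_Eblk_le_finrank (Eblk_snd_injective m μ) k μ
    · have := homDim_Eblk_le (f := lin (Eblk m μ)) (μ := μ) (shift 1 0) (fun y hy h0 => ?_) k
      · simpa using this
      replace hy : shift m 1 y = 0 := by simpa [Eblk_fst_mulVec, Eblk_snd_mulVec] using hy
      ext ⟨i, hi⟩
      cases i with
      | zero => simpa [shift_apply, zext_of_lt y hi] using congrFun h0 0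
      | succ i => simpa [shift_apply, zext_of_lt y hi] using congrFun hy ⟨i, by omega⟩
  · let p : (Fin (min m k) → ℂ) →ₗ[ℂ] (Fin k → Fin m → ℂ) :=
      LinearMap.pi fun j => shift m (k - 1 - j)
    have zext_p (q) {j : ℕ} (hj : j < k) : zext (p q) j = shift m (k - 1 - j) q := zext_of_lt _ hj
    refine (Module.finrank_fin_fun ℂ).ge.trans (finrank_le_homDim_of_injective p
      (fun q => (mem_ker _).2 ⟨?_, fun j hj => ?_⟩) fun q q' h => ?_)
    · ext i
      rcases k.eq_zero_or_pos with rfl | hk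
      · simp [zext, shift_apply]
      · rw [zext_p q hk, shift_apply, zext_shift, zext_of_le q (by omega), ite_self, Pi.zero_apply]
    · ext i
      rw [zext_p q hj, zext_p q (by omega), shift_apply, shift_apply, zext_shift]
      split_ifs with hi
      · congr 1
        omega
      · exact (zext_of_le q (by omega)).symm
    · ext ⟨i, hi⟩
      simpa [p, shift_apply, zext_of_lt _ hi] using
        congrFun (congrFun h ⟨k - 1, by omega⟩) ⟨i, by omega⟩

theorem homDim_Lblk_Lblk (k m : ℕ) : homDim (Lblk k) (lin (Lblk m)) = k - m := by
  apply le_antisymm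
  · refine (homDim_le_finrank_of_injOn (E := Fin (k - m) → ℂ) (LinearMap.pi fun j =>
      LinearMap.proj 0 ∘ₗ LinearMap.proj (⟨j, by omega⟩ : Fin k)) fun x hx h0 => ?_).trans_eq
        (Module.finrank_fin_fun ℂ)
    obtain ⟨hfst, hsnd⟩ := mem_ker_homMap_Lblk.1 hx
    set c : ℕ → ℕ → ℂ := fun j i => zext (zext x j) i with hc
    have c_zero (i : ℕ) (hi : i < m) : c 0 (i + 1) = 0 := by
      simpa [Lblk_fst_mulVec, shift_apply] using congrFun hfst ⟨i, hi⟩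
    have c_diag (j i : ℕ) (hi : i < m) : c (j + 1) (i + 1) = c j i := by
      simpa [Lblk_fst_mulVec, Lblk_snd_mulVec, shift_apply] using congrFun (hsnd j) ⟨i, hi⟩
    have c_add (s j i : ℕ) (hi : i + s ≤ m) : c (j + s) (i + s) = c j i := by
      induction s with
      | zero => rfl
      | succ s ih => exact (c_diag (j + s) (i + s) (by omega)).trans (ih (by omega))
    have c_left (j : ℕ) : c j 0 = 0 := by
      rcases lt_or_ge j (k - m) with hj | hj
      · simpa [hc, zext_of_lt x (show j < k by omega), zext_of_lt] using congrFun h0 ⟨j, hj⟩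
      · rw [← c_add m j 0 (by omega), hc]
        simp only [zext_of_le x (show k ≤ j + m by omega)]
        simp [zext]
    have c_eq_zero (j i : ℕ) (hi : i ≤ m) : c j i = 0 := by
      rcases le_or_gt i j with hij | hij
      · have := c_add i (j - i) 0 (by omega)
        rwa [Nat.sub_add_cancel hij, zero_add, c_left] at this
      · have := c_add j 0 (i - j) (by omega)
        rw [zero_add, Nat.sub_add_cancel hij.le] at this
        rw [this, ← Nat.sub_add_cancel (show 1 ≤ i - j by omega)]
        exact c_zero _ (by omega)
    ext j i
    simpa [hc] using c_eq_zero j i (by omega)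
  · have := finrank_mul_le_homDim_add (Lblk k) (lin (Lblk m))
    simp only [Module.finrank_fin_fun] at this
    rw [tsub_le_iff_right]
    nlinarith

/-! ### The Kronecker canonical form -/

/-- Labels of Kronecker blocks without infinite eigenvalue; `E k μ` has size `k + 1`. -/
inductive Block
  | L (m : ℕ)
  | T (m : ℕ)
  | E (k : ℕ) (μ : ℂ)

namespace Block

/-- Number of rows of a block. -/
def rows : Block → ℕ
  | L m => m
  | T m => m + 1
  | E k _ => k + 1

/-- Number of columns of a block. -/
def cols : Block → ℕ
  | L m => m + 1
  | T m => m
  | E k _ => k + 1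

/-- The pencil of a block. -/
def pencil : (b : Block) → Pencil b.rows b.cols
  | L m => Lblk m
  | T m => LTblk m
  | E k μ => Eblk (k + 1) μ

/-- The label of the transposed block. -/
def dual : Block → Block
  | L m => T m
  | T m => L m
  | E k μ => E k μ

/-- Value of `homDim (Lblk k)` on a block. -/
def hL (k : ℕ) : Block → ℕ
  | L m => k - m
  | T _ => 0
  | E _ _ => 0

open Classical in
/-- Value of `homDim (Eblk k μ)` on a block. -/
def hE (k : ℕ) (μ : ℂ) : Block → ℕ
  | L _ => k
  | T _ => 0
  | E j ν => if μ = ν then min (j + 1) k else 0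

theorem homDim_Lblk (k : ℕ) (b : Block) : homDim (Lblk k) (lin b.pencil) = b.hL k := by
  cases b with
  | L m => exact homDim_Lblk_Lblk k m
  | T m => exact homDim_Lblk_LTblk k m
  | E j ν => exact homDim_Lblk_Eblk k _ ν

theorem homDim_Eblk (k : ℕ) (μ : ℂ) (b : Block) :
    homDim (Eblk k μ) (lin b.pencil) = b.hE k μ := by
  cases b with
  | L m => exact homDim_Eblk_Lblk k m μ
  | T m => exact homDim_Eblk_LTblk k m μ
  | E j ν =>
    rcases eq_or_ne μ ν with rfl | h
    · exact (homDim_Eblk_Eblk_self k (j + 1) μ).trans (if_pos rfl).symm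
    · exact (homDim_Eblk_Eblk_of_ne k (j + 1) h).trans (if_neg h).symm

end Block

/-- Sum of a numerical function over a list of blocks. -/
def total (f : Block → ℕ) (l : List Block) : ℕ := (l.map f).sum

section Total

variable {f g : Block → ℕ} {l l' : List Block}

@[simp] theorem total_nil (f : Block → ℕ) : total f [] = 0 := rfl

@[simp] theorem total_cons (f : Block → ℕ) (b : Block) (l : List Block) :
    total f (b :: l) = f b + total f l := rfl

@[simp] theorem total_append (f : Block → ℕ) (l l' : List Block) :
    total f (l ++ l') = total f l + total f l' := by simp [total]

theorem total_perm (h : l.Perm l') : total f l = total f l' := (h.map f).sum_eq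

theorem total_congr (h : ∀ b ∈ l, f b = g b) : total f l = total g l := by
  rw [total, List.map_congr_left h, total]

theorem total_le (h : ∀ b ∈ l, f b ≤ g b) : total f l ≤ total g l := List.sum_le_sum h

theorem total_add : total (fun b => f b + g b) l = total f l + total g l := List.sum_map_add

theorem total_mul (c : ℕ) : total (fun b => c * f b) l = c * total f l :=
  List.sum_map_mul_left ..

theorem exists_lt_of_total_lt (h : total f l < total g l) : ∃ b ∈ l, f b < g b := by
  by_contra! hc
  exact absurd (total_le hc) (not_le.2 h)

end Total

/-- The Kronecker canonical pencil of a list of blocks. -/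
def kcf : (l : List Block) → Pencil (total Block.rows l) (total Block.cols l)
  | [] => 0
  | b :: l => dsum b.pencil (kcf l)

instance (f : Block → ℕ) : IsEmpty (Fin (total f [])) := inferInstanceAs (IsEmpty (Fin 0))

theorem kcf_cons (b : Block) (l : List Block) :
    LinPair.Iso (lin (kcf (b :: l))) ((lin b.pencil).sum (lin (kcf l))) :=
  lin_dsum_iso _ _

theorem kcf_singleton (b : Block) : LinPair.Iso (lin (kcf [b])) (lin b.pencil) :=
  (kcf_cons b []).trans (.sum_zero _ _)

theorem kcf_append (l l' : List Block) :
    LinPair.Iso (lin (kcf (l ++ l'))) ((lin (kcf l)).sum (lin (kcf l'))) := by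
  induction l with
  | nil => exact ((LinPair.Iso.sum_comm _ _).trans (.sum_zero _ _)).symm
  | cons b l ih =>
    exact (kcf_cons b (l ++ l')).trans (((LinPair.Iso.refl _).sum_congr ih).trans
      ((LinPair.Iso.sum_assoc _ _ _).symm.trans ((kcf_cons b l).symm.sum_congr (.refl _))))

theorem kcf_perm {l l' : List Block} (h : l.Perm l') :
    LinPair.Iso (lin (kcf l)) (lin (kcf l')) := by
  induction h with
  | nil => exact .refl _
  | cons b _ ih =>
    exact (kcf_cons _ _).trans (((LinPair.Iso.refl _).sum_congr ih).trans (kcf_cons _ _).symm)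
  | swap a b l =>
    exact (kcf_cons _ _).trans (((LinPair.Iso.refl _).sum_congr (kcf_cons _ _)).trans
      ((LinPair.Iso.sum_left_comm _ _ _).trans
        (((LinPair.Iso.refl _).sum_congr (kcf_cons _ _).symm).trans (kcf_cons _ _).symm)))
  | trans _ _ h1 h2 => exact h1.trans h2

theorem homDim_kcf {a b : ℕ} (X : Pencil a b) (l : List Block) :
    homDim X (lin (kcf l)) = total (fun c => homDim X (lin c.pencil)) l := by
  induction l with
  | nil => exact homDim_eq_zero_of_subsingleton _ _
  | cons c l ih => rw [(kcf_cons c l).homDim_eq, homDim_sum, ih, total_cons]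

theorem homDim_Lblk_kcf (k : ℕ) (l : List Block) :
    homDim (Lblk k) (lin (kcf l)) = total (Block.hL k) l := by
  rw [homDim_kcf, total_congr fun c _ => c.homDim_Lblk k]

theorem homDim_Eblk_kcf (k : ℕ) (μ : ℂ) (l : List Block) :
    homDim (Eblk k μ) (lin (kcf l)) = total (Block.hE k μ) l := by
  rw [homDim_kcf, total_congr fun c _ => c.homDim_Eblk k μ]

theorem tr_dsum {m n p q : ℕ} (P : Pencil m n) (Q : Pencil p q) :
    tr (dsum P Q) = dsum (tr P) (tr Q) := by
  simp [tr, dsum, fromBlocks_transpose]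

theorem lin_tr_Eblk_iso (k : ℕ) (μ : ℂ) : LinPair.Iso (lin (tr (Eblk k μ))) (lin (Eblk k μ)) := by
  rw [lin_iso_iff_exists_matrix]
  let R : Matrix (Fin k) (Fin k) ℂ := (Fin.revPerm : Equiv.Perm (Fin k)).toPEquiv.toMatrix
  have R_mul_R : R * R = 1 := by
    rw [← PEquiv.toMatrix_trans, ← Equiv.toPEquiv_trans]
    convert PEquiv.toMatrix_refl using 2
    ext i
    simp [Equiv.toPEquiv_apply]
  refine ⟨R, R, R, R, R_mul_R, R_mul_R, R_mul_R, R_mul_R, ?_, by simp [tr, Eblk]⟩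
  rw [PEquiv.toMatrix_toPEquiv_mul, PEquiv.mul_toMatrix_toPEquiv]
  ext i j
  have hi := i.2
  have hj := j.2
  simp only [tr, Eblk, Jmat, submatrix_apply, transpose_apply, of_apply, id,
    Fin.revPerm_apply, Fin.revPerm_symm, Fin.val_rev]
  congr 1
  · simp only [eq_iff_iff]
    omega
  · congr 1
    simp only [eq_iff_iff]
    omega

theorem lin_tr_pencil_iso (b : Block) :
    LinPair.Iso (lin (tr b.pencil)) (lin b.dual.pencil) := by
  cases b with
  | L m => exact .refl _
  | T m => exact .refl _
  | E k μ => exact lin_tr_Eblk_iso _ _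

theorem lin_tr_kcf_iso (l : List Block) :
    LinPair.Iso (lin (tr (kcf l))) (lin (kcf (l.map Block.dual))) := by
  induction l with
  | nil => exact .of_subsingleton (lin (tr (kcf []))) (lin (kcf []))
  | cons b l ih =>
    have tr_kcf_cons : tr (kcf (b :: l)) = dsum (tr b.pencil) (tr (kcf l)) := tr_dsum _ _
    rw [tr_kcf_cons]
    exact (lin_dsum_iso _ _).trans (((lin_tr_pencil_iso b).sum_congr ih).trans
      (kcf_cons _ _).symm)

section NoInfEigenvalue

variable {V U V' U' : Type*} [AddCommGroup V] [Module ℂ V] [AddCommGroup U] [Module ℂ U]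
  [AddCommGroup V'] [Module ℂ V'] [AddCommGroup U'] [Module ℂ U']

theorem homDim_Eblk_one (f : LinPair ℂ V U) (μ : ℂ) :
    homDim (Eblk 1 μ) f = Module.finrank ℂ (LinearMap.ker (f.1 - μ • f.2)) := by
  refine LinearEquiv.finrank_eq ((LinearEquiv.funUnique (Fin 1) ℂ V).ofSubmodules _ _ ?_)
  ext v
  rw [Submodule.mem_map_equiv, mem_ker_homMap_Eblk]
  simp [zext, sub_eq_zero]

/-- The rank of `f.2` is the generic rank of `f.1 - μ • f.2`, i.e. the pencil has no infinite
elementary divisors. The condition is stated through kernels, which are additive under direct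
sums. -/
def NoInfEigenvalue (f : LinPair ℂ V U) : Prop :=
  ∀ᶠ μ : ℂ in Filter.cofinite,
    Module.finrank ℂ (LinearMap.ker f.2) ≤ Module.finrank ℂ (LinearMap.ker (f.1 - μ • f.2))

theorem rank_add_finrank_ker_mulVecLin {m n K : Type*} [Fintype n] [Field K] (A : Matrix m n K) :
    A.rank + Module.finrank K (LinearMap.ker A.mulVecLin) = Fintype.card n := by
  rw [Matrix.rank, A.mulVecLin.finrank_range_add_finrank_ker, Module.finrank_fintype_fun_eq_card]

theorem lin_fst_sub_smul_snd {m n : ℕ} (P : Pencil m n) (μ : ℂ) :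
    (lin P).1 - μ • (lin P).2 = (P.1 - μ • P.2).mulVecLin := by
  ext
  simp [lin]

theorem noInfEigenvalue_lin_iff {m n : ℕ} {P : Pencil m n} :
    NoInfEigenvalue (lin P) ↔ ∀ᶠ μ : ℂ in Filter.cofinite, (P.1 - μ • P.2).rank ≤ P.2.rank := by
  refine Filter.eventually_congr (.of_forall fun μ => ?_)
  have h := rank_add_finrank_ker_mulVecLin P.2
  have hμ := rank_add_finrank_ker_mulVecLin (P.1 - μ • P.2)
  rw [lin_fst_sub_smul_snd]
  change Module.finrank ℂ (LinearMap.ker P.2.mulVecLin) ≤ _ ↔ _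
  omega

theorem LinPair.Iso.noInfEigenvalue {f : LinPair ℂ V U} {g : LinPair ℂ V' U'}
    (h : LinPair.Iso f g) (hf : NoInfEigenvalue f) : NoInfEigenvalue g := by
  have finrank_ker_snd : Module.finrank ℂ (LinearMap.ker f.2) =
      Module.finrank ℂ (LinearMap.ker g.2) := by
    obtain ⟨e, e', -, h2⟩ := h
    refine LinearEquiv.finrank_eq (e.ofSubmodules _ _ ?_)
    ext v
    rw [Submodule.mem_map_equiv]
    simp [← e'.map_eq_zero_iff, h2]
  unfold NoInfEigenvalue at *
  simpa only [← finrank_ker_snd, ← homDim_Eblk_one, ← h.homDim_eq] using hf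

theorem Block.eventually_finrank_ker_le (b : Block) :
    ∀ᶠ μ : ℂ in Filter.cofinite,
      Module.finrank ℂ (LinearMap.ker ((lin b.pencil).1 - μ • (lin b.pencil).2)) ≤
        Module.finrank ℂ (LinearMap.ker (lin b.pencil).2) := by
  simp only [← homDim_Eblk_one, Block.homDim_Eblk]
  cases b with
  | L m =>
    have rank_nullity := (lin (Lblk m)).2.finrank_range_add_finrank_ker
    have range_le := Submodule.finrank_le (LinearMap.range (lin (Lblk m)).2)
    simp only [Module.finrank_fin_fun] at rank_nullity range_le
    exact .of_forall fun _ => show 1 ≤ Module.finrank ℂ (LinearMap.ker (lin (Lblk m)).2) by omega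
  | T m => exact .of_forall fun _ => Nat.zero_le _
  | E k ν =>
    filter_upwards [(Set.finite_singleton ν).compl_mem_cofinite] with μ hμ
    exact (if_neg hμ).trans_le (Nat.zero_le _)

theorem NoInfEigenvalue.of_sum [FiniteDimensional ℂ V] {b : Block} {g : LinPair ℂ V U}
    (h : NoInfEigenvalue ((lin b.pencil).sum g)) : NoInfEigenvalue g := by
  filter_upwards [h, b.eventually_finrank_ker_le] with μ h1 h2
  rw [← homDim_Eblk_one, homDim_sum, homDim_Eblk_one, homDim_Eblk_one, LinPair.sum,
    LinearMap.ker_prodMap, finrank_submodule_prod] at h1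
  omega

end NoInfEigenvalue

section Retract

variable {V U V' U' : Type*}
  [AddCommGroup V] [Module ℂ V] [AddCommGroup U] [Module ℂ U]
  [AddCommGroup V'] [Module ℂ V'] [AddCommGroup U'] [Module ℂ U']

theorem exists_prod_ker_equiv_of_bijective (φ : V' →ₗ[ℂ] V) (ψ : V →ₗ[ℂ] V')
    (h : Function.Bijective (ψ ∘ₗ φ)) :
    ∃ e : (V' × LinearMap.ker ψ) ≃ₗ[ℂ] V, ∀ x, e x = φ x.1 + x.2 := by
  let F : (V' × LinearMap.ker ψ) →ₗ[ℂ] V := φ.coprod (Submodule.subtype _)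
  refine ⟨LinearEquiv.ofBijective F ⟨?_, fun v => ?_⟩, fun x => rfl⟩
  · refine (injective_iff_map_eq_zero F).2 ?_
    rintro ⟨x, y, hy⟩ (hxy : φ x + y = 0)
    obtain rfl : x = 0 := h.1 <| by
      simpa [LinearMap.mem_ker.1 hy] using congrArg ψ hxy
    simpa using hxy
  · obtain ⟨x, hx⟩ := h.2 (ψ v)
    refine ⟨(x, ⟨v - φ x, ?_⟩), add_sub_cancel (φ x) v⟩
    rw [LinearMap.mem_ker, map_sub, ← hx]
    exact sub_self _

/-- The pair `φ`, `φ'` is a morphism from `f` to `g`. -/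
def LinPair.IsHom (f : LinPair ℂ V U) (g : LinPair ℂ V' U') (φ : V →ₗ[ℂ] V') (φ' : U →ₗ[ℂ] U') :
    Prop :=
  (∀ x, g.1 (φ x) = φ' (f.1 x)) ∧ ∀ x, g.2 (φ x) = φ' (f.2 x)

theorem LinPair.IsHom.comp {V'' U'' : Type*} [AddCommGroup V''] [Module ℂ V'']
    [AddCommGroup U''] [Module ℂ U''] {f : LinPair ℂ V U} {g : LinPair ℂ V' U'}
    {k : LinPair ℂ V'' U''} {φ : V →ₗ[ℂ] V'} {φ' : U →ₗ[ℂ] U'} {ψ : V' →ₗ[ℂ] V''}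
    {ψ' : U' →ₗ[ℂ] U''} (hψ : LinPair.IsHom g k ψ ψ') (hφ : LinPair.IsHom f g φ φ') :
    LinPair.IsHom f k (ψ ∘ₗ φ) (ψ' ∘ₗ φ') :=
  ⟨fun x => (hψ.1 _).trans (congrArg ψ' (hφ.1 x)), fun x => (hψ.2 _).trans (congrArg ψ' (hφ.2 x))⟩

theorem LinPair.IsHom.comp_mem_ker_homMap {f : LinPair ℂ V U} {g : LinPair ℂ V' U'}
    {φ : V →ₗ[ℂ] V'} {φ' : U →ₗ[ℂ] U'} (hφ : LinPair.IsHom f g φ φ') {a b : ℕ} {X : Pencil a b}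
    {x : Fin a → V} (hx : x ∈ LinearMap.ker (homMap X f)) :
    (fun i => φ (x i)) ∈ LinearMap.ker (homMap X g) := by
  rw [LinearMap.mem_ker] at hx ⊢
  ext j
  have := congrArg φ' (congrFun hx j)
  simpa [homMap_apply, hφ.1, hφ.2] using this

theorem LinPair.Iso.exists_of_retract {f : LinPair ℂ V U} {b : LinPair ℂ V' U'}
    {φ : V' →ₗ[ℂ] V} {φ' : U' →ₗ[ℂ] U} {ψ : V →ₗ[ℂ] V'} {ψ' : U →ₗ[ℂ] U'}
    (hφ : LinPair.IsHom b f φ φ') (hψ : LinPair.IsHom f b ψ ψ')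
    (h : Function.Bijective (ψ ∘ₗ φ)) (h' : Function.Bijective (ψ' ∘ₗ φ')) :
    ∃ g : LinPair ℂ (LinearMap.ker ψ) (LinearMap.ker ψ'), LinPair.Iso (b.sum g) f := by
  obtain ⟨e, he⟩ := exists_prod_ker_equiv_of_bijective φ ψ h
  obtain ⟨e', he'⟩ := exists_prod_ker_equiv_of_bijective φ' ψ' h'
  refine ⟨(f.1.restrict fun x hx => ?_, f.2.restrict fun x hx => ?_), e, e',
    fun x => ?_, fun x => ?_⟩
  · rw [LinearMap.mem_ker] at hx ⊢
    rw [← hψ.1, hx, map_zero]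
  · rw [LinearMap.mem_ker] at hx ⊢
    rw [← hψ.2, hx, map_zero]
  · rw [he, he', map_add, hφ.1]
    rfl
  · rw [he, he', map_add, hφ.2]
    rfl

theorem exists_lin_iso_sum_of_retract {m n p q : ℕ} {P : Pencil m n} {b : Pencil p q}
    {φ : (Fin q → ℂ) →ₗ[ℂ] (Fin n → ℂ)} {φ' : (Fin p → ℂ) →ₗ[ℂ] (Fin m → ℂ)}
    {ψ : (Fin n → ℂ) →ₗ[ℂ] (Fin q → ℂ)} {ψ' : (Fin m → ℂ) →ₗ[ℂ] (Fin p → ℂ)}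
    (hφ : LinPair.IsHom (lin b) (lin P) φ φ') (hψ : LinPair.IsHom (lin P) (lin b) ψ ψ')
    (h : Function.Injective (ψ ∘ₗ φ)) (h' : Function.Injective (ψ' ∘ₗ φ')) :
    ∃ (m' n' : ℕ) (Q : Pencil m' n'), LinPair.Iso (lin P) ((lin b).sum (lin Q)) := by
  obtain ⟨g, hg⟩ := LinPair.Iso.exists_of_retract hφ hψ
    ⟨h, LinearMap.injective_iff_surjective.1 h⟩ ⟨h', LinearMap.injective_iff_surjective.1 h'⟩
  obtain ⟨Q, hQ⟩ := LinPair.exists_iso_lin g rfl rfl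
  exact ⟨_, _, Q, hg.symm.trans ((LinPair.Iso.refl _).sum_congr hQ)⟩

end Retract

section Chain

variable {V U : Type*} [AddCommGroup V] [Module ℂ V] [AddCommGroup U] [Module ℂ U]
  {f : LinPair ℂ V U} {ε : ℕ}

theorem exists_minimal_chain (h : ∃ k, homDim (Lblk k) f ≠ 0) [FiniteDimensional ℂ V] :
    ∃ (ε : ℕ) (x : Fin (ε + 1) → V), LinearMap.ker (homMap (Lblk ε) f) = ⊥ ∧
      x ∈ LinearMap.ker (homMap (Lblk (ε + 1)) f) ∧ x 0 ≠ 0 := by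
  classical
  obtain ⟨ε, hε⟩ : ∃ ε, Nat.find h = ε + 1 := by
    refine Nat.exists_eq_succ_of_ne_zero fun h0 => Nat.find_spec h ?_
    rw [h0]
    exact Module.finrank_zero_of_subsingleton
  have ker_eq_bot : LinearMap.ker (homMap (Lblk ε) f) = ⊥ :=
    Submodule.finrank_eq_zero.1 (not_not.1 (Nat.find_min h (hε ▸ ε.lt_succ_self)))
  have ker_ne_bot : LinearMap.ker (homMap (Lblk (ε + 1)) f) ≠ ⊥ := fun h0 =>
    Nat.find_spec h (by rw [hε, homDim, h0, finrank_bot])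
  obtain ⟨x, hx, x_ne⟩ := Submodule.exists_mem_ne_zero_of_ne_bot ker_ne_bot
  refine ⟨ε, x, ker_eq_bot, hx, fun x_zero => x_ne ?_⟩
  obtain ⟨-, hsucc⟩ := mem_ker_homMap_Lblk.1 hx
  have zext_tail (j : ℕ) : zext (fun i : Fin ε => x i.succ) j = zext x (j + 1) := by
    simp [zext, Fin.succ]
  have tail_mem : (fun i : Fin ε => x i.succ) ∈ LinearMap.ker (homMap (Lblk ε) f) := by
    refine mem_ker_homMap_Lblk.2 ⟨?_, fun j => ?_⟩
    · rw [zext_tail, hsucc, zext_of_lt x ε.succ_pos]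
      exact (congrArg f.2 x_zero).trans (map_zero _)
    · rw [zext_tail, zext_tail, hsucc]
  rw [ker_eq_bot, Submodule.mem_bot] at tail_mem
  exact funext (Fin.cases x_zero (congrFun tail_mem))

theorem shift_one_apply (y : Fin (ε + 1) → ℂ) (i : Fin ε) : shift ε 1 y i = y i.succ :=
  zext_fin y i.succ

theorem shift_zero_apply (y : Fin (ε + 1) → ℂ) (i : Fin ε) : shift ε 0 y i = y i.castSucc :=
  zext_fin y i.castSucc

theorem exists_isHom_of_chain {x : Fin (ε + 1) → V}
    (hx : x ∈ LinearMap.ker (homMap (Lblk (ε + 1)) f)) :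
    ∃ φ φ', LinPair.IsHom (lin (Lblk ε)) f φ φ' ∧ φ (Pi.single 0 1) = x 0 := by
  obtain ⟨hzero, hsucc⟩ := mem_ker_homMap_Lblk.1 hx
  have fst_zero : f.1 (x 0) = 0 := hzero
  have fst_succ (i : Fin ε) : f.1 (x i.succ) = f.2 (x i.castSucc) :=
    zext_fin x i.succ ▸ zext_fin x i.castSucc ▸ hsucc i
  have snd_last : f.2 (x (Fin.last ε)) = 0 := by
    rw [← zext_fin x (Fin.last ε)]
    exact (hsucc ε).symm.trans (by rw [zext_of_le x le_rfl, map_zero])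
  refine ⟨Fintype.linearCombination ℂ x,
    Fintype.linearCombination ℂ fun i : Fin ε => f.2 (x i.castSucc), ⟨fun y => ?_, fun y => ?_⟩, ?_⟩
  · rw [lin_fst_apply, Lblk_fst_mulVec]
    simp [Fintype.linearCombination_apply, Fin.sum_univ_succ (n := ε), fst_zero, fst_succ,
      shift_one_apply]
  · rw [lin_snd_apply, Lblk_snd_mulVec]
    simp [Fintype.linearCombination_apply, Fin.sum_univ_castSucc (n := ε), snd_last,
      shift_zero_apply]
  · simp [Fintype.linearCombination_apply_single]

/-- The chains of length `ε` for `f` that start at a vector `x₀ ∈ ker f.1` are the preimages of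
`(x₀, 0)` under this map. -/
def chainMap (f : LinPair ℂ V U) (ε : ℕ) : (Fin ε → V) →ₗ[ℂ] V × (Fin ε → U) where
  toFun v := (zext v 0, fun j => f.1 (zext v (j + 1)) - f.2 (zext v j))
  map_add' v w := by
    ext
    · simp [zext_add]
    · simp [zext_add, add_sub_add_comm]
  map_smul' c v := by
    ext
    · simp [zext_smul]
    · simp [zext_smul, smul_sub]

theorem notMem_range_chainMap (hker : LinearMap.ker (homMap (Lblk ε) f) = ⊥) {x₀ : V}
    (hx₀ : x₀ ≠ 0) (hfst : f.1 x₀ = 0) : (x₀, 0) ∉ LinearMap.range (chainMap f ε) := by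
  rintro ⟨v, hv⟩
  obtain ⟨v_zero : zext v 0 = x₀, v_succ⟩ := Prod.ext_iff.1 hv
  have v_mem : v ∈ LinearMap.ker (homMap (Lblk ε) f) := by
    refine mem_ker_homMap_Lblk.2 ⟨v_zero ▸ hfst, fun j => ?_⟩
    by_cases hj : j < ε
    · exact sub_eq_zero.1 (congrFun v_succ ⟨j, hj⟩)
    · rw [zext_of_le v (not_lt.1 hj), zext_of_le v (by omega), map_zero, map_zero]
  rw [hker, Submodule.mem_bot] at v_mem
  exact hx₀ (v_zero.symm.trans (by simp [v_mem, zext]))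

theorem chainMap_single_zero (h : 0 < ε) (v : V) :
    chainMap f ε (Pi.single ⟨0, h⟩ v) = (v, 0) - (0, Pi.single ⟨0, h⟩ (f.2 v)) := by
  ext
  · simp [chainMap, zext_single]
  · simp [chainMap, zext_single, Pi.single_apply, Fin.ext_iff, apply_ite f.2]

theorem chainMap_single_succ {j : ℕ} (h : j + 1 < ε) (v : V) :
    chainMap f ε (Pi.single ⟨j + 1, h⟩ v) =
      (0, Pi.single ⟨j, by omega⟩ (f.1 v)) - (0, Pi.single ⟨j + 1, h⟩ (f.2 v)) := by
  ext
  · simp [chainMap, zext_single]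
  · simp [chainMap, zext_single, Pi.single_apply, Fin.ext_iff, apply_ite f.2, apply_ite f.1]

theorem exists_isHom_Lblk (hker : LinearMap.ker (homMap (Lblk ε) f) = ⊥) {x₀ : V}
    (hx₀ : x₀ ≠ 0) (hfst : f.1 x₀ = 0) :
    ∃ ψ ψ', LinPair.IsHom f (lin (Lblk ε)) ψ ψ' ∧ ψ x₀ ≠ 0 := by
  obtain ⟨Ω, hΩ, hrange⟩ :=
    Submodule.exists_le_ker_of_notMem (notMem_range_chainMap hker hx₀ hfst)
  let w (j : Fin ε) : U →ₗ[ℂ] ℂ := Ω ∘ₗ .inr ℂ V (Fin ε → U) ∘ₗ .single ℂ (fun _ => U) j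
  let ψ : V →ₗ[ℂ] (Fin (ε + 1) → ℂ) :=
    .pi (Fin.cons (Ω ∘ₗ .inl ℂ V (Fin ε → U)) fun j => w j ∘ₗ f.1 : Fin (ε + 1) → V →ₗ[ℂ] ℂ)
  refine ⟨ψ, .pi w, ⟨fun v => ?_, fun v => ?_⟩, fun h => hΩ (congrFun h 0)⟩
  · rw [lin_fst_apply, Lblk_fst_mulVec]
    ext j
    exact shift_one_apply _ j
  · rw [lin_snd_apply, Lblk_snd_mulVec]
    ext ⟨j, hj⟩
    rw [shift_zero_apply]
    have Ω_chainMap : Ω (chainMap f ε (Pi.single ⟨j, hj⟩ v)) = 0 :=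
      hrange (LinearMap.mem_range_self _ _)
    cases j with
    | zero =>
      rw [chainMap_single_zero, map_sub, sub_eq_zero] at Ω_chainMap
      exact Ω_chainMap
    | succ j =>
      rw [chainMap_single_succ, map_sub, sub_eq_zero] at Ω_chainMap
      exact Ω_chainMap

theorem single_mem_ker_homMap_Lblk (m : ℕ) :
    (fun i => Pi.single i 1) ∈ LinearMap.ker (homMap (Lblk (m + 1)) (lin (Lblk m))) := by
  have zext_basis (j : ℕ) : zext (fun i : Fin (m + 1) => (Pi.single i 1 : Fin (m + 1) → ℂ)) j =
      fun t => if t.val = j then 1 else 0 := by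
    ext t
    by_cases hj : j < m + 1
    · simp [zext_of_lt _ hj, Pi.single_apply, Fin.ext_iff]
    · rw [zext_of_le _ (not_lt.1 hj), if_neg (by omega), Pi.zero_apply]
  refine mem_ker_homMap_Lblk.2 ⟨?_, fun j => ?_⟩
  · ext t
    rw [zext_basis, lin_fst_apply, Lblk_fst_mulVec, shift_one_apply]
    simp
  · ext t
    rw [zext_basis, zext_basis, lin_fst_apply, Lblk_fst_mulVec, shift_one_apply, lin_snd_apply,
      Lblk_snd_mulVec, shift_zero_apply]
    simp

theorem LinPair.IsHom.eq_smul_of_Lblk {m : ℕ} {θ : (Fin (m + 1) → ℂ) →ₗ[ℂ] (Fin (m + 1) → ℂ)}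
    {θ' : (Fin m → ℂ) →ₗ[ℂ] (Fin m → ℂ)} (h : LinPair.IsHom (lin (Lblk m)) (lin (Lblk m)) θ θ') :
    ∃ c : ℂ, (∀ x, θ x = c • x) ∧ ∀ y, θ' y = c • y := by
  let e : LinearMap.ker (homMap (Lblk (m + 1)) (lin (Lblk m))) := ⟨_, single_mem_ker_homMap_Lblk m⟩
  have e_ne : e ≠ 0 := fun h0 => by
    simpa [e] using congrFun (congrFun (congrArg Subtype.val h0) 0) 0
  have hdim : homDim (Lblk (m + 1)) (lin (Lblk m)) = 1 := by
    rw [homDim_Lblk_Lblk, add_tsub_cancel_left]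
  obtain ⟨c, hc⟩ := (finrank_eq_one_iff_of_nonzero' e e_ne).1 hdim
    ⟨_, h.comp_mem_ker_homMap (single_mem_ker_homMap_Lblk m)⟩
  have θ_eq : θ = c • LinearMap.id := by
    refine (Pi.basisFun ℂ (Fin (m + 1))).ext fun i => ?_
    simpa [e] using (congrFun (congrArg Subtype.val hc) i).symm
  refine ⟨c, LinearMap.congr_fun θ_eq, fun y => ?_⟩
  obtain ⟨x, rfl⟩ : ∃ x, (Lblk m).2 *ᵥ x = y := by
    refine ⟨Fin.snoc y 0, ?_⟩
    ext i
    rw [Lblk_snd_mulVec, shift_zero_apply, Fin.snoc_castSucc]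
  refine (h.2 x).symm.trans ?_
  rw [θ_eq]
  exact map_smul (lin (Lblk m)).2 c x

theorem exists_split_Lblk {m n : ℕ} {P : Pencil m n} (h : ∃ k, homDim (Lblk k) (lin P) ≠ 0) :
    ∃ (ε m' n' : ℕ) (Q : Pencil m' n'), LinPair.Iso (lin P) ((lin (Lblk ε)).sum (lin Q)) := by
  obtain ⟨ε, x, hker, hx, x_zero_ne⟩ := exists_minimal_chain h
  obtain ⟨φ, φ', hφ, φ_single⟩ := exists_isHom_of_chain hx
  obtain ⟨ψ, ψ', hψ, ψ_ne⟩ := exists_isHom_Lblk hker x_zero_ne (mem_ker_homMap_Lblk.1 hx).1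
  obtain ⟨c, hc, hc'⟩ := (hψ.comp hφ).eq_smul_of_Lblk
  have c_ne : c ≠ 0 := by
    rintro rfl
    rw [← φ_single] at ψ_ne
    exact ψ_ne ((hc _).trans (zero_smul _ _))
  exact ⟨ε, exists_lin_iso_sum_of_retract hφ hψ
    (fun x y hxy => smul_right_injective _ c_ne ((hc x).symm.trans (hxy.trans (hc y))))
    fun x y hxy => smul_right_injective _ c_ne ((hc' x).symm.trans (hxy.trans (hc' y)))⟩

end Chain

section JordanBlock

variable {V : Type*} [AddCommGroup V] [Module ℂ V] {κ : ℕ}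

theorem exists_pow_apply_notMem_range_pow_succ [FiniteDimensional ℂ V] {N : Module.End ℂ V}
    (hN : LinearMap.ker N ≠ ⊥) :
    ∃ (κ : ℕ) (x : V), (N ^ (κ + 1)) x = 0 ∧ (N ^ κ) x ∉ LinearMap.range (N ^ (κ + 1)) := by
  classical
  have stabilizes : ∃ k, ∀ y, (N ^ (k + 1)) y = 0 → (N ^ k) y = 0 := by
    refine ⟨Module.finrank ℂ V, fun y hy => ?_⟩
    rwa [← LinearMap.mem_ker,
      ← Module.End.ker_pow_eq_ker_pow_finrank_of_le (m := _ + 1) (Nat.le_succ _)]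
  obtain ⟨κ, hκ⟩ : ∃ κ, Nat.find stabilizes = κ + 1 := by
    refine Nat.exists_eq_succ_of_ne_zero fun h0 => hN (LinearMap.ker_eq_bot'.2 fun y hy => ?_)
    simpa [h0, hy] using Nat.find_spec stabilizes y
  have κ_succ_stable := hκ ▸ Nat.find_spec stabilizes
  obtain ⟨x, hx, hx_ne⟩ : ∃ x, (N ^ (κ + 1)) x = 0 ∧ (N ^ κ) x ≠ 0 := by
    simpa using Nat.find_min stabilizes (hκ ▸ κ.lt_succ_self)
  refine ⟨κ, x, hx, ?_⟩
  rintro ⟨y, hy⟩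
  refine hx_ne (hy ▸ κ_succ_stable y ?_)
  rw [pow_succ', Module.End.mul_apply, hy, ← Module.End.mul_apply, ← pow_succ', hx]

theorem injective_of_commute_shift {θ : (Fin (κ + 1) → ℂ) →ₗ[ℂ] (Fin (κ + 1) → ℂ)}
    (hθ : ∀ y, θ (shift (κ + 1) 1 y) = shift (κ + 1) 1 (θ y)) (h0 : θ (Pi.single 0 1) ≠ 0) :
    Function.Injective θ := by
  have eq_zero_of_tail_zero (y : Fin (κ + 1) → ℂ) (hy : ∀ i : Fin κ, y i.succ = 0)
      (θ_y : θ y = 0) : y = 0 := by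
    have y_eq : y = y 0 • Pi.single 0 1 := by
      ext i
      cases i using Fin.cases <;> simp [hy]
    rw [y_eq, map_smul, smul_eq_zero_iff_left h0] at θ_y
    rw [y_eq, θ_y, zero_smul]
  have eq_zero_of_zero_above (s : ℕ) : ∀ y, (∀ i, s < i → zext y i = 0) → θ y = 0 → y = 0 := by
    induction s with
    | zero =>
      exact fun y hy => eq_zero_of_tail_zero y fun i => zext_fin y i.succ ▸ hy _ i.succ_pos
    | succ s ih =>
      refine fun y hy θ_y => eq_zero_of_tail_zero y (fun i => ?_) θ_y
      have shift_y : shift (κ + 1) 1 y = 0 := by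
        refine ih _ (fun i hi => ?_) (by rw [hθ, θ_y, map_zero])
        rw [zext_shift, hy _ (by omega), ite_self]
      exact (zext_fin y i.succ).symm.trans (congrFun shift_y i.castSucc)
  exact (injective_iff_map_eq_zero θ).2 fun y =>
    eq_zero_of_zero_above κ y fun i hi => zext_of_le y hi

theorem exists_linearMap_shift_of_pow_eq_zero {N : Module.End ℂ V} {x : V}
    (hx : (N ^ (κ + 1)) x = 0) :
    ∃ φ : (Fin (κ + 1) → ℂ) →ₗ[ℂ] V, (∀ y, N (φ y) = φ (shift (κ + 1) 1 y)) ∧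
      φ (Pi.single 0 1) = (N ^ κ) x := by
  refine ⟨Fintype.linearCombination ℂ fun i => (N ^ (κ - i.val)) x, fun y => ?_, ?_⟩
  · simp only [Fintype.linearCombination_apply, map_sum, map_smul, ← Module.End.mul_apply,
      ← pow_succ']
    rw [Fin.sum_univ_succ, Fin.sum_univ_castSucc (n := κ)]
    have shift_last : shift (κ + 1) 1 y (Fin.last κ) = 0 := zext_of_le y le_rfl
    have shift_castSucc (i : Fin κ) : shift (κ + 1) 1 y i.castSucc = y i.succ :=
      zext_fin y i.succ
    have sub_succ_add_one (i : Fin κ) : κ - i.succ.val + 1 = κ - i.castSucc.val := by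
      simp
      omega
    simp only [Fin.val_zero, Nat.sub_zero, hx, smul_zero, zero_add, shift_last, zero_smul, add_zero,
      shift_castSucc, sub_succ_add_one]
  · simp [Fintype.linearCombination_apply_single]

theorem exists_linearMap_shift_of_notMem_range {N : Module.End ℂ V} {v : V}
    (hv : v ∉ LinearMap.range (N ^ (κ + 1))) :
    ∃ ψ : V →ₗ[ℂ] (Fin (κ + 1) → ℂ), (∀ y, ψ (N y) = shift (κ + 1) 1 (ψ y)) ∧ ψ v ≠ 0 := by
  obtain ⟨l, l_ne, hl⟩ := Submodule.exists_le_ker_of_notMem hv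
  refine ⟨.pi fun j => l ∘ₗ N ^ j.val, fun y => ?_, fun h => l_ne (congrFun h 0)⟩
  ext j
  simp only [shift_apply, zext, LinearMap.pi_apply, LinearMap.comp_apply, ← Module.End.mul_apply,
    ← pow_succ]
  split_ifs with hj
  · rfl
  · have hj : j.val = κ := by omega
    rw [hj]
    exact hl (LinearMap.mem_range_self _ y)

theorem exists_split_Eblk {n : ℕ} (hn : n ≠ 0) (A : Matrix (Fin n) (Fin n) ℂ) :
    ∃ (k : ℕ) (μ : ℂ) (m' n' : ℕ) (Q : Pencil m' n'),
      LinPair.Iso (lin (A, (1 : Matrix (Fin n) (Fin n) ℂ)))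
        ((lin (Eblk (k + 1) μ)).sum (lin Q)) := by
  have : NeZero n := ⟨hn⟩
  obtain ⟨μ, hμ⟩ := Module.End.exists_eigenvalue A.toLin'
  set N : Module.End ℂ (Fin n → ℂ) := A.toLin' - algebraMap ℂ _ μ with N_def
  have A_mulVec (y : Fin n → ℂ) : A *ᵥ y = μ • y + N y := by
    simp [N_def, Module.algebraMap_end_apply]
  obtain ⟨κ, x, hx, hx_range⟩ := exists_pow_apply_notMem_range_pow_succ (N := N) <| by
    rwa [Module.End.hasEigenvalue_iff, Module.End.eigenspace_def] at hμ
  obtain ⟨φ, hφ, φ_single⟩ := exists_linearMap_shift_of_pow_eq_zero hx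
  obtain ⟨ψ, hψ, ψ_ne⟩ := exists_linearMap_shift_of_notMem_range hx_range
  have isHom_φ : LinPair.IsHom (lin (Eblk (κ + 1) μ))
      (lin (A, (1 : Matrix (Fin n) (Fin n) ℂ))) φ φ := by
    refine ⟨fun y => ?_, fun y => ?_⟩
    · simp only [lin_fst_apply, A_mulVec, Eblk_fst_mulVec, map_add, map_smul, hφ]
    · simp only [lin_snd_apply, one_mulVec, Eblk_snd_mulVec]
  have isHom_ψ : LinPair.IsHom (lin (A, (1 : Matrix (Fin n) (Fin n) ℂ)))
      (lin (Eblk (κ + 1) μ)) ψ ψ := by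
    refine ⟨fun y => ?_, fun y => ?_⟩
    · simp only [lin_fst_apply, A_mulVec, Eblk_fst_mulVec, map_add, map_smul, hψ]
    · simp only [lin_snd_apply, one_mulVec, Eblk_snd_mulVec]
  have injective_comp : Function.Injective (ψ ∘ₗ φ) :=
    injective_of_commute_shift (fun y => by simp only [LinearMap.comp_apply, ← hψ, hφ])
      (by rwa [LinearMap.comp_apply, φ_single])
  exact ⟨κ, μ, exists_lin_iso_sum_of_retract isHom_φ isHom_ψ injective_comp injective_comp⟩

end JordanBlock

theorem rank_eq_iff_isUnit {n : ℕ} {A : Matrix (Fin n) (Fin n) ℂ} : A.rank = n ↔ IsUnit A := by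
  rw [← linearIndependent_cols_iff_isUnit, linearIndependent_iff_card_eq_finrank_span,
    Fintype.card_fin, rank_eq_finrank_span_cols, eq_comm]
  rfl

section Polynomial

open Polynomial

variable {m n : ℕ}

/-- The pencil as a matrix `P.1 - X P.2` of polynomials. -/
def toPolyMatrix (P : Pencil m n) : Matrix (Fin m) (Fin n) ℂ[X] :=
  P.1.map C - (X : ℂ[X]) • P.2.map C

theorem eval_det_toPolyMatrix (P : Pencil n n) (μ : ℂ) :
    (toPolyMatrix P).det.eval μ = (P.1 - μ • P.2).det := by
  rw [← coe_evalRingHom, RingHom.map_det]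
  congr 1
  ext i j
  simp [toPolyMatrix, mul_comm μ]

theorem eventually_isUnit_of_det_toPolyMatrix_ne_zero {P : Pencil n n}
    (h : (toPolyMatrix P).det ≠ 0) : ∀ᶠ μ : ℂ in Filter.cofinite, IsUnit (P.1 - μ • P.2) := by
  filter_upwards [(finite_setOfPred_isRoot h).compl_mem_cofinite] with μ hμ
  rw [isUnit_iff_isUnit_det, isUnit_iff_ne_zero, ← eval_det_toPolyMatrix]
  exact hμ

theorem mulVec_coeff_of_toPolyMatrix_mulVec_eq_zero {P : Pencil m n} {v : Fin n → ℂ[X]}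
    (hv : toPolyMatrix P *ᵥ v = 0) :
    (P.1 *ᵥ fun j => (v j).coeff 0) = 0 ∧
      ∀ t, (P.1 *ᵥ fun j => (v j).coeff (t + 1)) = P.2 *ᵥ fun j => (v j).coeff t := by
  have row (i : Fin m) : ∑ j, C (P.1 i j) * v j = X * ∑ j, C (P.2 i j) * v j := by
    simpa [toPolyMatrix, mulVec, dotProduct, sub_mul, mul_assoc, mul_left_comm, Finset.mul_sum,
      sub_eq_zero] using congrFun hv i
  constructor
  · ext i
    simpa [finsetSum_coeff, mulVec, dotProduct] using congrArg (coeff · 0) (row i)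
  · intro t
    ext i
    simpa [finsetSum_coeff, mulVec, dotProduct, coeff_X_mul] using
      congrArg (coeff · (t + 1)) (row i)

theorem exists_homDim_Lblk_ne_zero_of_det_eq_zero {P : Pencil n n}
    (h : (toPolyMatrix P).det = 0) : ∃ k, homDim (Lblk k) (lin P) ≠ 0 := by
  obtain ⟨v, v_ne, hv⟩ := Matrix.exists_mulVec_eq_zero_iff.2 h
  obtain ⟨fst_zero, fst_succ⟩ := mulVec_coeff_of_toPolyMatrix_mulVec_eq_zero hv
  let d := Finset.univ.sup fun j => (v j).natDegree
  have coeff_eq_zero (t : ℕ) (ht : d < t) : (fun j => (v j).coeff t) = 0 := by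
    ext j
    exact coeff_eq_zero_of_natDegree_lt
      ((Finset.le_sup (f := fun j => (v j).natDegree) (Finset.mem_univ j)).trans_lt ht)
  let x (t : Fin (d + 1)) (j : Fin n) : ℂ := (v j).coeff t
  have zext_x (t : ℕ) : zext x t = fun j => (v j).coeff t := by
    by_cases ht : t < d + 1
    · exact zext_of_lt x ht
    · rw [zext_of_le x (not_lt.1 ht), coeff_eq_zero t (by omega)]
  have x_mem : x ∈ LinearMap.ker (homMap (Lblk (d + 1)) (lin P)) := by
    simp only [mem_ker_homMap_Lblk, zext_x]
    exact ⟨fst_zero, fst_succ⟩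
  refine ⟨d + 1, fun hdim => v_ne ?_⟩
  rw [Submodule.finrank_eq_zero.1 hdim, Submodule.mem_bot] at x_mem
  ext j t
  simpa [x_mem, zext] using (congrFun (zext_x t) j).symm

end Polynomial

section Existence

variable {m n : ℕ} {P : Pencil m n}

theorem eq_of_homDim_Lblk_eq_zero (hR : ∀ k, homDim (Lblk k) (lin P) = 0)
    (hL : ∀ k, homDim (Lblk k) (lin (tr P)) = 0) : m = n := by
  have h1 := finrank_mul_le_homDim_add (Lblk (m + 1)) (lin P)
  have h2 := finrank_mul_le_homDim_add (Lblk (n + 1)) (lin (tr P))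
  rw [hR, Module.finrank_fin_fun, Module.finrank_fin_fun] at h1
  rw [hL, Module.finrank_fin_fun, Module.finrank_fin_fun] at h2
  apply le_antisymm <;> nlinarith

theorem isUnit_snd_of_noInfEigenvalue {P : Pencil n n} (hP : NoInfEigenvalue (lin P))
    (h : ∀ k, homDim (Lblk k) (lin P) = 0) : IsUnit P.2 := by
  have det_ne_zero : (toPolyMatrix P).det ≠ 0 := fun h0 =>
    let ⟨k, hk⟩ := exists_homDim_Lblk_ne_zero_of_det_eq_zero h0
    hk (h k)
  obtain ⟨μ, rank_le, isUnit_sub⟩ := ((noInfEigenvalue_lin_iff.1 hP).and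
    (eventually_isUnit_of_det_toPolyMatrix_ne_zero det_ne_zero)).exists
  exact rank_eq_iff_isUnit.1 ((rank_le_width _).antisymm
    ((rank_eq_iff_isUnit.2 isUnit_sub).symm.trans_le rank_le))

theorem exists_block_summand (hmn : m + n ≠ 0) (hP : NoInfEigenvalue (lin P)) :
    ∃ (b : Block) (m' n' : ℕ) (Q : Pencil m' n'),
      LinPair.Iso (lin P) ((lin b.pencil).sum (lin Q)) := by
  by_cases hR : ∃ k, homDim (Lblk k) (lin P) ≠ 0
  · obtain ⟨ε, m', n', Q, h⟩ := exists_split_Lblk hR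
    exact ⟨.L ε, m', n', Q, h⟩
  by_cases hL : ∃ k, homDim (Lblk k) (lin (tr P)) ≠ 0
  · obtain ⟨ε, m', n', Q, h⟩ := exists_split_Lblk hL
    have h_tr := (h.trans (lin_dsum_iso _ _).symm).tr
    rw [tr_dsum] at h_tr
    exact ⟨.T ε, n', m', tr Q, h_tr.trans (lin_dsum_iso _ _)⟩
  push Not at hR hL
  obtain rfl := eq_of_homDim_Lblk_eq_zero hR hL
  have isUnit_snd := isUnit_snd_of_noInfEigenvalue hP hR
  obtain ⟨k, μ, m', n', Q, h⟩ := exists_split_Eblk (by omega) (P.2⁻¹ * P.1)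
  refine ⟨.E k μ, m', n', Q, .trans ?_ h⟩
  refine strictEquiv_iff_lin_iso.1 ⟨P.2, 1, isUnit_snd, isUnit_one, mul_one _, ?_⟩
  rw [mul_one, nonsing_inv_mul _ ((isUnit_iff_isUnit_det _).1 isUnit_snd)]

theorem exists_iso_kcf (hP : NoInfEigenvalue (lin P)) : ∃ l, LinPair.Iso (lin P) (lin (kcf l)) := by
  induction hs : m + n using Nat.strong_induction_on generalizing m n with
  | _ s ih =>
  subst hs
  by_cases hmn : m + n = 0
  · obtain ⟨rfl, rfl⟩ := Nat.add_eq_zero_iff.1 hmn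
    exact ⟨[], .of_subsingleton (lin P) (lin (0 : Pencil 0 0))⟩
  · obtain ⟨b, m', n', Q, h⟩ := exists_block_summand hmn hP
    obtain ⟨e, e', -⟩ := id h
    have cols_eq := e.finrank_eq
    have rows_eq := e'.finrank_eq
    simp only [Module.finrank_prod, Module.finrank_fin_fun] at cols_eq rows_eq
    have size_pos : 0 < b.rows + b.cols := by cases b <;> simp [Block.rows, Block.cols]
    obtain ⟨l, hl⟩ := ih (m' + n') (by omega) (h.noInfEigenvalue hP).of_sum rfl
    exact ⟨b :: l, h.trans (((LinPair.Iso.refl _).sum_congr hl).trans (kcf_cons _ _).symm)⟩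

end Existence

/-! ### Skew-symmetric canonical forms -/

section Alternating

variable {K V : Type*} [Field K] [NeZero (2 : K)] [AddCommGroup V] [Module K V]
  [FiniteDimensional K V] {B : V →ₗ[K] V →ₗ[K] K}

theorem even_finrank_of_isAlt (hB : B.IsAlt) (hnd : B.Nondegenerate) :
    Even (Module.finrank K V) := by
  let b := Module.finBasis K V
  let M := LinearMap.toMatrix₂ b b B
  have hM : Mᵀ = -M := by
    ext i j
    simp [M, LinearMap.toMatrix₂_apply, ← hB.neg (b i) (b j)]
  have hdet : M.det ≠ 0 := (LinearMap.nondegenerate_iff_det_ne_zero b).1 hnd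
  by_contra hodd
  have det_eq_neg : M.det = -M.det := by
    conv_lhs => rw [← det_transpose, hM, det_neg, Fintype.card_fin,
      (Nat.not_even_iff_odd.1 hodd).neg_one_pow, neg_one_mul]
  have : 2 * M.det = 0 := by linear_combination det_eq_neg
  exact (mul_ne_zero two_ne_zero hdet) this

theorem even_finrank_add_finrank_ker (hB : B.IsAlt) :
    Even (Module.finrank K V + Module.finrank K (LinearMap.ker B)) := by
  obtain ⟨W, hW⟩ := Submodule.exists_isCompl (LinearMap.ker B)
  have disjoint_orthogonal : Disjoint W (W.orthogonalBilin B) := by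
    refine Submodule.disjoint_def.2 fun x hxW hx => ?_
    refine Submodule.disjoint_def.1 hW.disjoint x (LinearMap.ext fun y => ?_) hxW
    obtain ⟨u, hu, v, hv, rfl⟩ := Submodule.mem_sup.1
      (hW.sup_eq_top ▸ Submodule.mem_top : y ∈ LinearMap.ker B ⊔ W)
    rw [map_add, hB.isRefl u x (by rw [LinearMap.mem_ker.1 hu, LinearMap.zero_apply]),
      hB.isRefl v x (hx v hv), add_zero, LinearMap.zero_apply]
  have even_W : Even (Module.finrank K W) :=
    even_finrank_of_isAlt (B := B.domRestrict₁₂ W W) (fun x => hB x)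
      (LinearMap.nondegenerate_restrict_of_disjoint_orthogonal hB.isRefl disjoint_orthogonal)
  rw [← Submodule.finrank_add_eq_of_isCompl hW, add_right_comm]
  exact (Even.add_self _).add even_W

end Alternating

theorem even_homDim_add {n k : ℕ} {P : Pencil n n} (hP : IsSkew P) {X : Pencil k k}
    (h1 : ∀ i j, X.1 i j.rev = X.1 j i.rev) (h2 : ∀ i j, X.2 i j.rev = X.2 j i.rev) :
    Even (homDim X (lin P) + k * n) := by
  let B : (Fin k → Fin n → ℂ) →ₗ[ℂ] (Fin k → Fin n → ℂ) →ₗ[ℂ] ℂ :=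
    LinearMap.mk₂ ℂ (fun x y => ∑ j, homMap X (lin P) x j.rev ⬝ᵥ y j)
      (fun x x' y => by simp [Finset.sum_add_distrib, add_dotProduct])
      (fun c x y => by simp [Finset.mul_sum])
      (fun x y y' => by simp [Finset.sum_add_distrib, dotProduct_add])
      (fun c x y => by simp [Finset.mul_sum])
  have skew {A : Matrix (Fin n) (Fin n) ℂ} (hA : Aᵀ = -A) (u v : Fin n → ℂ) :
      (A *ᵥ u) ⬝ᵥ v = -((A *ᵥ v) ⬝ᵥ u) := by
    rw [dotProduct_comm, dotProduct_mulVec, ← mulVec_transpose, hA, neg_mulVec, neg_dotProduct]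
  have B_apply (x y) : B x y = ∑ j, ∑ i, (X.2 i j.rev * ((P.1 *ᵥ x i) ⬝ᵥ y j) -
      X.1 i j.rev * ((P.2 *ᵥ x i) ⬝ᵥ y j)) := by
    simp [B, homMap_apply, sum_dotProduct, sub_dotProduct]
  have alt : B.IsAlt := by
    refine LinearMap.isAlt_iff_eq_neg_flip.2 (LinearMap.ext₂ fun x y => ?_)
    rw [LinearMap.neg_apply, LinearMap.neg_apply, LinearMap.flip_apply, B_apply, B_apply,
      Finset.sum_comm, ← Finset.sum_neg_distrib]
    refine Finset.sum_congr rfl fun i _ => ?_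
    rw [← Finset.sum_neg_distrib]
    refine Finset.sum_congr rfl fun j _ => ?_
    rw [h1, h2, skew hP.1, skew hP.2]
    ring
  have ker_eq : LinearMap.ker B = LinearMap.ker (homMap X (lin P)) := by
    ext x
    refine ⟨fun hx => funext fun j => dotProduct_eq_zero _ fun v => ?_, fun hx => ?_⟩
    · have := LinearMap.congr_fun hx (Pi.single j.rev v)
      rw [LinearMap.mk₂_apply, Finset.sum_eq_single_of_mem j.rev (Finset.mem_univ _)
        fun i _ hi => by rw [Pi.single_eq_of_ne hi, dotProduct_zero]] at this
      simpa using this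
    · ext y
      simp [B, LinearMap.mem_ker.1 hx]
  have := even_finrank_add_finrank_ker alt
  rw [ker_eq, add_comm] at this
  simpa [homDim, Module.finrank_pi_fintype] using this

theorem even_homDim_Eblk_add {n : ℕ} {P : Pencil n n} (hP : IsSkew P) (k : ℕ) (μ : ℂ) :
    Even (homDim (Eblk k μ) (lin P) + k * n) := by
  refine even_homDim_add hP (fun i j => ?_) fun i j => ?_
  · have h0 : (j.rev : ℕ) = i ↔ (i.rev : ℕ) = j := by rw [Fin.val_rev, Fin.val_rev]; omega
    have h1 : (j.rev : ℕ) = i + 1 ↔ (i.rev : ℕ) = j + 1 := by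
      rw [Fin.val_rev, Fin.val_rev]; omega
    simp only [Eblk, Jmat, of_apply, h0, h1]
  · simp only [Eblk, one_apply, eq_comm (a := i), Fin.rev_eq_iff]

namespace Block

instance : DecidableEq Block := Classical.decEq _

@[simp] theorem dual_dual (b : Block) : b.dual.dual = b := by cases b <;> rfl

theorem count_map_dual (l : List Block) (b : Block) :
    (l.map dual).count b = l.count b.dual := by
  rw [← List.count_map_of_injective l dual (Function.LeftInverse.injective dual_dual) b.dual,
    dual_dual]

theorem total_hL_one (l : List Block) : total (hL 1) l = l.count (L 0) := by
  induction l with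
  | nil => rfl
  | cons b l ih =>
    rw [total_cons, ih, List.count_cons, add_comm]
    rcases b with (_ | m) | m | ⟨j, ν⟩ <;> simp [hL]

theorem total_hL_add (l : List Block) (k : ℕ) :
    total (hL k) l + total (hL (k + 2)) l =
      2 * total (hL (k + 1)) l + l.count (L (k + 1)) := by
  induction l with
  | nil => rfl
  | cons b l ih =>
    have step : b.hL k + b.hL (k + 2) = 2 * b.hL (k + 1) + if b = L (k + 1) then 1 else 0 := by
      cases b with
      | L m => simp only [hL, L.injEq]; split_ifs <;> omega
      | T m | E j ν => simp [hL]
    simp only [total_cons, List.count_cons, beq_iff_eq]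
    omega

theorem total_hE_add (l : List Block) (k : ℕ) (μ : ℂ) :
    total (hE k μ) l + total (hE (k + 2) μ) l + l.count (E k μ) = 2 * total (hE (k + 1) μ) l := by
  induction l with
  | nil => rfl
  | cons b l ih =>
    have step : b.hE k μ + b.hE (k + 2) μ + (if b = E k μ then 1 else 0) =
        2 * b.hE (k + 1) μ := by
      cases b with
      | L m => simp only [hE, reduceCtorEq, if_false]; omega
      | T m => simp [hE]
      | E j ν =>
        by_cases h : μ = ν
        · simp only [hE, E.injEq, h, and_true, if_true]; split_ifs <;> omega
        · simp [hE, h, Ne.symm h]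
    simp only [total_cons, List.count_cons, beq_iff_eq]
    omega

theorem count_L_eq_of_total_eq {l l' : List Block} (h : ∀ k, total (hL k) l = total (hL k) l')
    (m : ℕ) : l.count (L m) = l'.count (L m) := by
  cases m with
  | zero => rw [← total_hL_one, ← total_hL_one, h]
  | succ m =>
    have h1 := total_hL_add l m
    have h2 := total_hL_add l' m
    simp only [h] at h1
    omega

theorem perm_of_total_eq {l l' : List Block} (hL : ∀ k, total (hL k) l = total (hL k) l')
    (hT : ∀ k, total (Block.hL k) (l.map dual) = total (Block.hL k) (l'.map dual))
    (hE : ∀ k μ, total (hE k μ) l = total (hE k μ) l') : l.Perm l' := by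
  rw [List.perm_iff_count]
  rintro (m | m | ⟨k, μ⟩)
  · exact count_L_eq_of_total_eq hL m
  · simpa only [count_map_dual] using! count_L_eq_of_total_eq hT m
  · have h1 := total_hE_add l k μ
    have h2 := total_hE_add l' k μ
    simp only [hE] at h1
    omega

theorem exists_perm_append_map_dual {l : List Block} (hLT : ∀ m, l.count (L m) = l.count (T m))
    (hE : ∀ k μ, Even (l.count (E k μ))) :
    ∃ l' : List Block, (∀ m, T m ∉ l') ∧ l.Perm (l' ++ l'.map dual) := by
  let half : Block → ℕ
    | L m => l.count (L m)
    | T _ => 0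
    | E k μ => l.count (E k μ) / 2
  have mem_of_half (b : Block) (hb : half b ≠ 0) : b ∈ l.toFinset := by
    rw [List.mem_toFinset, ← List.count_pos_iff]
    cases b with
    | L m => exact Nat.pos_of_ne_zero hb
    | T m => exact absurd rfl hb
    | E k μ => exact Nat.pos_of_ne_zero fun h => hb (by simp [half, h])
  let l' := (Finsupp.toMultiset (Finsupp.onFinset l.toFinset half mem_of_half)).toList
  have count_l' (b : Block) : l'.count b = half b := by
    rw [← Multiset.coe_count, Multiset.coe_toList, Finsupp.count_toMultiset,
      Finsupp.onFinset_apply]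
  refine ⟨l', fun m => List.count_eq_zero.1 (count_l' _), List.perm_iff_count.2 fun b => ?_⟩
  rw [List.count_append, count_map_dual, count_l', count_l']
  cases b with
  | L m => rfl
  | T m => exact (hLT m).symm.trans (zero_add _).symm
  | E k μ =>
    have := Nat.even_iff.1 (hE k μ)
    simp only [half, dual]
    omega

end Block

theorem lin_iso_of_homDim_eq {m n m' n' : ℕ} {P : Pencil m n} {Q : Pencil m' n'}
    (hP : NoInfEigenvalue (lin P)) (hQ : NoInfEigenvalue (lin Q))
    (hL : ∀ k, homDim (Lblk k) (lin P) = homDim (Lblk k) (lin Q))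
    (hT : ∀ k, homDim (Lblk k) (lin (tr P)) = homDim (Lblk k) (lin (tr Q)))
    (hE : ∀ k μ, homDim (Eblk k μ) (lin P) = homDim (Eblk k μ) (lin Q)) :
    LinPair.Iso (lin P) (lin Q) := by
  obtain ⟨l, hl⟩ := exists_iso_kcf hP
  obtain ⟨l', hl'⟩ := exists_iso_kcf hQ
  have perm : l.Perm l' := by
    refine Block.perm_of_total_eq (fun k => ?_) (fun k => ?_) fun k μ => ?_
    · rw [← homDim_Lblk_kcf, ← homDim_Lblk_kcf, ← hl.homDim_eq, ← hl'.homDim_eq, hL]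
    · rw [← homDim_Lblk_kcf, ← homDim_Lblk_kcf, ← (lin_tr_kcf_iso l).homDim_eq,
        ← (lin_tr_kcf_iso l').homDim_eq, ← hl.tr.homDim_eq, ← hl'.tr.homDim_eq, hT]
    · rw [← homDim_Eblk_kcf, ← homDim_Eblk_kcf, ← hl.homDim_eq, ← hl'.homDim_eq, hE]
  exact hl.trans ((kcf_perm perm).trans hl'.symm)

theorem lin_offdiag_kcf_iso (l : List Block) :
    LinPair.Iso (lin (offdiag (kcf l))) (lin (kcf (l ++ l.map Block.dual))) :=
  (lin_offdiag_iso (kcf l)).trans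
    (((LinPair.Iso.refl _).sum_congr (lin_tr_kcf_iso l)).trans (kcf_append l _).symm)

theorem IsSkew.lin_tr_iso {n : ℕ} {P : Pencil n n} (h : IsSkew P) :
    LinPair.Iso (lin (tr P)) (lin P) := by
  refine ⟨LinearEquiv.neg ℂ, LinearEquiv.refl ℂ _, fun x => ?_, fun x => ?_⟩
  · simp [tr, h.1, neg_mulVec, mulVec_neg]
  · simp [tr, h.2, neg_mulVec, mulVec_neg]

theorem IsSkew.count_L_eq_count_T {n : ℕ} {P : Pencil n n} (hP : IsSkew P) {l : List Block}
    (hl : LinPair.Iso (lin P) (lin (kcf l))) (m : ℕ) : l.count (.L m) = l.count (.T m) := by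
  have self_dual : LinPair.Iso (lin (kcf l)) (lin (kcf (l.map Block.dual))) :=
    (hl.symm.trans hP.lin_tr_iso.symm).trans (hl.tr.trans (lin_tr_kcf_iso l))
  rw [Block.count_L_eq_of_total_eq (l' := l.map Block.dual) (fun k => ?_) m, Block.count_map_dual]
  · rfl
  · rw [← homDim_Lblk_kcf, ← homDim_Lblk_kcf, self_dual.homDim_eq]

theorem IsSkew.even_count_E {n : ℕ} {P : Pencil n n} (hP : IsSkew P) {l : List Block}
    (hl : LinPair.Iso (lin P) (lin (kcf l))) (k : ℕ) (μ : ℂ) : Even (l.count (.E k μ)) := by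
  have h1 := Block.total_hE_add l k μ
  have h2 := even_homDim_Eblk_add hP k μ
  have h3 := even_homDim_Eblk_add hP (k + 2) μ
  rw [hl.homDim_eq, homDim_Eblk_kcf, Nat.even_iff] at h2 h3
  rw [add_mul] at h3
  rw [Nat.even_iff]
  omega

theorem IsSkew.exists_iso_kcf_append_dual {n : ℕ} {P : Pencil n n} (hP : IsSkew P)
    (hinf : NoInfEigenvalue (lin P)) :
    ∃ l : List Block, (∀ m, Block.T m ∉ l) ∧
      LinPair.Iso (lin P) (lin (kcf (l ++ l.map Block.dual))) := by
  obtain ⟨l, hl⟩ := exists_iso_kcf hinf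
  obtain ⟨l', hT, hperm⟩ := Block.exists_perm_append_map_dual (hP.count_L_eq_count_T hl)
    (hP.even_count_E hl)
  exact ⟨l', hT, hl.trans (kcf_perm hperm)⟩

/-! ### Degenerations -/

section Degen

variable {V U V' U' V'' U'' : Type*}
  [AddCommGroup V] [Module ℂ V] [AddCommGroup U] [Module ℂ U]
  [AddCommGroup V'] [Module ℂ V'] [AddCommGroup U'] [Module ℂ U']
  [AddCommGroup V''] [Module ℂ V''] [AddCommGroup U''] [Module ℂ U'']

/-- `f` degenerates to `g`: a matrix pencil of `g` lies in the orbit closure of one of `f`. -/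
def Degen (f : LinPair ℂ V U) (g : LinPair ℂ V' U') : Prop :=
  ∃ (m n : ℕ) (P Q : Pencil m n),
    LinPair.Iso f (lin P) ∧ LinPair.Iso (lin Q) g ∧ Q ∈ closure (orbE P)

namespace Degen

theorem congr_left {f : LinPair ℂ V U} {g : LinPair ℂ V' U'} {f' : LinPair ℂ V'' U''}
    (h : LinPair.Iso f' f) (hd : Degen f g) : Degen f' g := by
  obtain ⟨m, n, P, Q, hP, hQ, hPQ⟩ := hd
  exact ⟨m, n, P, Q, h.trans hP, hQ, hPQ⟩

theorem congr_right {f : LinPair ℂ V U} {g : LinPair ℂ V' U'} {g' : LinPair ℂ V'' U''}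
    (hd : Degen f g) (h : LinPair.Iso g g') : Degen f g' := by
  obtain ⟨m, n, P, Q, hP, hQ, hPQ⟩ := hd
  exact ⟨m, n, P, Q, hP, hQ.trans h, hPQ⟩

theorem sum_right {f : LinPair ℂ V U} {g : LinPair ℂ V' U'} (hd : Degen f g) {p q : ℕ}
    (R : Pencil p q) : Degen (f.sum (lin R)) (g.sum (lin R)) := by
  obtain ⟨m, n, P, Q, hP, hQ, hPQ⟩ := hd
  refine ⟨_, _, dsum P R, dsum Q R, (hP.sum_congr (.refl _)).trans (lin_dsum_iso P R).symm,
    (lin_dsum_iso Q R).trans (hQ.sum_congr (.refl _)), ?_⟩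
  have continuous_dsum : Continuous fun X : Pencil m n => dsum X R := by
    unfold dsum
    fun_prop
  refine map_mem_closure (f := fun X => dsum X R) continuous_dsum hPQ fun X hX =>
    strictEquiv_iff_lin_iso.2 ?_
  exact (lin_dsum_iso P R).trans
    (((strictEquiv_iff_lin_iso.1 hX).sum_congr (.refl _)).trans (lin_dsum_iso X R).symm)

theorem of_line [FiniteDimensional ℂ V] [FiniteDimensional ℂ U] {f g d : LinPair ℂ V U}
    (h : ∀ t : ℂ, t ≠ 0 → LinPair.Iso f (g + t • d)) : Degen f g := by
  let v := Module.finBasis ℂ V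
  let u := Module.finBasis ℂ U
  let M (k : LinPair ℂ V U) : Pencil (Module.finrank ℂ U) (Module.finrank ℂ V) :=
    (LinearMap.toMatrix v u k.1, LinearMap.toMatrix v u k.2)
  have iso_M (k : LinPair ℂ V U) : LinPair.Iso k (lin (M k)) :=
    ⟨v.equivFun, u.equivFun, fun x => (LinearMap.toMatrix_mulVec_repr v u k.1 x).symm,
      fun x => (LinearMap.toMatrix_mulVec_repr v u k.2 x).symm⟩
  refine ⟨_, _, M (g + d), M g, one_smul ℂ d ▸ (h 1 one_ne_zero).trans (iso_M _), (iso_M g).symm,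
    ?_⟩
  have M_line (t : ℂ) : M (g + t • d) = M g + t • M d := by simp [M]
  have continuous_line : Continuous fun t : ℂ => M g + t • M d := by fun_prop
  have : M g + (0 : ℂ) • M d ∈ closure (orbE (M (g + d))) :=
    map_mem_closure (f := fun t : ℂ => M g + t • M d) continuous_line
      (dense_compl_singleton (0 : ℂ) 0) fun t ht =>
      strictEquiv_iff_lin_iso.2 <| (iso_M (g + d)).symm.trans <|
        (one_smul ℂ d ▸ h 1 one_ne_zero).symm.trans <| (h t ht).trans <|
          (iso_M (g + t • d)).trans <| M_line t ▸ .refl _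
  simpa using this

/-- The block triangular pencils with off-diagonal blocks `t • c` are isomorphic for `t ≠ 0`, and
the direct sum is their limit as `t → 0`. -/
theorem sum_add_inl_comp_snd [FiniteDimensional ℂ V] [FiniteDimensional ℂ U]
    [FiniteDimensional ℂ V'] [FiniteDimensional ℂ U']
    (a : LinPair ℂ V U) (b : LinPair ℂ V' U') (c : LinPair ℂ V' U) :
    Degen (a.sum b + (.inl ℂ U U' ∘ₗ c.1 ∘ₗ .snd ℂ V V', .inl ℂ U U' ∘ₗ c.2 ∘ₗ .snd ℂ V V'))
      (a.sum b) := by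
  refine of_line (d := (.inl ℂ U U' ∘ₗ c.1 ∘ₗ .snd ℂ V V', .inl ℂ U U' ∘ₗ c.2 ∘ₗ .snd ℂ V V'))
    fun t ht => ⟨(LinearEquiv.smulOfNeZero ℂ V t ht).prodCongr (.refl ℂ V'),
      (LinearEquiv.smulOfNeZero ℂ U t ht).prodCongr (.refl ℂ U'), fun x => ?_, fun x => ?_⟩ <;>
    simp [LinPair.sum]

end Degen

/-- Short exactness of `0 → X → Y → Z → 0`. -/
def ShortExact {X Y Z : Type*} [Zero Z] (α : X → Y) (β : Y → Z) : Prop :=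
  Function.Injective α ∧ Function.Exact α β ∧ Function.Surjective β

theorem ShortExact.of_finrank {X Y Z : Type*} [AddCommGroup X] [Module ℂ X] [AddCommGroup Y]
    [Module ℂ Y] [AddCommGroup Z] [Module ℂ Z] [FiniteDimensional ℂ Y]
    {α : X →ₗ[ℂ] Y} {β : Y →ₗ[ℂ] Z} (hα : Function.Injective α) (hβ : Function.Surjective β)
    (hβα : ∀ x, β (α x) = 0)
    (hdim : Module.finrank ℂ Y = Module.finrank ℂ X + Module.finrank ℂ Z) : ShortExact α β := by
  refine ⟨hα, LinearMap.exact_iff.2 (Submodule.eq_of_le_of_finrank_eq ?_ ?_).symm, hβ⟩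
  · rintro _ ⟨x, rfl⟩
    exact hβα x
  · have := β.finrank_range_add_finrank_ker
    rw [LinearMap.range_eq_top.2 hβ, finrank_top] at this
    rw [LinearMap.finrank_range_of_inj hα]
    omega

theorem ShortExact.exists_equiv_prod {X Y Z : Type*} [AddCommGroup X] [Module ℂ X]
    [AddCommGroup Y] [Module ℂ Y] [AddCommGroup Z] [Module ℂ Z] {α : X →ₗ[ℂ] Y} {β : Y →ₗ[ℂ] Z}
    (h : ShortExact α β) :
    ∃ e : Y ≃ₗ[ℂ] X × Z, (∀ x, e (α x) = (x, 0)) ∧ ∀ y, (e y).2 = β y := by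
  obtain ⟨hα, hex, hβ⟩ := h
  obtain ⟨σ, hσ⟩ := LinearMap.exists_rightInverse_of_surjective β (LinearMap.range_eq_top.2 hβ)
  obtain ⟨e, rfl, rfl⟩ := hex.splitSurjectiveEquiv hα ⟨σ, hσ⟩
  exact ⟨e, fun x => by simp, fun y => rfl⟩

/-- Complements of the outer terms put `f` in block triangular form. -/
theorem Degen.of_shortExact [FiniteDimensional ℂ V'] [FiniteDimensional ℂ U']
    [FiniteDimensional ℂ V''] [FiniteDimensional ℂ U'']
    {f : LinPair ℂ V U} {a : LinPair ℂ V' U'} {b : LinPair ℂ V'' U''}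
    {φ : V' →ₗ[ℂ] V} {φ' : U' →ₗ[ℂ] U} {ψ : V →ₗ[ℂ] V''} {ψ' : U →ₗ[ℂ] U''}
    (hφ : LinPair.IsHom a f φ φ') (hψ : LinPair.IsHom f b ψ ψ')
    (hV : ShortExact φ ψ) (hU : ShortExact φ' ψ') : Degen f (a.sum b) := by
  obtain ⟨e, he1, he2⟩ := hV.exists_equiv_prod
  obtain ⟨e', he1', he2'⟩ := hU.exists_equiv_prod
  let c (g : V →ₗ[ℂ] U) : V'' →ₗ[ℂ] U' :=
    .fst ℂ U' U'' ∘ₗ e' ∘ₗ g ∘ₗ e.symm ∘ₗ .inr ℂ V' V''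
  have triangular {g : V →ₗ[ℂ] U} {a : V' →ₗ[ℂ] U'} {b : V'' →ₗ[ℂ] U''}
      (ha : ∀ x, g (φ x) = φ' (a x)) (hb : ∀ x, b (ψ x) = ψ' (g x)) (x : V) :
      e' (g x) = (a (e x).1 + c g (e x).2, b (e x).2) := by
    obtain ⟨⟨y, z⟩, rfl⟩ := e.symm.surjective x
    have split : e.symm (y, z) = φ y + e.symm (0, z) := by
      rw [← e.symm_apply_apply (φ y), he1, ← map_add, Prod.mk_add_mk, add_zero, zero_add]
    refine Prod.ext ?_ ?_
    · rw [split, map_add, ha, map_add, he1']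
      simp [c, he1]
    · rw [he2', ← hb, ← he2]
  refine (Degen.sum_add_inl_comp_snd a b (c f.1, c f.2)).congr_left
    ⟨e, e', fun x => ?_, fun x => ?_⟩
  · simpa [LinPair.sum] using triangular hφ.1 hψ.1 x
  · simpa [LinPair.sum] using triangular hφ.2 hψ.2 x

end Degen

section Shift

theorem shift_surjective {a b s : ℕ} (h : a + s ≤ b) :
    Function.Surjective (shift a s : (Fin b → ℂ) →ₗ[ℂ] (Fin a → ℂ)) := by
  intro y
  refine ⟨fun i => if s ≤ i then zext y (i - s) else 0, ?_⟩
  ext i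
  rw [shift_apply, zext_of_lt _ (by omega)]
  simp

theorem shift_prod_injective {a a' b s s' : ℕ}
    (h : ∀ i < b, (s ≤ i ∧ i < a + s) ∨ (s' ≤ i ∧ i < a' + s')) :
    Function.Injective ((shift a s).prod (shift a' s') : (Fin b → ℂ) →ₗ[ℂ] _) := by
  rw [← LinearMap.ker_eq_bot, LinearMap.ker_eq_bot']
  intro x hx
  obtain ⟨h1, h2⟩ := Prod.ext_iff.1 hx
  have entry_eq_zero {c t : ℕ} (h0 : shift c t x = 0) (i : Fin b) (hi : t ≤ i ∧ (i : ℕ) < c + t) :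
      x i = 0 := by
    have := congrFun h0 ⟨i - t, by omega⟩
    rw [shift_apply] at this
    simpa [Nat.sub_add_cancel hi.1] using this
  ext i
  exact (h i i.2).elim (entry_eq_zero h1 i) (entry_eq_zero h2 i)

theorem shift_comm {a b c d s t : ℕ} (h : ∀ i < d, (i + s < b ∧ i + t < c) ∨ a ≤ i + s + t)
    (x : Fin a → ℂ) : shift d s (shift b t x) = shift d t (shift c s x) := by
  ext i
  simp only [shift_apply, zext_shift, add_right_comm (i : ℕ) t s]
  rcases h i i.2 with ⟨h1, h2⟩ | h1
  · rw [if_pos h1, if_pos h2]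
  · rw [zext_of_le x h1, ite_self, ite_self]

theorem shortExact_shift {a b c d s t : ℕ}
    (hinj : ∀ i < a, (s ≤ i ∧ i < b + s) ∨ (t ≤ i ∧ i < c + t)) (hsurj : d + t ≤ b)
    (hcomm : ∀ i < d, (i + t < b ∧ i + s < c) ∨ a ≤ i + t + s) (hdim : b + c = a + d) :
    ShortExact ((shift b s).prod (shift c t) : (Fin a → ℂ) →ₗ[ℂ] _)
      ((shift d t).coprod (-shift d s)) := by
  refine .of_finrank (shift_prod_injective hinj) (fun y => ?_) (fun x => ?_) (by simpa using hdim)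
  · obtain ⟨x, rfl⟩ := shift_surjective hsurj y
    exact ⟨(x, 0), by simp⟩
  · simpa [← sub_eq_add_neg, sub_eq_zero] using shift_comm hcomm x

theorem degen_Lblk_Lblk {j k : ℕ} (h : j + 1 ≤ k) :
    Degen ((lin (Lblk (j + 1))).sum (lin (Lblk k))) ((lin (Lblk (k + 1))).sum (lin (Lblk j))) := by
  obtain ⟨s, rfl⟩ := Nat.exists_eq_add_of_le (Nat.le_of_succ_le h)
  refine Degen.of_shortExact
    (φ := (shift (j + 1 + 1) s).prod (shift (j + s + 1) 0))
    (φ' := (shift (j + 1) s).prod (shift (j + s) 0)) ⟨fun x => ?_, fun x => ?_⟩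
    ⟨fun ⟨x, y⟩ => ?_, fun ⟨x, y⟩ => ?_⟩
    (shortExact_shift (d := j + 1) (by omega) (by omega) (by omega) (by omega))
    (shortExact_shift (d := j) (by omega) (by omega) (by omega) (by omega))
  · refine Prod.ext ?_ ?_ <;>
      simpa [LinPair.sum, Lblk_fst_mulVec] using shift_comm (by omega) x
  · refine Prod.ext ?_ ?_ <;> simp only [LinPair.sum, Lblk_snd_mulVec, lin_snd_apply,
      LinearMap.prodMap_apply, LinearMap.prod_apply]
    · exact shift_comm (by omega) x
    · exact shift_comm (by omega) x
  · simp only [LinPair.sum, Lblk_fst_mulVec, lin_fst_apply, LinearMap.prodMap_apply,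
      LinearMap.coprod_apply, LinearMap.neg_apply, map_add, map_neg]
    rw [shift_comm (s := 1) (t := 0) (c := j + 1) (by omega),
      shift_comm (s := 1) (t := s) (c := j + s) (by omega)]
  · simp only [LinPair.sum, Lblk_snd_mulVec, lin_snd_apply, LinearMap.prodMap_apply,
      LinearMap.coprod_apply, LinearMap.neg_apply, map_add, map_neg]
    rw [shift_comm (s := 0) (t := s) (c := j + s) (by omega)]

theorem degen_Eblk_Eblk (b s : ℕ) (μ : ℂ) :
    Degen ((lin (Eblk (b + s + 1) μ)).sum (lin (Eblk b μ)))
      ((lin (Eblk (b + s) μ)).sum (lin (Eblk (b + 1) μ))) := by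
  have exact_shift : ShortExact
      ((shift (b + s + 1) 0).prod (shift b s) : (Fin (b + s) → ℂ) →ₗ[ℂ] _)
      ((shift (b + 1) s).coprod (-shift (b + 1) 0)) :=
    shortExact_shift (by omega) (by omega) (by omega) (by omega)
  refine Degen.of_shortExact ⟨fun x => ?_, fun x => ?_⟩ ⟨fun ⟨x, y⟩ => ?_, fun ⟨x, y⟩ => ?_⟩
    exact_shift exact_shift
  · refine Prod.ext ?_ ?_ <;>
      simpa [LinPair.sum, Eblk_fst_mulVec] using shift_comm (by omega) x
  · refine Prod.ext ?_ ?_ <;> simp [LinPair.sum, Eblk_snd_mulVec]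
  · simp only [LinPair.sum, Eblk_fst_mulVec, lin_fst_apply, LinearMap.prodMap_apply,
      LinearMap.coprod_apply, LinearMap.neg_apply, map_add, map_neg, map_smul, smul_neg]
    rw [shift_comm (s := 1) (t := s) (c := b + s + 1) (by omega),
      shift_comm (s := 1) (t := 0) (c := b) (by omega)]
    abel
  · simp [LinPair.sum, Eblk_snd_mulVec]

/-- Left shift of sequences. -/
def seqShift : (ℕ → ℂ) →ₗ[ℂ] (ℕ → ℂ) :=
  LinearMap.funLeft ℂ ℂ Nat.succ

/-- `zext` as a linear map. -/
def zextLinear (k : ℕ) : (Fin k → ℂ) →ₗ[ℂ] (ℕ → ℂ) where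
  toFun := zext
  map_add' x y := funext fun i => zext_add x y i
  map_smul' c x := funext fun i => zext_smul c x i

theorem zextLinear_shift_one {a k : ℕ} (h : a ≤ k + 1) (x : Fin a → ℂ) :
    zextLinear k (shift k 1 x) = seqShift (zextLinear a x) := by
  ext i
  change zext (shift k 1 x) i = zext x (i + 1)
  rw [zext_shift]
  split_ifs with hi
  · rfl
  · exact (zext_of_le x (by omega)).symm

/-- The iterates of a Jordan block on a sequence `z`, read off at the initial entry. -/
def krylov (μ : ℂ) (n : ℕ) : (ℕ → ℂ) →ₗ[ℂ] (Fin n → ℂ) :=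
  LinearMap.pi fun i => LinearMap.proj 0 ∘ₗ (μ • LinearMap.id + seqShift) ^ (i : ℕ)

theorem krylov_apply_zero (μ : ℂ) (n : ℕ) (z : ℕ → ℂ) : krylov μ (n + 1) z 0 = z 0 := by
  simp [krylov]

theorem shift_zero_krylov (μ : ℂ) {n n' : ℕ} (h : n ≤ n') (z : ℕ → ℂ) :
    shift n 0 (krylov μ n' z) = krylov μ n z := by
  ext i
  rw [shift_apply, zext_of_lt _ (by omega)]
  rfl

theorem shift_one_krylov (μ : ℂ) {n n' : ℕ} (h : n + 1 ≤ n') (z : ℕ → ℂ) :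
    shift n 1 (krylov μ n' z) = krylov μ n (μ • z + seqShift z) := by
  ext i
  rw [shift_apply, zext_of_lt _ (by omega)]
  simp [krylov, pow_succ]

theorem shortExact_krylov (μ : ℂ) (n e : ℕ) :
    ShortExact ((krylov μ (n + 1) ∘ₗ zextLinear (e + 1)).prod (shift e 1))
      ((shift n 1 - μ • shift n 0).coprod (-(krylov μ n ∘ₗ zextLinear e))) := by
  refine .of_finrank ?_ (fun y => ?_) (fun x => ?_) (by simp; omega)
  · rw [← LinearMap.ker_eq_bot, LinearMap.ker_eq_bot']
    intro x hx
    obtain ⟨h1, h2⟩ := Prod.ext_iff.1 hx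
    ext i
    induction i using Fin.cases with
    | zero =>
      have : zext x 0 = 0 := (krylov_apply_zero μ n (zext x)).symm.trans (congrFun h1 0)
      rwa [zext_of_lt x e.succ_pos] at this
    | succ i =>
      have : zext x (i + 1) = 0 := congrFun h2 i
      rwa [zext_of_lt x (by omega)] at this
  · -- The recurrence `x (i + 1) - μ * x i = y i` is solvable for every `y`.
    refine ⟨(fun i => Nat.rec 0 (fun i c => zext y i + μ * c) (i : ℕ), 0), ?_⟩
    ext i
    simp [shift_apply, zext_of_lt]
  · simp [shift_one_krylov, shift_zero_krylov, zextLinear_shift_one]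

theorem degen_Lblk_Eblk (m e : ℕ) (μ : ℂ) :
    Degen ((lin (Lblk (m + 1))).sum (lin (Eblk e μ)))
      ((lin (Eblk (e + 1) μ)).sum (lin (Lblk m))) := by
  refine Degen.of_shortExact ⟨fun x => ?_, fun x => ?_⟩ ⟨fun ⟨x, y⟩ => ?_, fun ⟨x, y⟩ => ?_⟩
    (shortExact_krylov μ (m + 1) e) (shortExact_krylov μ m e)
  · refine Prod.ext ?_ ?_
    · simp [LinPair.sum, Eblk_fst_mulVec, Lblk_fst_mulVec, shift_one_krylov, zextLinear_shift_one]
    · simpa [LinPair.sum, Eblk_fst_mulVec] using shift_comm (by omega) x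
  · refine Prod.ext ?_ ?_ <;>
      simp [LinPair.sum, Eblk_snd_mulVec, Lblk_snd_mulVec, shift_zero_krylov]
  · have := shift_comm (a := m + 1 + 1) (b := m + 1) (c := m + 1) (d := m) (s := 1) (t := 0)
      (by omega) x
    simp [LinPair.sum, Eblk_fst_mulVec, Lblk_fst_mulVec, shift_one_krylov, zextLinear_shift_one,
      this]
  · have := shift_comm (a := m + 1 + 1) (b := m + 1) (c := m + 1) (d := m) (s := 1) (t := 0)
      (by omega) x
    simp [LinPair.sum, Eblk_snd_mulVec, Lblk_snd_mulVec, shift_zero_krylov, this]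

end Shift

section Cyclic

open Polynomial

variable {V U V' U' : Type*} [AddCommGroup V] [Module ℂ V] [AddCommGroup U] [Module ℂ U]
  [AddCommGroup V'] [Module ℂ V'] [AddCommGroup U'] [Module ℂ U']

/-- The second map of `f` is invertible and `f.2⁻¹ ∘ f.1` has a vector (the image of `1` under `Z`)
whose annihilator is contained in the ideal generated by `p`. -/
def Cyclic (f : LinPair ℂ V U) (p : ℂ[X]) : Prop :=
  Function.Bijective f.2 ∧ ∃ Z : ℂ[X] →ₗ[ℂ] V,
    (∀ g, f.1 (Z g) = f.2 (Z (X * g))) ∧ ∀ g, Z g = 0 → p ∣ g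

theorem Cyclic.congr {f : LinPair ℂ V U} {f' : LinPair ℂ V' U'} {p : ℂ[X]} (hf : Cyclic f p)
    (h : LinPair.Iso f f') : Cyclic f' p := by
  obtain ⟨e, e', h1, h2⟩ := h
  obtain ⟨hb, Z, hZ, hp⟩ := hf
  have f'_snd : ⇑f'.2 = e' ∘ f.2 ∘ e.symm := by
    ext x
    simp [h2]
  refine ⟨f'_snd ▸ e'.bijective.comp (hb.comp e.symm.bijective), e.toLinearMap ∘ₗ Z, fun g => ?_,
    fun g hg => hp g (by simpa using hg)⟩
  simp [← h1, ← h2, hZ]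

theorem Cyclic.sum {f : LinPair ℂ V U} {f' : LinPair ℂ V' U'} {p p' : ℂ[X]} (hf : Cyclic f p)
    (hf' : Cyclic f' p') (hp : IsCoprime p p') : Cyclic (f.sum f') (p * p') := by
  obtain ⟨hb, Z, hZ, h⟩ := hf
  obtain ⟨hb', Z', hZ', h'⟩ := hf'
  refine ⟨hb.prodMap hb', Z.prod Z', fun g => Prod.ext (hZ g) (hZ' g), fun g hg => ?_⟩
  obtain ⟨h1, h2⟩ := Prod.ext_iff.1 hg
  exact hp.mul_dvd (h g h1) (h' g h2)

theorem cyclic_of_subsingleton [Subsingleton V] [Subsingleton U] (f : LinPair ℂ V U) :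
    Cyclic f 1 :=
  ⟨⟨fun _ _ _ => Subsingleton.elim _ _, fun _ => ⟨0, Subsingleton.elim _ _⟩⟩, 0,
    fun _ => Subsingleton.elim _ _, fun g _ => one_dvd g⟩

theorem X_sub_C_pow_dvd_of_coeff_taylor {R : Type*} [CommRing R] {r : R} {n : ℕ} {g : R[X]}
    (h : ∀ i < n, (taylor r g).coeff i = 0) : (X - C r) ^ n ∣ g := by
  simpa [taylor_taylor, sub_eq_add_neg] using
    map_dvd (taylorAlgHom (-r)) (X_pow_dvd_iff.2 h)

/-- A cyclic vector of the Jordan block is its last basis vector; the orbit map sends `g` to the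
first Taylor coefficients of `g` at `μ`, in reverse order. -/
theorem cyclic_Eblk (k : ℕ) (μ : ℂ) : Cyclic (lin (Eblk (k + 1) μ)) ((X - C μ) ^ (k + 1)) := by
  have snd_eq (x) : (lin (Eblk (k + 1) μ)).2 x = x := by simp [Eblk_snd_mulVec]
  refine ⟨⟨fun x y h => by simpa only [snd_eq] using h, fun x => ⟨x, snd_eq x⟩⟩,
    LinearMap.pi fun i => lcoeff ℂ (k - i) ∘ₗ taylor μ, fun g => ?_, fun g hg =>
      X_sub_C_pow_dvd_of_coeff_taylor fun i hi => ?_⟩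
  · rw [snd_eq, lin_fst_apply, Eblk_fst_mulVec]
    ext i
    rcases lt_or_eq_of_le (Nat.le_of_lt_succ i.2) with hi | hi
    · obtain ⟨d, hd⟩ := Nat.exists_eq_add_of_lt hi
      have h1 : k - (i : ℕ) = d + 1 := by omega
      have h2 : k - ((i : ℕ) + 1) = d := by omega
      simp [shift_apply, zext_of_lt, hi, h1, h2, taylor_mul, add_mul, add_comm]
    · simp [shift_apply, zext_of_le, hi, taylor_mul, add_mul]
  · have := congrFun hg ⟨k - i, by omega⟩
    simpa [Nat.sub_sub_self (Nat.le_of_lt_succ hi)] using this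

theorem pi_surjective_of_isUnit {ι : Type*} [Fintype ι] [DecidableEq ι] {ℓ : ι → V →ₗ[ℂ] ℂ}
    {v : ι → V} (h : IsUnit (Matrix.of fun i j => ℓ i (v j))) :
    Function.Surjective (LinearMap.pi ℓ) := by
  intro y
  obtain ⟨c, rfl⟩ := Matrix.mulVec_surjective_iff_isUnit.2 h y
  refine ⟨∑ j, c j • v j, ?_⟩
  ext i
  simp [Matrix.mulVec, dotProduct, mul_comm]

/-- The Hankel matrix of the numbers `w (T ^ s v)` with `s ≤ N` is triangular. -/
theorem shortExact_pow [FiniteDimensional ℂ V] {T : Module.End ℂ V} {v : V} {w : V →ₗ[ℂ] ℂ}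
    {m n N : ℕ} (hmn : m + n = N + 1) (hV : Module.finrank ℂ V = N + 1)
    (hv : LinearIndependent ℂ fun i : Fin (N + 1) => (T ^ (i : ℕ)) v)
    (hw : ∀ s ≤ N, w ((T ^ s) v) = if s = N then 1 else 0) :
    ShortExact (Fintype.linearCombination ℂ fun i : Fin m => (T ^ (i : ℕ)) v)
      (LinearMap.pi fun i : Fin n => w ∘ₗ T ^ (i : ℕ)) := by
  have hw_pow {i s : ℕ} (h : s + i ≤ N) : w ((T ^ i) ((T ^ s) v)) = if s + i = N then 1 else 0 := by
    rw [← Module.End.mul_apply, ← pow_add, add_comm i, hw _ h]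
  refine .of_finrank ?_ (pi_surjective_of_isUnit (v := fun j => (T ^ (N - j : ℕ)) v) ?_)
    (fun x => ?_) (by simp [hV, hmn])
  · exact linearIndependent_iff_injective_fintypeLinearCombination.1
      (hv.comp (Fin.castLE (by omega)) (Fin.castLE_injective _))
  · rw [Matrix.isUnit_iff_isUnit_det, Matrix.det_of_isLowerTriangular, Finset.prod_eq_one]
    · exact isUnit_one
    · intro i _
      rw [Matrix.of_apply, LinearMap.comp_apply, hw_pow (by omega), if_pos (by omega)]
    · intro i j hij
      have : (i : ℕ) < j := hij
      rw [Matrix.of_apply, LinearMap.comp_apply, hw_pow (by omega), if_neg (by omega)]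
  · ext i
    simp only [Fintype.linearCombination_apply, LinearMap.pi_apply, LinearMap.comp_apply, map_sum,
      map_smul, Pi.zero_apply]
    refine Finset.sum_eq_zero fun j _ => ?_
    rw [hw_pow (by omega), if_neg (by omega), smul_zero]

theorem degen_of_linearIndependent_pow [FiniteDimensional ℂ V] {T : Module.End ℂ V} {v : V}
    {a b : ℕ} (hV : Module.finrank ℂ V = a + b + 1)
    (hv : LinearIndependent ℂ fun i : Fin (a + b + 1) => (T ^ (i : ℕ)) v) :
    Degen ((T, LinearMap.id) : LinPair ℂ V V) ((lin (LTblk a)).sum (lin (Lblk b))) := by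
  let B := basisOfLinearIndependentOfCardEqFinrank hv (by simp [hV])
  have hw (s : ℕ) (hs : s ≤ a + b) :
      B.coord (Fin.last (a + b)) ((T ^ s) v) = if s = a + b then 1 else 0 := by
    have : (T ^ s) v = B ⟨s, by omega⟩ := by simp [B]
    rw [this, B.coord_apply, B.repr_self, Finsupp.single_apply]
    simp [Fin.ext_iff]
  refine Degen.of_shortExact ⟨fun x => ?_, fun x => ?_⟩ ⟨fun x => ?_, fun x => ?_⟩
    (shortExact_pow (m := a) (n := b + 1) (by omega) hV hv hw)
    (shortExact_pow (m := a + 1) (n := b) (by omega) hV hv hw)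
  · simp [LTblk_fst_mulVec, Fintype.linearCombination_apply, Fin.sum_univ_succ, pow_succ']
  · simp [LTblk_snd_mulVec, Fintype.linearCombination_apply, Fin.sum_univ_castSucc, shift_apply,
      zext_of_le]
  · ext i
    simp [Lblk_fst_mulVec, shift_apply, zext_of_lt, pow_succ]
  · ext i
    simp [Lblk_snd_mulVec, shift_apply, zext_of_lt]

theorem Cyclic.degen [FiniteDimensional ℂ V] {f : LinPair ℂ V U} {p : ℂ[X]}
    (hf : Cyclic f p) {a b : ℕ} (hp : p.natDegree = a + b + 1)
    (hV : Module.finrank ℂ V = a + b + 1) :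
    Degen f ((lin (LTblk a)).sum (lin (Lblk b))) := by
  obtain ⟨hb, Z, hZ, hd⟩ := hf
  let e := LinearEquiv.ofBijective f.2 hb
  let T : Module.End ℂ V := e.symm.toLinearMap ∘ₗ f.1
  have T_Z (g : ℂ[X]) : T (Z g) = Z (X * g) := by simp [T, hZ, e]
  have pow_T_Z (i : ℕ) : (T ^ i) (Z 1) = Z (X ^ i) := by
    induction i with
    | zero => simp
    | succ i ih => rw [pow_succ', Module.End.mul_apply, ih, T_Z, pow_succ']
  refine (degen_of_linearIndependent_pow (T := T) (v := Z 1) hV ?_).congr_left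
    ⟨.refl ℂ V, e.symm, fun x => ?_, fun x => ?_⟩
  · simp only [pow_T_Z]
    rw [Fintype.linearIndependent_iff]
    intro x hx i
    have deg_lt : (∑ i : Fin (a + b + 1), C (x i) * X ^ (i : ℕ)).degree < p.degree := by
      rw [degree_eq_natDegree (p := p) (by rintro rfl; simp at hp), hp]
      exact degree_sum_fin_lt x
    have sum_eq_zero := eq_zero_of_dvd_of_degree_lt (hd _ ?_) deg_lt
    · simpa [coeff_X_pow, Fin.val_inj] using congrArg (coeff · (i : ℕ)) sum_eq_zero
    · simpa [← smul_eq_C_mul] using hx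
  · simp [T]
  · exact e.symm_apply_apply x

end Cyclic

/-! ### Elementary degenerations of skew-symmetric canonical forms -/

/-- The blocks of the `k × k` Jordan pencil `Eblk k μ`: none if `k = 0`. -/
def jordanList : ℕ → ℂ → List Block
  | 0, _ => []
  | k + 1, μ => [.E k μ]

/-- The blocks of a pencil with a single Jordan block, of size `a μ`, at each `μ ∈ s`. -/
def jordanFamily (a : ℂ → ℕ) (s : Finset ℂ) : List Block :=
  s.toList.flatMap fun μ => jordanList (a μ) μ

theorem jordanFamily_insert [DecidableEq ℂ] (a : ℂ → ℕ) {s : Finset ℂ} {μ : ℂ} (hμ : μ ∉ s) :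
    (jordanFamily a (insert μ s)).Perm (jordanList (a μ) μ ++ jordanFamily a s) :=
  (Finset.toList_insert hμ).flatMap_right _

theorem lin_kcf_jordanList_iso (j : ℕ) (μ : ℂ) :
    LinPair.Iso (lin (kcf (jordanList j μ))) (lin (Eblk j μ)) := by
  cases j with
  | zero => exact .of_subsingleton (lin (kcf [])) _
  | succ k => exact kcf_singleton _

theorem total_flatMap {α : Type*} (f : Block → ℕ) (g : α → List Block) (s : List α) :
    total f (s.flatMap g) = (s.map fun x => total f (g x)).sum := by
  induction s with
  | nil => rfl
  | cons x s ih => rw [List.flatMap_cons, total_append, ih, List.map_cons, List.sum_cons]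

@[simp] theorem total_jordanFamily (f : Block → ℕ) (a : ℂ → ℕ) (s : Finset ℂ) :
    total f (jordanFamily a s) = ∑ μ ∈ s, total f (jordanList (a μ) μ) := by
  rw [jordanFamily, total_flatMap, Finset.sum_map_toList]

/-- `l'` describes a skew-symmetric pencil whose off-diagonal part is a degeneration of the
off-diagonal part described by `l`; the latter part may itself be described by a list other than
`l'`, with the same blocks once the dual ones are added. -/
def DegenStep (l l' : List Block) : Prop :=
  ∃ k, Degen (lin (kcf l)) (lin (kcf k)) ∧ (k ++ k.map Block.dual).Perm (l' ++ l'.map Block.dual)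

theorem DegenStep.append {l a a' c : List Block} (ha : DegenStep a a') (h : l.Perm (a ++ c)) :
    DegenStep l (a' ++ c) := by
  obtain ⟨k, hd, hk⟩ := ha
  refine ⟨k ++ c, ((hd.sum_right (kcf c)).congr_left ((kcf_perm h).trans
    (kcf_append a c))).congr_right (kcf_append k c).symm, ?_⟩
  have regroup (x y : List Block) : ((x ++ c) ++ (y ++ c.map Block.dual)).Perm
      ((x ++ y) ++ (c ++ c.map Block.dual)) := by
    simp only [List.append_assoc]
    exact (List.perm_append_comm_assoc c y _).append_left x
  simp only [List.map_append]
  exact (regroup _ _).trans ((hk.append_right _).trans (regroup _ _).symm)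

theorem degenStep_L_L {j k : ℕ} (hjk : j + 1 ≤ k) :
    DegenStep [.L (j + 1), .L k] [.L (k + 1), .L j] :=
  have lin_kcf_iso (j k : ℕ) : LinPair.Iso (lin (kcf [.L j, .L k]))
      ((lin (Lblk j)).sum (lin (Lblk k))) :=
    (kcf_cons (.L j) _).trans ((LinPair.Iso.refl _).sum_congr (kcf_singleton (.L k)))
  ⟨_, ((degen_Lblk_Lblk hjk).congr_left (lin_kcf_iso _ _)).congr_right (lin_kcf_iso _ _).symm,
    .refl _⟩

theorem degenStep_L_E (m e : ℕ) (μ : ℂ) :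
    DegenStep (.L (m + 1) :: jordanList e μ) (jordanList (e + 1) μ ++ [.L m]) :=
  ⟨_, ((degen_Lblk_Eblk m e μ).congr_left ((kcf_cons (.L (m + 1)) _).trans
    ((LinPair.Iso.refl _).sum_congr (lin_kcf_jordanList_iso _ _)))).congr_right
      ((kcf_append _ _).trans ((lin_kcf_jordanList_iso _ _).sum_congr
        (kcf_singleton (.L m)))).symm, .refl _⟩

theorem degenStep_E_E (b s : ℕ) (μ : ℂ) :
    DegenStep (jordanList (b + s + 1) μ ++ jordanList b μ)
      (jordanList (b + s) μ ++ jordanList (b + 1) μ) :=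
  have lin_kcf_iso (j k : ℕ) : LinPair.Iso (lin (kcf (jordanList j μ ++ jordanList k μ)))
      ((lin (Eblk j μ)).sum (lin (Eblk k μ))) :=
    (kcf_append _ _).trans ((lin_kcf_jordanList_iso _ _).sum_congr (lin_kcf_jordanList_iso _ _))
  ⟨_, ((degen_Eblk_Eblk b s μ).congr_left (lin_kcf_iso _ _)).congr_right (lin_kcf_iso _ _).symm,
    .refl _⟩

section Cyclic

open Polynomial

theorem cyclic_kcf_jordanList (j : ℕ) (μ : ℂ) :
    Cyclic (lin (kcf (jordanList j μ))) ((X - C μ) ^ j) := by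
  cases j with
  | zero =>
    rw [pow_zero]
    exact cyclic_of_subsingleton (lin (kcf []))
  | succ k => exact (cyclic_Eblk k μ).congr (kcf_singleton (.E k μ)).symm

theorem cyclic_kcf_jordanFamily (a : ℂ → ℕ) (s : Finset ℂ) :
    Cyclic (lin (kcf (jordanFamily a s))) (∏ μ ∈ s, (X - C μ) ^ a μ) := by
  classical
  induction s using Finset.induction_on with
  | empty =>
    have : jordanFamily a ∅ = [] := by simp [jordanFamily]
    rw [Finset.prod_empty, this]
    exact cyclic_of_subsingleton _
  | insert μ s hμ ih =>
    rw [Finset.prod_insert hμ]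
    refine ((cyclic_kcf_jordanList (a μ) μ).sum ih ?_).congr
      ((kcf_perm (jordanFamily_insert a hμ)).trans (kcf_append _ _)).symm
    refine IsCoprime.prod_right fun ν hν => IsCoprime.pow (isCoprime_X_sub_C_of_isUnit_sub ?_)
    rw [isUnit_iff_ne_zero, sub_ne_zero]
    exact fun h => hμ (h ▸ hν)

theorem total_cols_jordanFamily (a : ℂ → ℕ) (s : Finset ℂ) :
    total Block.cols (jordanFamily a s) = ∑ μ ∈ s, a μ := by
  rw [total_jordanFamily]
  refine Finset.sum_congr rfl fun μ _ => ?_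
  cases a μ <;> rfl

theorem degenStep_E_LL (a : ℂ → ℕ) (s : Finset ℂ) {p q : ℕ} (h : ∑ μ ∈ s, a μ = p + q + 1) :
    DegenStep (jordanFamily a s) [.L p, .L q] := by
  refine ⟨[.T p, .L q], ?_, (List.reverse_perm [Block.L p, .L q, .T p]).append_right [Block.T q]⟩
  refine ((cyclic_kcf_jordanFamily a s).degen (a := p) (b := q) ?_ ?_).congr_right
    ((kcf_cons (.T p) _).trans ((LinPair.Iso.refl _).sum_congr (kcf_singleton (.L q)))).symm
  · rw [← h, natDegree_prod_of_monic _ _ fun μ _ => (monic_X_sub_C μ).pow _]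
    simp
  · rw [Module.finrank_fin_fun, total_cols_jordanFamily, h]

end Cyclic

/-! ### The dominance order -/

namespace Block

/-- Indicator of the blocks `L m`. -/
def countL : Block → ℕ
  | L _ => 1
  | _ => 0

/-- The index of a block `L m`, zero on other blocks. -/
def indexL : Block → ℕ
  | L m => m
  | _ => 0

/-- The size of a block `E k ν`, zero on other blocks. -/
def sizeE : Block → ℕ
  | E k _ => k + 1
  | _ => 0

open Classical in
/-- The size of a block `E k μ`, zero on other blocks. -/
def sizeAt (μ : ℂ) : Block → ℕ
  | E k ν => if μ = ν then k + 1 else 0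
  | _ => 0

/-- The size of a block `E k μ` truncated at `K`, zero on other blocks. -/
def truncSize (μ : ℂ) (K : ℕ) (b : Block) : ℕ := min (b.sizeAt μ) K

/-- The eigenvalue of a block, if any. -/
def eigenvalue? : Block → Option ℂ
  | E _ μ => some μ
  | _ => none

@[simp] theorem hL_L (K m : ℕ) : hL K (L m) = K - m := rfl

@[simp] theorem countL_L (m : ℕ) : countL (L m) = 1 := rfl

@[simp] theorem indexL_L (m : ℕ) : indexL (L m) = m := rfl

@[simp] theorem sizeE_L (m : ℕ) : sizeE (L m) = 0 := rfl

@[simp] theorem truncSize_L (μ : ℂ) (K m : ℕ) : truncSize μ K (L m) = 0 := Nat.zero_min _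

theorem eq_E_of_sizeAt_eq {b : Block} {μ : ℂ} {k : ℕ} (h : b.sizeAt μ = k + 1) : b = E k μ := by
  cases b with
  | E j ν =>
    simp only [sizeAt] at h
    split_ifs at h with hμ
    rw [hμ, Nat.succ.inj h]
  | _ => simp [sizeAt] at h

theorem eq_L_of_indexL_eq {b : Block} {m : ℕ} (h : b.indexL = m + 1) : b = L (m + 1) := by
  cases b with
  | L k => exact congrArg L h
  | _ => simp [indexL] at h

theorem sum_sizeAt_le (S : Finset ℂ) (b : Block) : ∑ μ ∈ S, b.sizeAt μ ≤ b.sizeE := by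
  cases b with
  | E k ν =>
    simp only [sizeAt, sizeE, Finset.sum_ite_eq']
    split_ifs <;> simp
  | _ => simp [sizeAt]

theorem sum_sizeAt_eq {S : Finset ℂ} {b : Block} (h : ∀ μ ∈ b.eigenvalue?, μ ∈ S) :
    ∑ μ ∈ S, b.sizeAt μ = b.sizeE := by
  cases b with
  | E k ν => simp only [sizeAt, sizeE, Finset.sum_ite_eq', if_pos (h ν rfl)]
  | _ => simp [sizeAt, sizeE]

end Block

section Totals

variable {f : Block → ℕ} {l : List Block}

theorem total_finsetSum {ι : Type*} (S : Finset ι) (f : ι → Block → ℕ) (l : List Block) :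
    total (fun b => ∑ i ∈ S, f i b) l = ∑ i ∈ S, total (f i) l := by
  induction l with
  | nil => simp
  | cons b l ih => simp only [total_cons, ih, Finset.sum_add_distrib]

/-- The largest value of `f` on `l`, zero if `l` is empty. -/
def maxValue (f : Block → ℕ) (l : List Block) : ℕ := (l.map f).foldr max 0

theorem le_maxValue {b : Block} (h : b ∈ l) : f b ≤ maxValue f l := by
  induction h with
  | head => exact le_max_left _ _
  | tail _ _ ih => exact ih.trans (le_max_right _ _)

theorem exists_eq_maxValue (h : maxValue f l ≠ 0) : ∃ b ∈ l, f b = maxValue f l := by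
  induction l with
  | nil => exact absurd rfl h
  | cons b l ih =>
    have maxValue_cons : maxValue f (b :: l) = max (f b) (maxValue f l) := rfl
    rw [maxValue_cons] at h ⊢
    rcases le_or_gt (maxValue f l) (f b) with hb | hb
    · exact ⟨b, .head _, (max_eq_left hb).symm⟩
    · obtain ⟨b', hb', e⟩ := ih (by omega)
      exact ⟨b', .tail _ hb', e.trans (max_eq_right hb.le).symm⟩

theorem L_mem_of_maxValue_indexL {m : ℕ} (h : maxValue Block.indexL l = m + 1) :
    Block.L (m + 1) ∈ l := by
  obtain ⟨b, hb, e⟩ := exists_eq_maxValue (h.trans_ne m.succ_ne_zero)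
  rwa [Block.eq_L_of_indexL_eq (e.trans h)] at hb

theorem jordanList_sizeAt_subset {b : Block} (hb : b ∈ l) (μ : ℂ) :
    jordanList (b.sizeAt μ) μ ⊆ l := by
  cases h : b.sizeAt μ with
  | zero => exact List.nil_subset l
  | succ k =>
    rw [Block.eq_E_of_sizeAt_eq h] at hb
    simpa [jordanList] using hb

theorem jordanList_maxValue_subset (μ : ℂ) (l : List Block) :
    jordanList (maxValue (Block.sizeAt μ) l) μ ⊆ l := by
  by_cases h : maxValue (Block.sizeAt μ) l = 0
  · rw [h]
    exact List.nil_subset l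
  · obtain ⟨b, hb, e⟩ := exists_eq_maxValue h
    exact e ▸ jordanList_sizeAt_subset hb μ

theorem total_countL_mul_le (K : ℕ) (l : List Block) :
    total Block.countL l * K ≤ total (Block.hL K) l + total Block.indexL l := by
  rw [mul_comm, ← total_mul, ← total_add]
  refine total_le fun b _ => ?_
  cases b with
  | L m =>
    simp only [Block.countL_L, Block.hL_L, Block.indexL_L]
    omega
  | _ => simp [Block.countL]

theorem total_countL_mul_eq {K : ℕ} (h : maxValue Block.indexL l ≤ K) :
    total Block.countL l * K = total (Block.hL K) l + total Block.indexL l := by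
  rw [mul_comm, ← total_mul, ← total_add]
  refine total_congr fun b hb => ?_
  have index_le : b.indexL ≤ K := (le_maxValue hb).trans h
  cases b with
  | L m =>
    simp only [Block.countL_L, Block.hL_L, Block.indexL_L] at index_le ⊢
    omega
  | _ => simp [Block.countL, Block.hL, Block.indexL]

theorem total_hL_zero (l : List Block) : total (Block.hL 0) l = 0 := by
  induction l with
  | nil => rfl
  | cons b l ih => cases b <;> simp [ih, Block.hL]

theorem total_truncSize_zero (μ : ℂ) (l : List Block) : total (Block.truncSize μ 0) l = 0 := by
  induction l with
  | nil => rfl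
  | cons b l ih => rw [total_cons, ih, Block.truncSize, Nat.min_zero]

theorem total_truncSize_le (μ : ℂ) (K : ℕ) :
    total (Block.truncSize μ K) l ≤ total (Block.sizeAt μ) l :=
  total_le fun _ _ => min_le_left _ _

theorem total_truncSize_mono (μ : ℂ) {K K' : ℕ} (h : K ≤ K') :
    total (Block.truncSize μ K) l ≤ total (Block.truncSize μ K') l :=
  total_le fun _ _ => min_le_min_left _ h

theorem total_truncSize_eq {μ : ℂ} {K : ℕ} (h : maxValue (Block.sizeAt μ) l ≤ K) :
    total (Block.truncSize μ K) l = total (Block.sizeAt μ) l :=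
  total_congr fun _ hb => min_eq_left ((le_maxValue hb).trans h)

theorem total_truncSize_lt {μ : ℂ} {K : ℕ} (h : K < maxValue (Block.sizeAt μ) l) :
    total (Block.truncSize μ K) l < total (Block.truncSize μ (K + 1)) l := by
  obtain ⟨b, hb, e⟩ := exists_eq_maxValue (f := Block.sizeAt μ) (l := l) (by omega)
  refine List.sum_lt_sum _ _ (fun b _ => min_le_min_left _ K.le_succ) ⟨b, hb, ?_⟩
  simp only [Block.truncSize]
  omega

theorem total_truncSize_concave (l : List Block) (μ : ℂ) (u : ℕ) :
    total (Block.truncSize μ u) l + total (Block.truncSize μ (u + 2)) l ≤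
      2 * total (Block.truncSize μ (u + 1)) l := by
  rw [← total_add, ← total_mul]
  refine total_le fun b _ => ?_
  simp only [Block.truncSize]
  omega

theorem jordanList_subset_of_total_truncSize_lt {μ : ℂ} {u : ℕ}
    (h : total (Block.truncSize μ u) l + total (Block.truncSize μ (u + 2)) l <
      2 * total (Block.truncSize μ (u + 1)) l) : jordanList (u + 1) μ ⊆ l := by
  rw [← total_add, ← total_mul] at h
  obtain ⟨b, hb, h⟩ := exists_lt_of_total_lt h
  have size_eq : b.sizeAt μ = u + 1 := by
    simp only [Block.truncSize] at h
    omega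
  exact size_eq ▸ jordanList_sizeAt_subset hb μ

theorem total_hL_convex (l : List Block) (s d : ℕ) :
    total (Block.hL (s + 1)) l + total (Block.hL (s + d + 1)) l ≤
      total (Block.hL s) l + total (Block.hL (s + d + 2)) l := by
  rw [← total_add, ← total_add]
  refine total_le fun b _ => ?_
  cases b with
  | L m =>
    simp only [Block.hL_L]
    omega
  | _ => simp [Block.hL]

theorem exists_L_mem_of_total_hL_lt {s d : ℕ}
    (h : total (Block.hL (s + 1)) l + total (Block.hL (s + d + 1)) l <
      total (Block.hL s) l + total (Block.hL (s + d + 2)) l) :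
    ∃ k, s < k ∧ k < s + d + 2 ∧ Block.L k ∈ l := by
  rw [← total_add, ← total_add] at h
  obtain ⟨b, hb, h⟩ := exists_lt_of_total_lt h
  cases b with
  | L k =>
    simp only [Block.hL_L] at h
    exact ⟨k, by omega, by omega, hb⟩
  | _ => simp [Block.hL] at h

theorem total_hE_eq (hl : ∀ m, Block.T m ∉ l) (K : ℕ) (μ : ℂ) :
    total (Block.hE K μ) l = K * total Block.countL l + total (Block.truncSize μ K) l := by
  rw [← total_mul, ← total_add]
  refine total_congr fun b hb => ?_
  cases b with
  | T m => exact absurd hb (hl m)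
  | L m => simp [Block.hE]
  | E k ν =>
    simp only [Block.hE, Block.countL, Block.truncSize, Block.sizeAt]
    split_ifs <;> simp

theorem total_map_dual (f : Block → ℕ) (l : List Block) :
    total f (l.map Block.dual) = total (fun b => f b.dual) l := by
  simp [total, Function.comp_def]

theorem total_hL_map_dual (hl : ∀ m, Block.T m ∉ l) (K : ℕ) :
    total (Block.hL K) (l.map Block.dual) = 0 := by
  rw [total_map_dual]
  refine (total_congr (g := fun _ => 0) fun b hb => ?_).trans (by simp [total])
  cases b with
  | T m => exact absurd hb (hl m)
  | _ => rfl

open Classical in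
/-- The eigenvalues of the blocks of a list. -/
def eigenvalues (l : List Block) : Finset ℂ := (l.filterMap Block.eigenvalue?).toFinset

theorem mem_eigenvalues {μ : ℂ} : μ ∈ eigenvalues l ↔ ∃ b ∈ l, b.eigenvalue? = some μ := by
  simp [eigenvalues]

theorem sum_total_sizeAt_le (S : Finset ℂ) (l : List Block) :
    ∑ μ ∈ S, total (Block.sizeAt μ) l ≤ total Block.sizeE l := by
  rw [← total_finsetSum]
  exact total_le fun b _ => b.sum_sizeAt_le S

theorem sum_total_sizeAt_eq {S : Finset ℂ} (h : eigenvalues l ⊆ S) :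
    ∑ μ ∈ S, total (Block.sizeAt μ) l = total Block.sizeE l := by
  rw [← total_finsetSum]
  exact total_congr fun b hb => Block.sum_sizeAt_eq fun μ hμ =>
    h (mem_eigenvalues.2 ⟨b, hb, hμ⟩)

theorem maxValue_sizeAt_eq_zero {μ : ℂ} (h : μ ∉ eigenvalues l) :
    maxValue (Block.sizeAt μ) l = 0 := by
  by_contra h0
  obtain ⟨b, hb, e⟩ := exists_eq_maxValue h0
  obtain ⟨k, hk⟩ := Nat.exists_eq_succ_of_ne_zero (e ▸ h0)
  exact h (mem_eigenvalues.2 ⟨b, hb, Block.eq_E_of_sizeAt_eq hk ▸ rfl⟩)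

end Totals

section JordanList

theorem total_jordanList_eq_zero {f : Block → ℕ} (hf : ∀ k ν, f (.E k ν) = 0) (j : ℕ) (μ : ℂ) :
    total f (jordanList j μ) = 0 := by
  cases j <;> simp [jordanList, hf]

@[simp] theorem total_hL_jordanList (K j : ℕ) (μ : ℂ) :
    total (Block.hL K) (jordanList j μ) = 0 :=
  total_jordanList_eq_zero (fun _ _ => rfl) j μ

@[simp] theorem total_countL_jordanList (j : ℕ) (μ : ℂ) :
    total Block.countL (jordanList j μ) = 0 :=
  total_jordanList_eq_zero (fun _ _ => rfl) j μ

@[simp] theorem total_indexL_jordanList (j : ℕ) (μ : ℂ) :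
    total Block.indexL (jordanList j μ) = 0 :=
  total_jordanList_eq_zero (fun _ _ => rfl) j μ

@[simp] theorem total_sizeE_jordanList (j : ℕ) (μ : ℂ) :
    total Block.sizeE (jordanList j μ) = j := by
  cases j <;> simp [jordanList, Block.sizeE]

@[simp] theorem total_sizeE_sq_jordanList (j : ℕ) (μ : ℂ) :
    total (fun b => b.sizeE ^ 2) (jordanList j μ) = j ^ 2 := by
  cases j <;> simp [jordanList, Block.sizeE]

open Classical in
@[simp] theorem total_truncSize_jordanList (K j : ℕ) (μ ν : ℂ) :
    total (Block.truncSize ν K) (jordanList j μ) = if ν = μ then min j K else 0 := by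
  cases j
  · simp [jordanList]
  · simp only [jordanList, total_cons, total_nil, Block.truncSize, Block.sizeAt]
    split_ifs <;> simp

@[simp] theorem T_notMem_jordanList (m j : ℕ) (μ : ℂ) : Block.T m ∉ jordanList j μ := by
  cases j <;> simp [jordanList]

theorem L_notMem_jordanList (m j : ℕ) (μ : ℂ) : Block.L m ∉ jordanList j μ := by
  cases j <;> simp [jordanList]

theorem nodup_jordanList (j : ℕ) (μ : ℂ) : (jordanList j μ).Nodup := by
  cases j <;> simp [jordanList]

theorem disjoint_jordanList_of_ne {j k : ℕ} (μ : ℂ) (h : j ≠ k) :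
    (jordanList j μ).Disjoint (jordanList k μ) := by
  cases j <;> cases k <;> simp_all [jordanList, eq_comm]

theorem nodup_jordanFamily (a : ℂ → ℕ) (s : Finset ℂ) : (jordanFamily a s).Nodup := by
  refine List.nodup_flatMap.2 ⟨fun μ _ => nodup_jordanList _ μ, s.nodup_toList.imp ?_⟩
  intro μ ν h
  change (jordanList (a μ) μ).Disjoint (jordanList (a ν) ν)
  cases a μ <;> cases a ν <;> simp [jordanList, h.symm]

theorem exists_perm_append_of_subset {a l : List Block} (ha : a.Nodup) (h : a ⊆ l) :
    ∃ c, l.Perm (a ++ c) := by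
  obtain ⟨a', perm, sublist⟩ := List.subperm_of_subset ha h
  obtain ⟨c, hc⟩ := sublist.exists_perm_append
  exact ⟨c, hc.trans (perm.append_right c)⟩

end JordanList

/-- The size of the skew-symmetric pencil whose off-diagonal part is described by `l`. -/
def skewSize (l : List Block) : ℕ :=
  2 * total Block.indexL l + total Block.countL l + 2 * total Block.sizeE l

/-- The value of `homDim (Eblk K μ)` on the skew-symmetric pencil whose off-diagonal part is
described by `l`. -/
def skewHomE (μ : ℂ) (K : ℕ) (l : List Block) : ℕ :=
  total Block.countL l * K + 2 * total (Block.truncSize μ K) l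

/-- The order on lists of blocks which governs the closure relation between the orbits of the
skew-symmetric pencils with off-diagonal parts described by these lists. -/
structure Dominates (l l' : List Block) : Prop where
  le_hL : ∀ K, total (Block.hL K) l ≤ total (Block.hL K) l'
  le_skewHomE : ∀ K μ, skewHomE μ K l ≤ skewHomE μ K l'
  skewSize_eq : skewSize l = skewSize l'

/-- A measure of how far a list `l` dominating `l'` is above it. -/
def deficit (l l' : List Block) : ℕ ×ₗ ℕ :=
  toLex (∑ K ∈ Finset.range (skewSize l' + 1), (total (Block.hL K) l' - total (Block.hL K) l),
    total (fun b => b.sizeE ^ 2) l)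

/-- Some elementary degeneration of `l` still dominates `l'` and has a smaller deficit. -/
def HasStepBelow (l l' : List Block) : Prop :=
  ∃ k, (∀ m, Block.T m ∉ k) ∧ DegenStep l k ∧ Dominates k l' ∧ deficit k l' < deficit l l'

section Steps

variable {l l' a a' c : List Block}

@[simp] theorem skewSize_nil : skewSize [] = 0 := rfl

@[simp] theorem skewSize_cons_L (m : ℕ) (l : List Block) :
    skewSize (.L m :: l) = 2 * m + 1 + skewSize l := by
  simp only [skewSize, total_cons, Block.indexL_L, Block.countL_L, Block.sizeE_L]
  ring

theorem skewSize_append (l l' : List Block) :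
    skewSize (l ++ l') = skewSize l + skewSize l' := by
  simp only [skewSize, total_append]
  ring

theorem skewSize_perm (h : l.Perm l') : skewSize l = skewSize l' := by
  simp only [skewSize, total_perm h]

theorem skewSize_jordanList (j : ℕ) (μ : ℂ) : skewSize (jordanList j μ) = 2 * j := by
  simp [skewSize]

@[simp] theorem skewHomE_nil (μ : ℂ) (K : ℕ) : skewHomE μ K [] = 0 := by simp [skewHomE]

@[simp] theorem skewHomE_cons_L (μ : ℂ) (K m : ℕ) (l : List Block) :
    skewHomE μ K (.L m :: l) = K + skewHomE μ K l := by
  simp only [skewHomE, total_cons, Block.countL_L, Block.truncSize_L]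
  ring

theorem skewHomE_append (μ : ℂ) (K : ℕ) (l l' : List Block) :
    skewHomE μ K (l ++ l') = skewHomE μ K l + skewHomE μ K l' := by
  simp only [skewHomE, total_append]
  ring

theorem skewHomE_perm (h : l.Perm l') (μ : ℂ) (K : ℕ) : skewHomE μ K l = skewHomE μ K l' := by
  simp only [skewHomE, total_perm h]

open Classical in
theorem skewHomE_jordanList (μ ν : ℂ) (K j : ℕ) :
    skewHomE ν K (jordanList j μ) = if ν = μ then 2 * min j K else 0 := by
  simp [skewHomE]

theorem deficit_lt (hd : Dominates a' l') (hL : ∀ K, total (Block.hL K) a ≤ total (Block.hL K) a')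
    (h : (∃ K ≤ skewSize l', total (Block.hL K) a < total (Block.hL K) a') ∨
      total (fun b => b.sizeE ^ 2) a' < total (fun b => b.sizeE ^ 2) a) :
    deficit a' l' < deficit a l' := by
  have sum_le : ∑ K ∈ Finset.range (skewSize l' + 1),
      (total (Block.hL K) l' - total (Block.hL K) a') ≤ ∑ K ∈ Finset.range (skewSize l' + 1),
      (total (Block.hL K) l' - total (Block.hL K) a) :=
    Finset.sum_le_sum fun K _ => Nat.sub_le_sub_left (hL K) _
  refine Prod.Lex.toLex_lt_toLex.2 ?_
  rcases h with ⟨K, hK, hlt⟩ | h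
  · refine .inl (Finset.sum_lt_sum (fun K _ => Nat.sub_le_sub_left (hL K) _)
      ⟨K, Finset.mem_range_succ_iff.2 hK, ?_⟩)
    have := hd.le_hL K
    omega
  · exact sum_le.lt_or_eq.imp_right fun e => ⟨e, h⟩

theorem HasStepBelow.of_perm (hl : ∀ m, Block.T m ∉ l) (hd : Dominates l l')
    (hp : l.Perm (a ++ c)) (hstep : DegenStep a a') (ha' : ∀ m, Block.T m ∉ a')
    (hsize : skewSize a' = skewSize a)
    (hhL : ∀ K, total (Block.hL K) a' + total (Block.hL K) l ≤
      total (Block.hL K) a + total (Block.hL K) l')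
    (hhE : ∀ K μ, skewHomE μ K a' + skewHomE μ K l ≤ skewHomE μ K a + skewHomE μ K l')
    (hmono : ∀ K, total (Block.hL K) a ≤ total (Block.hL K) a')
    (hlt : (∃ K ≤ skewSize a, total (Block.hL K) a < total (Block.hL K) a') ∨
      total (fun b => b.sizeE ^ 2) a' < total (fun b => b.sizeE ^ 2) a) :
    HasStepBelow l l' := by
  have total_eq (f : Block → ℕ) : total f l = total f a + total f c := by
    rw [total_perm hp, total_append]
  have dominates : Dominates (a' ++ c) l' := by
    refine ⟨fun K => ?_, fun K μ => ?_, ?_⟩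
    · have := hhL K
      rw [total_eq] at this
      rw [total_append]
      omega
    · have := hhE K μ
      rw [skewHomE_perm hp, skewHomE_append] at this
      rw [skewHomE_append]
      omega
    · rw [skewSize_append, hsize, ← skewSize_append, ← skewSize_perm hp, hd.skewSize_eq]
  refine ⟨a' ++ c, fun m hm => ?_, hstep.append hp, dominates, deficit_lt dominates ?_ ?_⟩
  · rcases List.mem_append.1 hm with h | h
    · exact ha' m h
    · exact hl m (hp.mem_iff.2 (List.mem_append_right a h))
  · intro K
    rw [total_eq, total_append]
    exact Nat.add_le_add_right (hmono K) _
  · simp only [total_eq, total_append, add_lt_add_iff_right]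
    refine hlt.imp_left fun ⟨K, hK, h⟩ => ⟨K, hK.trans ?_, h⟩
    rw [← hd.skewSize_eq, skewSize_perm hp, skewSize_append]
    exact Nat.le_add_right _ _

theorem HasStepBelow.of_L_E (hl : ∀ m, Block.T m ∉ l) (hd : Dominates l l') {m e : ℕ} {μ : ℂ}
    (hm : Block.L (m + 1) ∈ l) (he : jordanList e μ ⊆ l)
    (hhL : ∀ K ≥ m + 1, total (Block.hL K) l < total (Block.hL K) l')
    (hhE : ∀ K ≥ e + 1, skewHomE μ K l + 2 ≤ skewHomE μ K l') : HasStepBelow l l' := by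
  obtain ⟨c, hc⟩ := exists_perm_append_of_subset
    (List.nodup_cons.2 ⟨L_notMem_jordanList (m + 1) e μ, nodup_jordanList e μ⟩)
    (List.cons_subset.2 ⟨hm, he⟩)
  refine .of_perm hl hd hc (degenStep_L_E m e μ) (by simp) ?_ (fun K => ?_) (fun K ν => ?_)
    (fun K => ?_) (.inl ⟨m + 1, ?_, ?_⟩)
  · simp only [skewSize_append, skewSize_cons_L, skewSize_nil, skewSize_jordanList]
    ring
  · have le_l' := hd.le_hL K
    have lt_l' := hhL K
    simp only [total_append, total_cons, total_nil, Block.hL_L, total_hL_jordanList]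
    omega
  · have le_l' := hd.le_skewHomE K ν
    have lt_l' := hhE K
    simp only [skewHomE_append, skewHomE_cons_L, skewHomE_nil, skewHomE_jordanList]
    split_ifs with h
    · subst h
      omega
    · omega
  · simp only [total_append, total_cons, total_nil, Block.hL_L, total_hL_jordanList]
    omega
  · simp only [skewSize_cons_L]
    omega
  · simp

theorem HasStepBelow.of_L_L (hl : ∀ m, Block.T m ∉ l) (hd : Dominates l l') {j k : ℕ}
    (hjk : j + 1 ≤ k) (hp : l.Perm ([.L (j + 1), .L k] ++ c))
    (h : ∀ K, j < K → K ≤ k → total (Block.hL K) l < total (Block.hL K) l') :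
    HasStepBelow l l' := by
  refine .of_perm hl hd hp (degenStep_L_L hjk) (by simp) ?_ (fun K => ?_) (fun K ν => ?_)
    (fun K => ?_) (.inl ⟨j + 1, ?_, ?_⟩)
  · simp only [skewSize_cons_L]
    ring
  · have le_l' := hd.le_hL K
    have lt_l' := h K
    simp only [total_cons, total_nil, Block.hL_L]
    omega
  · simpa only [skewHomE_cons_L, add_le_add_iff_left] using hd.le_skewHomE K ν
  · simp only [total_cons, total_nil, Block.hL_L]
    omega
  · simp only [skewSize_cons_L]
    omega
  · simp only [total_cons, total_nil, Block.hL_L]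
    omega

theorem HasStepBelow.of_E_E (hl : ∀ m, Block.T m ∉ l) (hd : Dominates l l') {b s : ℕ} {μ : ℂ}
    (hs : 0 < s) (hbs : jordanList (b + s + 1) μ ⊆ l) (hb : jordanList b μ ⊆ l)
    (h : ∀ K, b < K → K < b + s + 1 → skewHomE μ K l + 2 ≤ skewHomE μ K l') :
    HasStepBelow l l' := by
  obtain ⟨c, hc⟩ := exists_perm_append_of_subset
    ((nodup_jordanList (b + s + 1) μ).append (nodup_jordanList b μ)
      (disjoint_jordanList_of_ne μ (by omega))) (List.append_subset.2 ⟨hbs, hb⟩)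
  refine .of_perm hl hd hc (degenStep_E_E b s μ) (by simp) ?_ (fun K => ?_) (fun K ν => ?_)
    (fun K => ?_) (.inr ?_)
  · simp only [skewSize_append, skewSize_jordanList]
    ring
  · simpa using hd.le_hL K
  · have le_l' := hd.le_skewHomE K ν
    have lt_l' := h K
    simp only [skewHomE_append, skewHomE_jordanList]
    split_ifs with hν
    · subst hν
      omega
    · omega
  · simp
  · simp only [total_append, total_sizeE_sq_jordanList]
    nlinarith

theorem jordanFamily_maxValue_subset (l : List Block) (s : Finset ℂ) :
    jordanFamily (fun μ => maxValue (Block.sizeAt μ) l) s ⊆ l := fun _ hb =>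
  let ⟨μ, _, hb⟩ := List.mem_flatMap.1 hb
  jordanList_maxValue_subset μ l hb

theorem skewSize_jordanFamily (a : ℂ → ℕ) (s : Finset ℂ) :
    skewSize (jordanFamily a s) = 2 * ∑ μ ∈ s, a μ := by
  simp [skewSize]

theorem skewHomE_jordanFamily_maxValue (l : List Block) (μ : ℂ) (K : ℕ) :
    skewHomE μ K (jordanFamily (fun μ => maxValue (Block.sizeAt μ) l) (eigenvalues l)) =
      2 * min (maxValue (Block.sizeAt μ) l) K := by
  simp only [skewHomE, total_jordanFamily, total_countL_jordanList, Finset.sum_const_zero,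
    zero_mul, zero_add, total_truncSize_jordanList, Finset.sum_ite_eq]
  split_ifs with h
  · rfl
  · rw [maxValue_sizeAt_eq_zero h, Nat.zero_min]

theorem HasStepBelow.of_E_LL (hl : ∀ m, Block.T m ∉ l) (hd : Dominates l l') {p q : ℕ}
    (hpq : ∑ μ ∈ eigenvalues l, maxValue (Block.sizeAt μ) l = p + q + 1)
    (hhL : ∀ K, total (Block.hL K) l + ((K - p) + (K - q)) ≤ total (Block.hL K) l')
    (hhE : ∀ K μ, skewHomE μ K l + 2 * K ≤
      skewHomE μ K l' + 2 * min (maxValue (Block.sizeAt μ) l) K) : HasStepBelow l l' := by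
  obtain ⟨c, hc⟩ := exists_perm_append_of_subset (nodup_jordanFamily _ _)
    (jordanFamily_maxValue_subset l (eigenvalues l))
  refine .of_perm hl hd hc (degenStep_E_LL _ _ hpq) (by simp) ?_ (fun K => ?_) (fun K ν => ?_)
    (fun K => ?_) (.inl ⟨p + 1, ?_, ?_⟩)
  · simp only [skewSize_cons_L, skewSize_nil, skewSize_jordanFamily, hpq]
    ring
  · have le_l' := hhL K
    simp only [total_cons, total_nil, Block.hL_L, total_jordanFamily, total_hL_jordanList,
      Finset.sum_const_zero]
    omega
  · have le_l' := hhE K ν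
    simp only [skewHomE_cons_L, skewHomE_nil, skewHomE_jordanFamily_maxValue]
    omega
  · simp
  · rw [skewSize_jordanFamily, hpq]
    omega
  · simp

end Steps

section Dominates

variable {l l' : List Block} {c : ℕ}

theorem Dominates.countL_le (hd : Dominates l l') :
    total Block.countL l ≤ total Block.countL l' := by
  have lower := total_countL_mul_le (total Block.indexL l + 1) l
  have middle := hd.le_hL (total Block.indexL l + 1)
  have upper : total (Block.hL (total Block.indexL l + 1)) l' ≤
      (total Block.indexL l + 1) * total Block.countL l' := by
    rw [← total_mul]
    refine total_le fun b _ => ?_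
    cases b <;> simp [Block.hL]
  by_contra! h
  nlinarith

theorem Dominates.exists_countL_eq (hd : Dominates l l') :
    ∃ c, total Block.countL l' = total Block.countL l + 2 * c := by
  have le := hd.countL_le
  have size_eq := hd.skewSize_eq
  simp only [skewSize] at size_eq
  exact ⟨(total Block.countL l' - total Block.countL l) / 2, by omega⟩

theorem Dominates.skewHomE_add_le (hd : Dominates l l')
    (hc : total Block.countL l' = total Block.countL l + 2 * c) {μ : ℂ} {K : ℕ}
    (hK : maxValue (Block.sizeAt μ) l ≤ K) :
    skewHomE μ K l + 2 * c * (K - maxValue (Block.sizeAt μ) l) ≤ skewHomE μ K l' := by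
  obtain ⟨v, hv⟩ := Nat.exists_eq_add_of_le hK
  have le_top := hd.le_skewHomE (maxValue (Block.sizeAt μ) l) μ
  have mono := total_truncSize_mono (l := l') μ hK
  simp only [skewHomE, hc] at le_top ⊢
  rw [total_truncSize_eq le_rfl] at le_top
  rw [total_truncSize_eq hK, hv, Nat.add_sub_cancel_left, ← hv]
  nlinarith

theorem Dominates.total_sizeAt_le (hd : Dominates l l')
    (hc : total Block.countL l' = total Block.countL l + 2 * c) (μ : ℂ) :
    total (Block.sizeAt μ) l ≤ c * maxValue (Block.sizeAt μ) l + total (Block.sizeAt μ) l' := by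
  have le_top := hd.le_skewHomE (maxValue (Block.sizeAt μ) l) μ
  have trunc_le := total_truncSize_le (l := l') μ (maxValue (Block.sizeAt μ) l)
  rw [skewHomE, skewHomE, total_truncSize_eq le_rfl, hc] at le_top
  linarith

theorem Dominates.total_indexL_add_le (hd : Dominates l l')
    (hc : total Block.countL l' = total Block.countL l + 2 * c) :
    total Block.indexL l' + c ≤
      total Block.indexL l + c * ∑ μ ∈ eigenvalues l, maxValue (Block.sizeAt μ) l := by
  have size_eq := hd.skewSize_eq
  have sizeE_le : total Block.sizeE l ≤
      c * ∑ μ ∈ eigenvalues l, maxValue (Block.sizeAt μ) l + total Block.sizeE l' := calc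
    total Block.sizeE l = ∑ μ ∈ eigenvalues l, total (Block.sizeAt μ) l :=
      (sum_total_sizeAt_eq subset_rfl).symm
    _ ≤ ∑ μ ∈ eigenvalues l,
        (c * maxValue (Block.sizeAt μ) l + total (Block.sizeAt μ) l') :=
      Finset.sum_le_sum fun μ _ => hd.total_sizeAt_le hc μ
    _ ≤ _ := by
      rw [Finset.sum_add_distrib, Finset.mul_sum]
      exact Nat.add_le_add_left (sum_total_sizeAt_le _ l') _
  simp only [skewSize] at size_eq
  omega

theorem Dominates.total_hL_add_le (hd : Dominates l l')
    (hc : total Block.countL l' = total Block.countL l + 2 * c) (hc0 : 0 < c) {K : ℕ}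
    (hK : maxValue Block.indexL l ≤ K) :
    total (Block.hL K) l + (2 * K + 1 - ∑ μ ∈ eigenvalues l, maxValue (Block.sizeAt μ) l) ≤
      total (Block.hL K) l' := by
  have index_le := hd.total_indexL_add_le hc
  have eq_l := total_countL_mul_eq hK
  have le_l' := total_countL_mul_le K l'
  rw [hc] at le_l'
  set k := ∑ μ ∈ eigenvalues l, maxValue (Block.sizeAt μ) l
  rcases le_or_gt (2 * K + 1) k with h | h
  · rw [Nat.sub_eq_zero_of_le h]
    exact hd.le_hL K
  · obtain ⟨v, hv⟩ := Nat.exists_eq_add_of_le h.le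
    have le_mul : v ≤ c * v := Nat.le_mul_of_pos_left _ hc0
    have c_mul : c * (2 * K + 1) = c * k + c * v := by rw [hv, mul_add]
    rw [hv, Nat.add_sub_cancel_left]
    linarith

theorem Dominates.hasStepBelow_of_countL_lt_of_ne (hl : ∀ m, Block.T m ∉ l) (hd : Dominates l l')
    (hr : total Block.countL l < total Block.countL l')
    (h : ∀ K ≥ maxValue Block.indexL l, total (Block.hL K) l ≠ total (Block.hL K) l') :
    HasStepBelow l l' := by
  obtain ⟨c, hc⟩ := hd.exists_countL_eq
  cases hm : maxValue Block.indexL l with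
  | zero => exact absurd ((total_hL_zero l).trans (total_hL_zero l').symm) (h 0 hm.le)
  | succ m =>
    refine .of_L_E hl hd (L_mem_of_maxValue_indexL hm) (jordanList_maxValue_subset 0 l)
      (fun K hK => (hd.le_hL K).lt_of_ne (h K (hm.trans_le hK))) fun K hK => ?_
    have add_le := hd.skewHomE_add_le hc (Nat.le_of_succ_le hK)
    have := Nat.mul_pos (show 0 < c by omega) (Nat.sub_pos_of_lt hK)
    nlinarith

theorem Dominates.hasStepBelow_of_countL_lt_of_eq (hl : ∀ m, Block.T m ∉ l) (hd : Dominates l l')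
    (hr : total Block.countL l < total Block.countL l') {K₀ : ℕ}
    (hK₀ : maxValue Block.indexL l ≤ K₀) (h : total (Block.hL K₀) l = total (Block.hL K₀) l') :
    HasStepBelow l l' := by
  obtain ⟨c, hc⟩ := hd.exists_countL_eq
  have hc0 : 0 < c := by omega
  obtain ⟨p, q, hpq, hp, hpq_le⟩ : ∃ p q,
      ∑ μ ∈ eigenvalues l, maxValue (Block.sizeAt μ) l = p + q + 1 ∧
        K₀ ≤ p ∧ p ≤ q ∧ q ≤ p + 1 := by
    have := hd.total_hL_add_le hc hc0 hK₀
    set k := ∑ μ ∈ eigenvalues l, maxValue (Block.sizeAt μ) l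
    exact ⟨(k - 1) / 2, k - 1 - (k - 1) / 2, by omega⟩
  refine .of_E_LL hl hd hpq (fun K => ?_) fun K μ => ?_
  · rcases le_or_gt K p with hK | hK
    · have := hd.le_hL K
      omega
    · have := hd.total_hL_add_le hc hc0 (K := K) (by omega)
      omega
  · rcases le_total K (maxValue (Block.sizeAt μ) l) with hK | hK
    · rw [min_eq_right hK]
      exact Nat.add_le_add_right (hd.le_skewHomE K μ) _
    · have add_le := hd.skewHomE_add_le hc hK
      obtain ⟨v, hv⟩ := Nat.exists_eq_add_of_le hK
      have : v ≤ c * v := Nat.le_mul_of_pos_left _ hc0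
      rw [min_eq_left hK]
      rw [hv, Nat.add_sub_cancel_left, ← hv] at add_le
      linarith

theorem Dominates.total_truncSize_le (hd : Dominates l l')
    (hr : total Block.countL l = total Block.countL l') (K : ℕ) (μ : ℂ) :
    total (Block.truncSize μ K) l ≤ total (Block.truncSize μ K) l' := by
  have := hd.le_skewHomE K μ
  rw [skewHomE, skewHomE, hr] at this
  omega

theorem Dominates.total_indexL_lt (hd : Dominates l l')
    (hr : total Block.countL l = total Block.countL l') {μ : ℂ}
    (hμ : total (Block.sizeAt μ) l < total (Block.sizeAt μ) l') :
    total Block.indexL l' < total Block.indexL l := by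
  classical
  have sizeE_lt : total Block.sizeE l < total Block.sizeE l' := calc
    total Block.sizeE l = ∑ ν ∈ insert μ (eigenvalues l), total (Block.sizeAt ν) l :=
      (sum_total_sizeAt_eq (Finset.subset_insert μ _)).symm
    _ < ∑ ν ∈ insert μ (eigenvalues l), total (Block.sizeAt ν) l' := by
      refine Finset.sum_lt_sum (fun ν _ => ?_) ⟨μ, Finset.mem_insert_self _ _, hμ⟩
      simpa using hd.total_sizeAt_le (c := 0) hr.symm ν
    _ ≤ total Block.sizeE l' := sum_total_sizeAt_le _ l'
  have size_eq := hd.skewSize_eq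
  simp only [skewSize] at size_eq
  omega

theorem Dominates.hasStepBelow_of_sizeAt_lt (hl : ∀ m, Block.T m ∉ l) (hd : Dominates l l')
    (hr : total Block.countL l = total Block.countL l') {μ : ℂ}
    (hμ : total (Block.sizeAt μ) l < total (Block.sizeAt μ) l') : HasStepBelow l l' := by
  have index_lt := hd.total_indexL_lt hr hμ
  have hL_lt {K : ℕ} (hK : maxValue Block.indexL l ≤ K) :
      total (Block.hL K) l < total (Block.hL K) l' := by
    have eq_l := total_countL_mul_eq hK
    have le_l' := total_countL_mul_le K l'
    rw [← hr] at le_l'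
    omega
  cases hm : maxValue Block.indexL l with
  | zero =>
    have := hL_lt hm.le
    rw [total_hL_zero, total_hL_zero] at this
    exact absurd this (lt_irrefl 0)
  | succ m =>
    refine .of_L_E hl hd (L_mem_of_maxValue_indexL hm) (jordanList_maxValue_subset μ l)
      (fun K hK => hL_lt (hm.trans_le hK)) fun K hK => ?_
    suffices total (Block.truncSize μ K) l < total (Block.truncSize μ K) l' by
      rw [skewHomE, skewHomE, hr]
      omega
    rw [total_truncSize_eq (Nat.le_of_succ_le hK)]
    rcases le_or_gt (maxValue (Block.sizeAt μ) l') K with hK' | hK'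
    · rwa [total_truncSize_eq hK']
    · calc total (Block.sizeAt μ) l
          = total (Block.truncSize μ (maxValue (Block.sizeAt μ) l)) l :=
            (total_truncSize_eq le_rfl).symm
        _ ≤ total (Block.truncSize μ (maxValue (Block.sizeAt μ) l)) l' :=
            hd.total_truncSize_le hr _ μ
        _ < total (Block.truncSize μ (maxValue (Block.sizeAt μ) l + 1)) l' :=
            total_truncSize_lt (by omega)
        _ ≤ total (Block.truncSize μ K) l' := total_truncSize_mono μ hK

theorem exists_maximal_lt_interval {f g : ℕ → ℕ} (hle : ∀ k, f k ≤ g k) (h0 : f 0 = g 0) {B : ℕ}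
    (hB : ∀ k ≥ B, f k = g k) {i : ℕ} (hi : f i ≠ g i) :
    ∃ s d, f s = g s ∧ f (s + d + 2) = g (s + d + 2) ∧
      ∀ k, s < k → k < s + d + 2 → f k < g k := by
  classical
  have eq_above : ∃ t, i < t ∧ f t = g t := ⟨B + i + 1, by omega, hB _ (by omega)⟩
  have eq_below := Nat.findGreatest_spec (P := fun s => f s = g s) (Nat.zero_le i) h0
  have eq_find := Nat.find_spec eq_above
  set s := Nat.findGreatest (fun s => f s = g s) i
  have s_lt : s < i := (Nat.findGreatest_le i).lt_of_ne fun h => hi (h ▸ eq_below)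
  have find_eq : Nat.find eq_above = s + (Nat.find eq_above - s - 2) + 2 := by omega
  refine ⟨s, Nat.find eq_above - s - 2, eq_below, find_eq ▸ eq_find.2, fun k hk hk' =>
    (hle k).lt_of_ne fun he => ?_⟩
  rcases le_or_gt k i with h | h
  · exact hk.not_ge (Nat.le_findGreatest h he)
  · exact Nat.find_min eq_above (by omega) ⟨h, he⟩

theorem Dominates.hasStepBelow_of_truncSize_ne (hl : ∀ m, Block.T m ∉ l) (hd : Dominates l l')
    (hr : total Block.countL l = total Block.countL l') {μ : ℂ}
    (hsize : total (Block.sizeAt μ) l = total (Block.sizeAt μ) l') {i : ℕ}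
    (hi : total (Block.truncSize μ i) l ≠ total (Block.truncSize μ i) l') :
    HasStepBelow l l' := by
  have le_l' (K : ℕ) := hd.total_truncSize_le hr K μ
  obtain ⟨s, d, eq_left, eq_right, lt_inside⟩ := exists_maximal_lt_interval le_l'
    (by rw [total_truncSize_zero, total_truncSize_zero])
    (B := max (maxValue (Block.sizeAt μ) l) (maxValue (Block.sizeAt μ) l'))
    (fun K hK => by rw [total_truncSize_eq (le_of_max_le_left hK),
      total_truncSize_eq (le_of_max_le_right hK), hsize]) hi
  have large_subset : jordanList (s + d + 1 + 1) μ ⊆ l := by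
    refine jordanList_subset_of_total_truncSize_lt ?_
    have concave := total_truncSize_concave l' μ (s + d + 1)
    have lt := lt_inside (s + d + 1) (by omega) (by omega)
    have le := le_l' (s + d + 1 + 2)
    rw [show s + d + 2 = s + d + 1 + 1 from rfl] at eq_right
    omega
  have small_subset : jordanList s μ ⊆ l := by
    cases s with
    | zero => exact List.nil_subset l
    | succ u =>
      refine jordanList_subset_of_total_truncSize_lt ?_
      have concave := total_truncSize_concave l' μ u
      have lt := lt_inside (u + 2) (by omega) (by omega)
      have le := le_l' u
      omega
  refine .of_E_E (s := d + 1) hl hd d.succ_pos large_subset small_subset fun K h h' => ?_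
  have := lt_inside K h (by omega)
  rw [skewHomE, skewHomE, hr]
  omega

theorem exists_perm_cons_of_mem {b : Block} (h : b ∈ l) : ∃ c, l.Perm (b :: c) := by
  obtain ⟨s, t, rfl⟩ := List.append_of_mem h
  exact ⟨s ++ t, List.perm_middle⟩

theorem exists_perm_L_L {s d : ℕ}
    (h : total (Block.hL (s + 1)) l + total (Block.hL (s + d + 1)) l + 2 ≤
      total (Block.hL s) l + total (Block.hL (s + d + 2)) l) :
    ∃ j k c, s ≤ j ∧ j + 1 ≤ k ∧ k < s + d + 2 ∧ l.Perm ([.L (j + 1), .L k] ++ c) := by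
  obtain ⟨k, hk, hk', k_mem⟩ := exists_L_mem_of_total_hL_lt (l := l) (s := s) (d := d) (by omega)
  obtain ⟨c, hc⟩ := exists_perm_cons_of_mem k_mem
  have hL_eq (K : ℕ) : total (Block.hL K) l = (K - k) + total (Block.hL K) c := by
    rw [total_perm hc, total_cons, Block.hL_L]
  simp only [hL_eq] at h
  obtain ⟨j, hj, hj', j_mem⟩ := exists_L_mem_of_total_hL_lt (l := c) (s := s) (d := d) (by omega)
  obtain ⟨c', hc'⟩ := exists_perm_cons_of_mem j_mem
  have perm : l.Perm (.L k :: .L j :: c') := hc.trans (hc'.cons _)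
  rcases le_total j k with hjk | hjk
  · exact ⟨j - 1, k, c', by omega, by omega, hk', by
      rw [Nat.sub_add_cancel (by omega)]
      exact perm.trans (.swap _ _ _)⟩
  · exact ⟨k - 1, j, c', by omega, by omega, hj', by rwa [Nat.sub_add_cancel (by omega)]⟩

theorem Dominates.hasStepBelow_of_hL_ne (hl : ∀ m, Block.T m ∉ l) (hd : Dominates l l')
    (hr : total Block.countL l = total Block.countL l')
    (hindex : total Block.indexL l = total Block.indexL l') {i : ℕ}
    (hi : total (Block.hL i) l ≠ total (Block.hL i) l') : HasStepBelow l l' := by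
  obtain ⟨s, d, eq_left, eq_right, lt_inside⟩ := exists_maximal_lt_interval hd.le_hL
    (by rw [total_hL_zero, total_hL_zero])
    (B := max (maxValue Block.indexL l) (maxValue Block.indexL l')) (fun K hK => by
      have eq_l := total_countL_mul_eq (le_of_max_le_left hK)
      have eq_l' := total_countL_mul_eq (le_of_max_le_right hK)
      rw [hr, eq_l', hindex] at eq_l
      omega) hi
  have convex := total_hL_convex l' s d
  have lt_left := lt_inside (s + 1) (by omega) (by omega)
  have lt_right := lt_inside (s + d + 1) (by omega) (by omega)
  obtain ⟨j, k, c, hj, hjk, hk, hp⟩ := exists_perm_L_L (l := l) (s := s) (d := d) (by omega)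
  exact .of_L_L hl hd hjk hp fun K _ _ => lt_inside K (by omega) (by omega)

theorem perm_of_skew_total_eq (hl : ∀ m, Block.T m ∉ l) (hl' : ∀ m, Block.T m ∉ l')
    (hL : ∀ K, total (Block.hL K) l = total (Block.hL K) l')
    (hr : total Block.countL l = total Block.countL l')
    (hE : ∀ K μ, total (Block.truncSize μ K) l = total (Block.truncSize μ K) l') : l.Perm l' :=
  Block.perm_of_total_eq hL
    (fun K => (total_hL_map_dual hl K).trans (total_hL_map_dual hl' K).symm) fun K μ => by
      rw [total_hE_eq hl, total_hE_eq hl', hr, hE]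

theorem total_sizeE_le (h : ∀ μ, total (Block.sizeAt μ) l ≤ total (Block.sizeAt μ) l') :
    total Block.sizeE l ≤ total Block.sizeE l' := by
  rw [← sum_total_sizeAt_eq (l := l) subset_rfl]
  exact (Finset.sum_le_sum fun μ _ => h μ).trans (sum_total_sizeAt_le _ l')

theorem Dominates.hasStepBelow (hl : ∀ m, Block.T m ∉ l) (hl' : ∀ m, Block.T m ∉ l')
    (hd : Dominates l l') (hne : ¬ l.Perm l') : HasStepBelow l l' := by
  rcases hd.countL_le.lt_or_eq with hr | hr
  · by_cases h : ∃ K ≥ maxValue Block.indexL l, total (Block.hL K) l = total (Block.hL K) l'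
    · obtain ⟨K, hK, h⟩ := h
      exact hd.hasStepBelow_of_countL_lt_of_eq hl hr hK h
    · push Not at h
      exact hd.hasStepBelow_of_countL_lt_of_ne hl hr h
  by_cases hsize : ∃ μ, total (Block.sizeAt μ) l < total (Block.sizeAt μ) l'
  · obtain ⟨μ, hμ⟩ := hsize
    exact hd.hasStepBelow_of_sizeAt_lt hl hr hμ
  have sizeAt_eq (μ : ℂ) : total (Block.sizeAt μ) l = total (Block.sizeAt μ) l' := by
    push Not at hsize
    exact le_antisymm (by simpa using hd.total_sizeAt_le (c := 0) hr.symm μ) (hsize μ)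
  by_cases htrunc : ∀ K μ, total (Block.truncSize μ K) l = total (Block.truncSize μ K) l'
  swap
  · push Not at htrunc
    obtain ⟨K, μ, h⟩ := htrunc
    exact hd.hasStepBelow_of_truncSize_ne hl hr (sizeAt_eq μ) h
  have index_eq : total Block.indexL l = total Block.indexL l' := by
    have sizeE_eq := le_antisymm (total_sizeE_le fun μ => (sizeAt_eq μ).le)
      (total_sizeE_le fun μ => (sizeAt_eq μ).ge)
    have size_eq := hd.skewSize_eq
    simp only [skewSize] at size_eq
    omega
  by_cases hhL : ∀ K, total (Block.hL K) l = total (Block.hL K) l'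
  · exact absurd (perm_of_skew_total_eq hl hl' hhL hr htrunc) hne
  · push Not at hhL
    obtain ⟨K, h⟩ := hhL
    exact hd.hasStepBelow_of_hL_ne hl hr index_eq h

end Dominates

/-! ### Orbit closures -/

section Orbits

variable {m n p q : ℕ}

theorem StrictEquiv.refl (P : Pencil m n) : StrictEquiv P P := strictEquiv_iff_lin_iso.2 (.refl _)

theorem StrictEquiv.trans {P Q R : Pencil m n} (h : StrictEquiv P Q) (h' : StrictEquiv Q R) :
    StrictEquiv P R :=
  strictEquiv_iff_lin_iso.2 ((strictEquiv_iff_lin_iso.1 h).trans (strictEquiv_iff_lin_iso.1 h'))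

theorem Congruent.refl (P : Pencil n n) : Congruent P P := ⟨1, isUnit_one, by simp, by simp⟩

theorem Congruent.symm {P Q : Pencil n n} (h : Congruent P Q) : Congruent Q P := by
  obtain ⟨S, hS, h1, h2⟩ := h
  have hdet := (isUnit_iff_isUnit_det S).1 hS
  have cancel (A : Matrix (Fin n) (Fin n) ℂ) : (S⁻¹)ᵀ * (Sᵀ * A * S) * S⁻¹ = A := by
    rw [Matrix.mul_assoc Sᵀ, ← Matrix.mul_assoc, ← transpose_mul, mul_nonsing_inv S hdet,
      transpose_one, Matrix.one_mul, mul_nonsing_inv_cancel_right _ _ hdet]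
  exact ⟨S⁻¹, isUnit_nonsing_inv_iff.2 hS, h1 ▸ cancel _, h2 ▸ cancel _⟩

theorem Congruent.trans {P Q R : Pencil n n} (h : Congruent P Q) (h' : Congruent Q R) :
    Congruent P R := by
  obtain ⟨S, hS, h1, h2⟩ := h
  obtain ⟨T, hT, h1', h2'⟩ := h'
  refine ⟨S * T, hS.mul hT, ?_, ?_⟩
  · simp only [← h1', ← h1, transpose_mul, Matrix.mul_assoc]
  · simp only [← h2', ← h2, transpose_mul, Matrix.mul_assoc]

theorem orbE_subset_closure_iff {P Q : Pencil m n} :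
    orbE Q ⊆ closure (orbE P) ↔ Q ∈ closure (orbE P) := by
  refine ⟨fun h => h (.refl Q), ?_⟩
  rintro h R ⟨S, T, hS, hT, h1, h2⟩
  have continuous_mul :
      Continuous fun X : Pencil m n => ((S⁻¹ * X.1 * T, S⁻¹ * X.2 * T) : Pencil m n) := by
    fun_prop
  have hR := map_mem_closure (t := orbE P) continuous_mul h fun X hX =>
    StrictEquiv.trans hX ⟨S, T, hS, hT, rfl, rfl⟩
  rwa [h1, h2] at hR

theorem orbC_subset_closure_iff {P Q : Pencil n n} :
    orbC Q ⊆ closure (orbC P) ↔ Q ∈ closure (orbC P) := by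
  refine ⟨fun h => h (.refl Q), ?_⟩
  rintro h R ⟨S, hS, h1, h2⟩
  have continuous_mul :
      Continuous fun X : Pencil n n => ((Sᵀ * X.1 * S, Sᵀ * X.2 * S) : Pencil n n) := by
    fun_prop
  have hR := map_mem_closure (t := orbC P) continuous_mul h fun X hX =>
    Congruent.trans hX ⟨S, hS, rfl, rfl⟩
  rwa [h1, h2] at hR

theorem mem_closure_orbC_trans {P Q R : Pencil n n} (h : Q ∈ closure (orbC P))
    (h' : R ∈ closure (orbC Q)) : R ∈ closure (orbC P) :=
  closure_minimal (orbC_subset_closure_iff.2 h) isClosed_closure h'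

theorem Congruent.mem_closure_orbC {P Q : Pencil n n} (h : Congruent P Q) :
    Q ∈ closure (orbC P) :=
  subset_closure h

theorem homDim_le_of_mem_closure_orbE {P Q : Pencil m n} (h : Q ∈ closure (orbE P)) {a b : ℕ}
    (X : Pencil a b) : homDim X (lin P) ≤ homDim X (lin Q) :=
  closure_minimal (fun _ hR => ((strictEquiv_iff_lin_iso.1 hR).homDim_eq X).le)
    (isClosed_le_homDim X (homDim X (lin P))) h

theorem homDim_le_of_mem_closure_orbC {P Q : Pencil n n} (h : Q ∈ closure (orbC P)) {a b : ℕ}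
    (X : Pencil a b) : homDim X (lin P) ≤ homDim X (lin Q) :=
  closure_minimal (fun _ hR => ((Congruent.lin_iso hR).homDim_eq X).le)
    (isClosed_le_homDim X (homDim X (lin P))) h

theorem tr_mem_closure_orbE {P Q : Pencil m n} (h : Q ∈ closure (orbE P)) :
    (tr Q : Pencil n m) ∈ closure (orbE (tr P : Pencil n m)) := by
  have continuous_tr : Continuous fun X : Pencil m n => (tr X : Pencil n m) := by
    unfold tr
    fun_prop
  exact map_mem_closure continuous_tr h fun X hX =>
    strictEquiv_iff_lin_iso.2 (strictEquiv_iff_lin_iso.1 hX).tr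

theorem isSkew_offdiag (W : Pencil p q) : IsSkew (offdiag W) := by
  have skewPair_transpose (A : Matrix (Fin p) (Fin q) ℂ) : (skewPair A)ᵀ = -skewPair A := by
    rw [skewPair, transpose_submatrix, fromBlocks_transpose]
    change _ = (-fromBlocks 0 A (-Aᵀ) 0).submatrix _ _
    simp [fromBlocks_neg]
  exact ⟨skewPair_transpose _, skewPair_transpose _⟩

theorem continuous_offdiag : Continuous (offdiag : Pencil p q → _) := by
  have continuous_skewPair : Continuous (skewPair : Matrix (Fin p) (Fin q) ℂ → _) :=
    (continuous_const.matrix_fromBlocks continuous_id continuous_id.matrix_transpose.neg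
      continuous_const).matrix_submatrix _ _
  exact (continuous_skewPair.comp continuous_fst).prodMk (continuous_skewPair.comp continuous_snd)

theorem LinPair.Iso.offdiag {p' q' : ℕ} {W : Pencil p q} {W' : Pencil p' q'}
    (h : LinPair.Iso (lin W) (lin W')) :
    LinPair.Iso (lin (Pencil.offdiag W)) (lin (Pencil.offdiag W')) :=
  (lin_offdiag_iso W).trans ((h.sum_congr h.tr).trans (lin_offdiag_iso W').symm)

theorem homDim_offdiag {a b : ℕ} (X : Pencil a b) (W : Pencil p q) :
    homDim X (lin (offdiag W)) = homDim X (lin W) + homDim X (lin (tr W)) := by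
  rw [(lin_offdiag_iso W).homDim_eq, homDim_sum]

theorem offdiag_mem_closure {W W' : Pencil p q} (h : W' ∈ closure (orbE W)) :
    offdiag W' ∈ closure (orbC (offdiag W)) :=
  map_mem_closure continuous_offdiag h fun _ hX =>
    (isSkew_offdiag _).congruent_of_lin_iso (isSkew_offdiag _)
      (strictEquiv_iff_lin_iso.1 hX).offdiag

theorem NoInfEigenvalue.of_offdiag {W : Pencil p q} (h : NoInfEigenvalue (lin (offdiag W))) :
    NoInfEigenvalue (lin W) := by
  have ker_transpose (A : Matrix (Fin p) (Fin q) ℂ) :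
      Module.finrank ℂ (LinearMap.ker Aᵀ.mulVecLin) + q =
        Module.finrank ℂ (LinearMap.ker A.mulVecLin) + p := by
    have rank_nullity := rank_add_finrank_ker_mulVecLin A
    have rank_nullity_tr := rank_add_finrank_ker_mulVecLin Aᵀ
    rw [rank_transpose] at rank_nullity_tr
    simp only [Fintype.card_fin] at rank_nullity rank_nullity_tr
    omega
  filter_upwards [(lin_offdiag_iso W).noInfEigenvalue h] with μ hμ
  rw [← homDim_Eblk_one, homDim_sum, homDim_Eblk_one, homDim_Eblk_one, LinPair.sum,
    LinearMap.ker_prodMap, finrank_submodule_prod, lin_fst_sub_smul_snd,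
    lin_fst_sub_smul_snd] at hμ
  have eq_snd : Module.finrank ℂ (LinearMap.ker (lin (tr W)).2) + q =
      Module.finrank ℂ (LinearMap.ker (lin W).2) + p := ker_transpose W.2
  have eq_sub := ker_transpose (W.1 - μ • W.2)
  rw [transpose_sub, transpose_smul] at eq_sub
  change _ ≤ _ + Module.finrank ℂ (LinearMap.ker (W.1ᵀ - μ • W.2ᵀ).mulVecLin) at hμ
  rw [lin_fst_sub_smul_snd]
  omega

/-- The dimensions of both summands of `lin (offdiag W)` can only go up in the closure, and their
sums agree. -/
theorem lin_iso_of_mem_closure {W W' : Pencil p q} (hW : NoInfEigenvalue (lin (offdiag W)))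
    (hc : W' ∈ closure (orbE W)) (h : LinPair.Iso (lin (offdiag W)) (lin (offdiag W'))) :
    LinPair.Iso (lin W) (lin W') := by
  have homDim_eq {a b : ℕ} (X : Pencil a b) : homDim X (lin W) = homDim X (lin W') ∧
      homDim X (lin (tr W)) = homDim X (lin (tr W')) := by
    have le := homDim_le_of_mem_closure_orbE hc X
    have le_tr := homDim_le_of_mem_closure_orbE (tr_mem_closure_orbE hc) X
    have sum_eq := h.homDim_eq X
    rw [homDim_offdiag, homDim_offdiag] at sum_eq
    omega
  exact lin_iso_of_homDim_eq hW.of_offdiag (h.noInfEigenvalue hW).of_offdiag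
    (fun _ => (homDim_eq _).1) (fun _ => (homDim_eq _).2) fun _ _ => (homDim_eq _).1

end Orbits

/-- Encodes the canonical form of a skew-symmetric pencil without infinite eigenvalues: the list
`l` describes its off-diagonal part, whose `T` blocks can be traded for `L` blocks. -/
def HasSkewForm {n : ℕ} (P : Pencil n n) (l : List Block) : Prop :=
  (∀ m, Block.T m ∉ l) ∧ LinPair.Iso (lin P) (lin (offdiag (kcf l)))

section SkewForm

variable {l l' : List Block} {m n : ℕ}

theorem LinPair.Iso.source_eq {m' n' : ℕ} {P : Pencil m n} {Q : Pencil m' n'}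
    (h : LinPair.Iso (lin P) (lin Q)) : n = n' := by
  obtain ⟨e, -⟩ := h
  simpa using e.finrank_eq

theorem IsSkew.exists_hasSkewForm {P : Pencil n n} (hP : IsSkew P)
    (hinf : NoInfEigenvalue (lin P)) : ∃ l, HasSkewForm P l := by
  obtain ⟨l, hl, h⟩ := hP.exists_iso_kcf_append_dual hinf
  exact ⟨l, hl, h.trans (lin_offdiag_kcf_iso l).symm⟩

namespace HasSkewForm

theorem skewSize_eq {P : Pencil n n} (h : HasSkewForm P l) : skewSize l = n := by
  rw [h.2.source_eq, skewSize, ← total_mul, ← total_mul, ← total_add, ← total_add, ← total_add]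
  refine total_congr fun b hb => ?_
  cases b with
  | T m => exact absurd hb (h.1 m)
  | L m => simp only [Block.indexL, Block.countL, Block.sizeE, Block.rows, Block.cols]; omega
  | E k ν => simp only [Block.indexL, Block.countL, Block.sizeE, Block.rows, Block.cols]; omega

theorem homDim_eq {P : Pencil n n} (h : HasSkewForm P l) {a b : ℕ} (X : Pencil a b) :
    homDim X (lin P) = homDim X (lin (kcf l)) + homDim X (lin (kcf (l.map Block.dual))) := by
  rw [h.2.homDim_eq, homDim_offdiag, (lin_tr_kcf_iso l).homDim_eq]

theorem homDim_Lblk_eq {P : Pencil n n} (h : HasSkewForm P l) (K : ℕ) :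
    homDim (Lblk K) (lin P) = total (Block.hL K) l := by
  rw [h.homDim_eq, homDim_Lblk_kcf, homDim_Lblk_kcf, total_hL_map_dual h.1, add_zero]

theorem homDim_Eblk_eq {P : Pencil n n} (h : HasSkewForm P l) (K : ℕ) (μ : ℂ) :
    homDim (Eblk K μ) (lin P) = skewHomE μ K l := by
  have total_hE_map_dual :
      total (Block.hE K μ) (l.map Block.dual) = total (Block.truncSize μ K) l := by
    rw [total_map_dual]
    refine total_congr fun b hb => ?_
    cases b with
    | T m => exact absurd hb (h.1 m)
    | L m => simp [Block.dual, Block.hE, Block.truncSize, Block.sizeAt]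
    | E k ν =>
      simp only [Block.dual, Block.hE, Block.truncSize, Block.sizeAt]
      split_ifs <;> simp
  rw [h.homDim_eq, homDim_Eblk_kcf, homDim_Eblk_kcf, total_hE_map_dual, total_hE_eq h.1, skewHomE]
  ring

theorem dominates {P Q : Pencil n n} (hP : HasSkewForm P l) (hQ : HasSkewForm Q l')
    (h : Q ∈ closure (orbC P)) : Dominates l l' where
  le_hL K := by
    rw [← hP.homDim_Lblk_eq, ← hQ.homDim_Lblk_eq]
    exact homDim_le_of_mem_closure_orbC h _
  le_skewHomE K μ := by
    rw [← hP.homDim_Eblk_eq, ← hQ.homDim_Eblk_eq]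
    exact homDim_le_of_mem_closure_orbC h _
  skewSize_eq := by rw [hP.skewSize_eq, hQ.skewSize_eq]

theorem congruent {P Q : Pencil n n} (hP : HasSkewForm P l) (hQ : HasSkewForm Q l')
    (skew_P : IsSkew P) (skew_Q : IsSkew Q) (h : l.Perm l') : Congruent P Q :=
  skew_P.congruent_of_lin_iso skew_Q (hP.2.trans ((kcf_perm h).offdiag.trans hQ.2.symm))

theorem perm {P Q : Pencil n n} (hP : HasSkewForm P l) (hQ : HasSkewForm Q l')
    (h : Congruent P Q) : l.Perm l' := by
  have countL_eq := le_antisymm (hP.dominates hQ h.mem_closure_orbC).countL_le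
    (hQ.dominates hP h.symm.mem_closure_orbC).countL_le
  refine perm_of_skew_total_eq hP.1 hQ.1 (fun K => ?_) countL_eq fun K μ => ?_
  · rw [← hP.homDim_Lblk_eq, ← hQ.homDim_Lblk_eq, h.lin_iso.homDim_eq]
  · have skewHomE_eq : skewHomE μ K l = skewHomE μ K l' := by
      rw [← hP.homDim_Eblk_eq, ← hQ.homDim_Eblk_eq, h.lin_iso.homDim_eq]
    rw [skewHomE, skewHomE, countL_eq] at skewHomE_eq
    omega

theorem exists_offdiag {P : Pencil n n} (hP : HasSkewForm P l) {k : List Block}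
    (hstep : DegenStep l k) (hk : ∀ m, Block.T m ∉ k) :
    ∃ (p q : ℕ) (_ : p + q = n) (W W' : Pencil p q), W' ∈ closure (orbE W) ∧
      LinPair.Iso (lin P) (lin (offdiag W)) ∧ HasSkewForm (offdiag W') k := by
  obtain ⟨k', ⟨p, q, W, W', iso_W, iso_W', hc⟩, hperm⟩ := hstep
  have hPW := hP.2.trans iso_W.offdiag
  refine ⟨p, q, hPW.source_eq.symm, W, W', hc, hPW, hk, iso_W'.offdiag.trans ?_⟩
  exact (lin_offdiag_kcf_iso k').trans ((kcf_perm hperm).trans (lin_offdiag_kcf_iso k).symm)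

theorem mem_closure {P Q : Pencil n n} (hP : HasSkewForm P l) (hQ : HasSkewForm Q l')
    (skew_P : IsSkew P) (skew_Q : IsSkew Q) (hd : Dominates l l') : Q ∈ closure (orbC P) := by
  induction h : deficit l l' using WellFoundedLT.induction generalizing l P with
  | ind d ih =>
    subst h
    by_cases hperm : l.Perm l'
    · exact (hP.congruent hQ skew_P skew_Q hperm).mem_closure_orbC
    obtain ⟨k, hk, hstep, hdk, deficit_lt⟩ := hd.hasStepBelow hP.1 hQ.1 hperm
    obtain ⟨p, q, rfl, W, W', hc, iso_W, hW'⟩ := hP.exists_offdiag hstep hk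
    have P_congruent := skew_P.congruent_of_lin_iso (isSkew_offdiag W) iso_W
    exact mem_closure_orbC_trans P_congruent.mem_closure_orbC <|
      mem_closure_orbC_trans (offdiag_mem_closure hc) <|
        ih _ deficit_lt hW' (isSkew_offdiag W') hdk rfl

end HasSkewForm

end SkewForm

section Covers

variable {n p q : ℕ}

theorem CoversC.coversE {P1 P2 : Pencil (p + q) (p + q)} (hcov : CoversC P1 P2)
    (hinf1 : NoInfEigenvalue (lin P1)) (hinf2 : NoInfEigenvalue (lin P2)) {W1 W2 : Pencil p q}
    (hc : W2 ∈ closure (orbE W1)) (hP1 : Congruent P1 (offdiag W1))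
    (hP2 : Congruent P2 (offdiag W2)) : CoversE W1 W2 := by
  obtain ⟨hne, -, hno⟩ := hcov
  refine ⟨fun h => hne (hP1.trans (.trans ?_ hP2.symm)), orbE_subset_closure_iff.2 hc, ?_⟩
  · exact (isSkew_offdiag W1).congruent_of_lin_iso (isSkew_offdiag W2)
      (strictEquiv_iff_lin_iso.1 h).offdiag
  rintro ⟨W, hW1, hW2, hc1, hc2⟩
  rw [orbE_subset_closure_iff] at hc1 hc2
  refine hno ⟨offdiag W, isSkew_offdiag W, fun h => hW1 ?_, fun h => hW2 ?_, ?_, ?_⟩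
  · exact strictEquiv_iff_lin_iso.2 (lin_iso_of_mem_closure (hP1.lin_iso.noInfEigenvalue hinf1) hc1
      (h.trans hP1).symm.lin_iso).symm
  · exact strictEquiv_iff_lin_iso.2 (lin_iso_of_mem_closure
      (h.symm.lin_iso.noInfEigenvalue hinf2) hc2 (h.trans hP2).lin_iso)
  · exact orbC_subset_closure_iff.2 (mem_closure_orbC_trans hP1.mem_closure_orbC
      (offdiag_mem_closure hc1))
  · exact orbC_subset_closure_iff.2 (mem_closure_orbC_trans (offdiag_mem_closure hc2)
      hP2.symm.mem_closure_orbC)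

theorem deficit_perm {l l' : List Block} (h : l.Perm l') (k : List Block) :
    deficit l k = deficit l' k := by
  simp only [deficit, total_perm h]

theorem exists_coversE_of_noInfEigenvalue {P1 P2 : Pencil n n} (h1 : IsSkew P1) (h2 : IsSkew P2)
    (hinf1 : NoInfEigenvalue (lin P1)) (hinf2 : NoInfEigenvalue (lin P2)) (hcov : CoversC P1 P2) :
    ∃ (p q : ℕ) (hpq : p + q = n) (W1 W2 : Pencil p q),
      Congruent P1 (Pencil.cast hpq hpq (offdiag W1)) ∧
        Congruent P2 (Pencil.cast hpq hpq (offdiag W2)) ∧ CoversE W1 W2 := by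
  obtain ⟨l1, hP1⟩ := h1.exists_hasSkewForm hinf1
  obtain ⟨l2, hP2⟩ := h2.exists_hasSkewForm hinf2
  have hd := hP1.dominates hP2 (orbC_subset_closure_iff.1 hcov.2.1)
  have hne : ¬ l1.Perm l2 := fun h => hcov.1 (hP1.congruent hP2 h1 h2 h)
  obtain ⟨k, hk, hstep, hdk, deficit_lt⟩ := hd.hasStepBelow hP1.1 hP2.1 hne
  obtain ⟨p, q, rfl, W1, W2, hc, iso_W1, hW2⟩ := hP1.exists_offdiag hstep hk
  have P1_congruent := h1.congruent_of_lin_iso (isSkew_offdiag W1) iso_W1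
  have W2_not_congruent : ¬ Congruent (offdiag W2) P1 := fun h =>
    deficit_lt.ne (deficit_perm (hW2.perm hP1 h) l2)
  have P2_congruent : Congruent P2 (offdiag W2) := by
    by_contra h
    refine hcov.2.2 ⟨offdiag W2, isSkew_offdiag W2, W2_not_congruent, mt Congruent.symm h, ?_, ?_⟩
    · exact orbC_subset_closure_iff.2 (mem_closure_orbC_trans P1_congruent.mem_closure_orbC
        (offdiag_mem_closure hc))
    · exact orbC_subset_closure_iff.2 (hW2.mem_closure hP2 (isSkew_offdiag W2) h2 hdk)
  exact ⟨p, q, rfl, W1, W2, P1_congruent, P2_congruent,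
    hcov.coversE hinf1 hinf2 hc P1_congruent P2_congruent⟩

end Covers

section Shear

variable {m n p q : ℕ}

/-- The pencil obtained from `A - λ B` by replacing `B` with `B + c A`: a projective change of the
parameter `λ`, which moves the eigenvalue `-1 / c` to infinity. -/
def shear (c : ℂ) (P : Pencil m n) : Pencil m n := (P.1, P.2 + c • P.1)

theorem shear_neg_shear (c : ℂ) (P : Pencil m n) : shear (-c) (shear c P) = P := by
  simp [shear]

theorem shear_surjective (c : ℂ) : Function.Surjective (shear c : Pencil m n → Pencil m n) :=
  fun P => ⟨shear (-c) P, by simp [shear]⟩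

theorem continuous_shear (c : ℂ) : Continuous (shear c : Pencil m n → Pencil m n) := by
  unfold shear
  fun_prop

theorem shear_rel_iff {r : Pencil m n → Pencil m n → Prop}
    (h : ∀ c P Q, r P Q → r (shear c P) (shear c Q)) {c : ℂ} {P Q : Pencil m n} :
    r (shear c P) (shear c Q) ↔ r P Q :=
  ⟨fun hr => by simpa only [shear_neg_shear] using h (-c) _ _ hr, h c P Q⟩

theorem strictEquiv_shear_iff {c : ℂ} {P Q : Pencil m n} :
    StrictEquiv (shear c P) (shear c Q) ↔ StrictEquiv P Q := by
  refine shear_rel_iff ?_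
  rintro c P Q ⟨S, R, hS, hR, h1, h2⟩
  exact ⟨S, R, hS, hR, h1, by simp [shear, ← h1, ← h2, Matrix.mul_add, Matrix.add_mul]⟩

theorem congruent_shear_iff {c : ℂ} {P Q : Pencil n n} :
    Congruent (shear c P) (shear c Q) ↔ Congruent P Q := by
  refine shear_rel_iff ?_
  rintro c P Q ⟨S, hS, h1, h2⟩
  exact ⟨S, hS, h1, by simp [shear, ← h1, ← h2, Matrix.mul_add, Matrix.add_mul]⟩

theorem orbE_subset_closure_shear_iff {c : ℂ} {P Q : Pencil m n} :
    orbE (shear c Q) ⊆ closure (orbE (shear c P)) ↔ orbE Q ⊆ closure (orbE P) := by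
  simp only [orbE_subset_closure_iff]
  exact shear_rel_iff (r := fun P Q => Q ∈ closure (orbE P)) fun c P Q h =>
    map_mem_closure (continuous_shear c) h fun _ hX => strictEquiv_shear_iff.2 hX

theorem orbC_subset_closure_shear_iff {c : ℂ} {P Q : Pencil n n} :
    orbC (shear c Q) ⊆ closure (orbC (shear c P)) ↔ orbC Q ⊆ closure (orbC P) := by
  simp only [orbC_subset_closure_iff]
  exact shear_rel_iff (r := fun P Q => Q ∈ closure (orbC P)) fun c P Q h =>
    map_mem_closure (continuous_shear c) h fun _ hX => congruent_shear_iff.2 hX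

theorem isSkew_shear_iff {c : ℂ} {P : Pencil n n} : IsSkew (shear c P) ↔ IsSkew P :=
  shear_rel_iff (r := fun P _ => IsSkew P) (Q := P) fun c P _ h =>
    ⟨h.1, by simp [shear, h.1, h.2, add_comm]⟩

theorem coversE_shear_iff {c : ℂ} {P Q : Pencil m n} :
    CoversE (shear c P) (shear c Q) ↔ CoversE P Q := by
  rw [CoversE, (shear_surjective c).exists]
  simp only [strictEquiv_shear_iff, orbE_subset_closure_shear_iff]
  rfl

theorem coversC_shear_iff {c : ℂ} {P Q : Pencil n n} :
    CoversC (shear c P) (shear c Q) ↔ CoversC P Q := by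
  rw [CoversC, (shear_surjective c).exists]
  simp only [congruent_shear_iff, isSkew_shear_iff, orbC_subset_closure_shear_iff]
  rfl

theorem shear_offdiag (W : Pencil p q) (c : ℂ) : shear c (offdiag W) = offdiag (shear c W) := by
  refine Prod.ext rfl (Matrix.ext fun i j => ?_)
  simp only [shear, offdiag, skewPair, submatrix_apply, Matrix.add_apply, Matrix.smul_apply]
  rcases finSumFinEquiv.symm i with i | i <;> rcases finSumFinEquiv.symm j with j | j <;>
    simp [add_comm]

theorem shear_cast_offdiag (hpq : p + q = n) (W : Pencil p q) (c : ℂ) :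
    shear c (Pencil.cast hpq hpq (offdiag W)) = Pencil.cast hpq hpq (offdiag (shear c W)) := by
  subst hpq
  exact shear_offdiag W c

end Shear

section Rank

variable {m n : ℕ}

theorem exists_mul_mul_eq_one {K m : Type*} [Field K] [Fintype m] (M : Matrix m m K) :
    ∃ (V : Matrix (Fin M.rank) m K) (U : Matrix m (Fin M.rank) K), V * M * U = 1 := by
  classical
  obtain ⟨V, U, e, -, -, h⟩ := exists_rank_normal_form M
  let f := e.symm ∘ Sum.inl
  refine ⟨V.submatrix f id, U.submatrix id f, ?_⟩
  calc V.submatrix f id * M * U.submatrix id f = (V * M * U).submatrix f f := rfl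
    _ = 1 := by
      rw [h, submatrix_submatrix]
      simp only [f, ← Function.comp_assoc, Equiv.self_comp_symm, Function.id_comp]
      exact toBlocks_fromBlocks₁₁ _ _ _ _

theorem eventually_rank_le (P : Pencil n n) (μ₀ : ℂ) :
    ∀ᶠ μ : ℂ in Filter.cofinite, (P.1 - μ₀ • P.2).rank ≤ (P.1 - μ • P.2).rank := by
  obtain ⟨V, U, hVU⟩ := exists_mul_mul_eq_one (P.1 - μ₀ • P.2)
  let Q : Pencil _ _ := (V * P.1 * U, V * P.2 * U)
  have Q_sub (μ : ℂ) : Q.1 - μ • Q.2 = V * (P.1 - μ • P.2) * U := by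
    simp [Q, Matrix.mul_sub, Matrix.sub_mul]
  have det_ne_zero : (toPolyMatrix Q).det ≠ 0 := fun h => by
    have := eval_det_toPolyMatrix Q μ₀
    rw [h, Q_sub, hVU] at this
    simp at this
  filter_upwards [eventually_isUnit_of_det_toPolyMatrix_ne_zero det_ne_zero] with μ hμ
  rw [Q_sub, ← rank_eq_iff_isUnit] at hμ
  exact hμ.ge.trans ((rank_mul_le_left _ _).trans (rank_mul_le_right _ _))

/-- All but finitely many matrices in the family `P.2 + c • P.1` attain its largest rank. -/
theorem eventually_noInfEigenvalue_shear (P : Pencil n n) :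
    ∀ᶠ c in Filter.cofinite, NoInfEigenvalue (lin (shear c P)) := by
  obtain ⟨c₀, hc₀⟩ : ∃ c₀ : ℂ, ∀ c : ℂ, (P.2 + c • P.1).rank ≤ (P.2 + c₀ • P.1).rank := by
    have finite_range : (Set.range fun c : ℂ => (P.2 + c • P.1).rank).Finite :=
      (Set.finite_le_nat n).subset (Set.range_subset_iff.2 fun c => rank_le_width _)
    obtain ⟨_, ⟨c₀, rfl⟩, h⟩ := finite_range.exists_maximal (Set.range_nonempty _)
    exact ⟨c₀, fun c => (le_total _ _).elim id fun hle => h ⟨c, rfl⟩ hle⟩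
  filter_upwards [eventually_rank_le (P.2, -P.1) c₀] with c hc
  simp only [smul_neg, sub_neg_eq_add] at hc
  rw [noInfEigenvalue_lin_iff]
  filter_upwards [(Set.finite_singleton (0 : ℂ)).compl_mem_cofinite] with μ hμ
  have hμ : μ ≠ 0 := hμ
  have sub_eq_smul : P.1 - μ • (P.2 + c • P.1) = (-μ) • (P.2 + (c - μ⁻¹) • P.1) := by
    rw [smul_add, smul_smul, smul_add, smul_smul, mul_sub, neg_mul, neg_mul, mul_inv_cancel₀ hμ]
    module
  calc (P.1 - μ • (P.2 + c • P.1)).rank = (P.2 + (c - μ⁻¹) • P.1).rank := by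
        rw [sub_eq_smul, rank_smul_of_mem_nonZeroDivisors _
          (mem_nonZeroDivisors_of_ne_zero (neg_ne_zero.2 hμ))]
    _ ≤ (P.2 + c₀ • P.1).rank := hc₀ _
    _ ≤ (P.2 + c • P.1).rank := hc

end Rank

theorem exists_coversE {n : ℕ} {P1 P2 : Pencil n n} (h1 : IsSkew P1) (h2 : IsSkew P2)
    (hcov : CoversC P1 P2) :
    ∃ (p q : ℕ) (hpq : p + q = n) (W1 W2 : Pencil p q),
      Congruent P1 (Pencil.cast hpq hpq (offdiag W1)) ∧
        Congruent P2 (Pencil.cast hpq hpq (offdiag W2)) ∧ CoversE W1 W2 := by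
  obtain ⟨c, hinf1, hinf2⟩ :=
    ((eventually_noInfEigenvalue_shear P1).and (eventually_noInfEigenvalue_shear P2)).exists
  obtain ⟨p, q, hpq, W1, W2, hP1, hP2, hW⟩ := exists_coversE_of_noInfEigenvalue
    (isSkew_shear_iff.2 h1) (isSkew_shear_iff.2 h2) hinf1 hinf2 (coversC_shear_iff.2 hcov)
  obtain ⟨W1, rfl⟩ := shear_surjective c W1
  obtain ⟨W2, rfl⟩ := shear_surjective c W2
  rw [← shear_cast_offdiag, congruent_shear_iff] at hP1 hP2
  exact ⟨p, q, hpq, W1, W2, hP1, hP2, coversE_shear_iff.1 hW⟩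

theorem isSkew_cast_offdiag {n p q : ℕ} (hpq : p + q = n) (W : Pencil p q) :
    IsSkew (Pencil.cast hpq hpq (offdiag W)) := by
  subst hpq
  exact isSkew_offdiag W

theorem permMatrix_one_congr {n : ℕ} (P : Pencil n n) :
    ((permMatrix (1 : Equiv.Perm (Fin n)))ᵀ * P.1 * permMatrix 1,
      (permMatrix (1 : Equiv.Perm (Fin n)))ᵀ * P.2 * permMatrix 1) = P := by
  have permMatrix_one : permMatrix (1 : Equiv.Perm (Fin n)) = 1 := by
    ext i j
    by_cases h : i = j <;> simp [permMatrix, one_apply, h]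
  simp [permMatrix_one]

end Pencil

/-- **Lemma 3.1**: if `orbᶜ P1` covers `orbᶜ P2` for skew-symmetric pencils,
then (after replacing each `Pᵢ` by a congruent pencil `Pᵢ'`) the rows and
columns of `Pᵢ'` can be simultaneously permuted to the form
`[[0, Wᵢ], [-Wᵢᵀ, 0]]` with `p × q` pencils `Wᵢ` such that `orbᵉ W1` covers
`orbᵉ W2`. -/
theorem coversC_implies_coversE_of_offdiag_parts {n : ℕ} (P1 P2 : Pencil n n)
    (h1 : Pencil.IsSkew P1) (h2 : Pencil.IsSkew P2)
    (hcov : Pencil.CoversC P1 P2) :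
    ∃ (p q : ℕ) (hpq : p + q = n) (W1 W2 : Pencil p q)
      (σ1 σ2 : Equiv.Perm (Fin n)) (P1' P2' : Pencil n n),
      Pencil.IsSkew P1' ∧ Pencil.IsSkew P2' ∧
      Pencil.Congruent P1 P1' ∧ Pencil.Congruent P2 P2' ∧
      ((permMatrix σ1)ᵀ * P1'.1 * permMatrix σ1,
        (permMatrix σ1)ᵀ * P1'.2 * permMatrix σ1) =
        Pencil.cast hpq hpq (skewPair W1.1, skewPair W1.2) ∧
      ((permMatrix σ2)ᵀ * P2'.1 * permMatrix σ2,
        (permMatrix σ2)ᵀ * P2'.2 * permMatrix σ2) =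
        Pencil.cast hpq hpq (skewPair W2.1, skewPair W2.2) ∧
      Pencil.CoversE W1 W2 := by
  obtain ⟨p, q, hpq, W1, W2, hP1, hP2, hW⟩ := Pencil.exists_coversE h1 h2 hcov
  exact ⟨p, q, hpq, W1, W2, 1, 1, _, _, Pencil.isSkew_cast_offdiag hpq W1,
    Pencil.isSkew_cast_offdiag hpq W2, hP1, hP2, Pencil.permMatrix_one_congr _,
    Pencil.permMatrix_one_congr _, hW⟩
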